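/- arXiv:1604.03287 — 2 statements merged into one kernel-verified Lean document; each statement's English description precedes it below -/
import Mathlib

section
/- Let 𝒞 be a pointed protomodular category and ℰ a class of morphisms of 𝒞 such that (𝒞, ℰ) satisfies axioms (E1)–(E5) and (M). Let ℰ¹ be the class of double ℰ-extensions in the category Ext_ℰ(𝒞). Then Ext_ℰ(𝒞) is pointed and protomodular, and (Ext_ℰ(𝒞), ℰ¹) again satisfies axioms (E1)–(E5) and (M). -/
open CategoryTheory Limits

universe v u

section Axioms
variable {𝒟 : Type u} [Category.{v} 𝒟]

/-- Axiom (E1): the class contains all isomorphisms. -/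
def AxE1 (E : MorphismProperty 𝒟) : Prop := ∀ {X Y : 𝒟} (f : X ⟶ Y), IsIso f → E f

/-- Axiom (E2): pullbacks of morphisms of the class exist and belong to the class. -/
def AxE2 (E : MorphismProperty 𝒟) : Prop :=
  ∀ {X Y Z : 𝒟} (f : X ⟶ Z) (g : Y ⟶ Z), E g →
    ∃ (P : 𝒟) (p₁ : P ⟶ X) (p₂ : P ⟶ Y), IsPullback p₁ p₂ f g ∧ E p₁

/-- Axiom (E3): the class is closed under composition. -/
def AxE3 (E : MorphismProperty 𝒟) : Prop :=
  ∀ {X Y Z : 𝒟} (f : X ⟶ Y) (g : Y ⟶ Z), E f → E g → E (f ≫ g)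

/-- Axiom (E4): if `f ≫ g` is in the class then so is `g`. -/
def AxE4 (E : MorphismProperty 𝒟) : Prop :=
  ∀ {X Y Z : 𝒟} (f : X ⟶ Y) (g : Y ⟶ Z), E (f ≫ g) → E g

/-- Axiom (E5): in a morphism of short exact sequences over a fixed base `A₀`, if the
extension `a` and the induced morphism `k` on kernels lie in the class, then so does the
middle morphism `f`. -/
def AxE5 [HasZeroMorphisms 𝒟] (E : MorphismProperty 𝒟) : Prop :=
  ∀ {K L A₁ B A₀ : 𝒟} (ka : K ⟶ A₁) (kb : L ⟶ B) (a : A₁ ⟶ A₀) (b : B ⟶ A₀)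
    (f : A₁ ⟶ B) (k : K ⟶ L), f ≫ b = a → k ≫ kb = ka ≫ f →
    ∀ (ha : ka ≫ a = 0) (hb : kb ≫ b = 0),
    Nonempty (IsLimit (KernelFork.ofι ka ha)) →
    Nonempty (IsLimit (KernelFork.ofι kb hb)) →
    E a → E k → E f

/-- The split short five lemma in a pointed category. -/
def SplitShortFive (𝒟 : Type u) [Category.{v} 𝒟] [HasZeroMorphisms 𝒟] : Prop :=
  ∀ {K A B K' A' B' : 𝒟} (k : K ⟶ A) (f : A ⟶ B) (s : B ⟶ A)
    (k' : K' ⟶ A') (f' : A' ⟶ B') (s' : B' ⟶ A')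
    (u : K ⟶ K') (v : A ⟶ A') (w : B ⟶ B'),
    s ≫ f = 𝟙 B → s' ≫ f' = 𝟙 B' →
    ∀ (hk : k ≫ f = 0) (hk' : k' ≫ f' = 0),
    Nonempty (IsLimit (KernelFork.ofι k hk)) →
    Nonempty (IsLimit (KernelFork.ofι k' hk')) →
    u ≫ k' = k ≫ v → v ≫ f' = f ≫ w →
    IsIso u → IsIso w → IsIso v

/-- Pullbacks along split epimorphisms exist. -/
def HasSplitEpiPullbacks (𝒟 : Type u) [Category.{v} 𝒟] : Prop :=
  ∀ {X Y Z : 𝒟} (g : X ⟶ Z) (s : Z ⟶ X), s ≫ g = 𝟙 Z → ∀ h : Y ⟶ Z,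
    ∃ (P : 𝒟) (p₁ : P ⟶ X) (p₂ : P ⟶ Y), IsPullback p₁ p₂ g h

/-- A pointed category is protomodular when it has pullbacks along split epimorphisms
and the split short five lemma holds. -/
def ProtomodularCat (𝒟 : Type u) [Category.{v} 𝒟] [HasZeroMorphisms 𝒟] : Prop :=
  HasSplitEpiPullbacks 𝒟 ∧ SplitShortFive 𝒟

/-- An object of the `E`-slice category `(𝒟 ↓_E B)`: a morphism of `E` with codomain `B`. -/
structure ESliceObj (E : MorphismProperty 𝒟) (B : 𝒟) where
  dom : 𝒟
  hom : dom ⟶ B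
  mem : E hom

/-- Morphisms of the `E`-slice category. -/
@[ext] structure ESliceHom {E : MorphismProperty 𝒟} {B : 𝒟} (g h : ESliceObj E B) where
  top : g.dom ⟶ h.dom
  w : top ≫ h.hom = g.hom

instance {E : MorphismProperty 𝒟} {B : 𝒟} : Category (ESliceObj E B) where
  Hom := ESliceHom
  id g := ⟨𝟙 g.dom, Category.id_comp _⟩
  comp φ ψ := ⟨φ.top ≫ ψ.top, by rw [Category.assoc, ψ.w, φ.w]⟩
  id_comp φ := ESliceHom.ext (Category.id_comp φ.top)
  comp_id φ := ESliceHom.ext (Category.comp_id φ.top)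
  assoc φ ψ χ := ESliceHom.ext (Category.assoc φ.top ψ.top χ.top)

/-- A functor `(𝒟 ↓_E B) ⥤ (𝒟 ↓_E A)` realizing base change (pullback) along
`f : A ⟶ B`. -/
structure PullbackFunctorAlong (E : MorphismProperty 𝒟) {A B : 𝒟} (f : A ⟶ B) where
  R : ESliceObj E B ⥤ ESliceObj E A
  top : ∀ g : ESliceObj E B, (R.obj g).dom ⟶ g.dom
  isPB : ∀ g : ESliceObj E B, IsPullback (top g) (R.obj g).hom g.hom f
  nat : ∀ {g h : ESliceObj E B} (φ : g ⟶ h), (R.map φ).top ≫ top h = top g ≫ φ.top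

/-- Axiom (M): every morphism of the class is monadic, i.e. any base-change functor
`f* : (𝒟 ↓_E B) ⥤ (𝒟 ↓_E A)` along a morphism `f` of `E` is a monadic right adjoint. -/
def AxM (E : MorphismProperty 𝒟) : Prop :=
  ∀ {A B : 𝒟} (f : A ⟶ B), E f →
    ∀ P : PullbackFunctorAlong E f, Nonempty (MonadicRightAdjoint P.R)

/-- An object of the category `Ext_E(𝒟)` of `E`-extensions: a morphism of class `E`. -/
structure ExtObj (E : MorphismProperty 𝒟) where
  dom : 𝒟
  cod : 𝒟
  hom : dom ⟶ cod
  mem : E hom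

/-- Morphisms of `Ext_E(𝒟)`: commutative squares. -/
@[ext] structure ExtHom {E : MorphismProperty 𝒟} (a b : ExtObj E) where
  top : a.dom ⟶ b.dom
  bot : a.cod ⟶ b.cod
  w : top ≫ b.hom = a.hom ≫ bot

instance {E : MorphismProperty 𝒟} : Category (ExtObj E) where
  Hom := ExtHom
  id a := ⟨𝟙 a.dom, 𝟙 a.cod, by simp⟩
  comp φ ψ := ⟨φ.top ≫ ψ.top, φ.bot ≫ ψ.bot, by
    rw [Category.assoc, ψ.w, ← Category.assoc, φ.w, Category.assoc]⟩
  id_comp φ := ExtHom.ext (Category.id_comp φ.top) (Category.id_comp φ.bot)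
  comp_id φ := ExtHom.ext (Category.comp_id φ.top) (Category.comp_id φ.bot)
  assoc φ ψ χ := ExtHom.ext (Category.assoc φ.top ψ.top χ.top)
    (Category.assoc φ.bot ψ.bot χ.bot)

instance {E : MorphismProperty 𝒟} [HasZeroMorphisms 𝒟] :
    HasZeroMorphisms (ExtObj E) where
  zero a b := ⟨⟨0, 0, by simp⟩⟩
  comp_zero φ c := ExtHom.ext (comp_zero) (comp_zero)
  zero_comp a {b c} φ := ExtHom.ext (zero_comp) (zero_comp)

/-- A morphism of `Ext_E(𝒟)` is a double `E`-extension when its two components are in `E`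
and the comparison morphism to (any) pullback is in `E`. -/
def IsDoubleExt {E : MorphismProperty 𝒟} {a b : ExtObj E} (φ : a ⟶ b) : Prop :=
  E φ.top ∧ E φ.bot ∧
  ∀ {P : 𝒟} (p₁ : P ⟶ a.cod) (p₂ : P ⟶ b.dom), IsPullback p₁ p₂ φ.bot b.hom →
    ∀ (l : a.dom ⟶ P), l ≫ p₁ = a.hom → l ≫ p₂ = φ.top → E l

/-- The class of double `E`-extensions, as a morphism property of `Ext_E(𝒟)`. -/
def DoubleExtClass (E : MorphismProperty 𝒟) : MorphismProperty (ExtObj E) :=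
  fun _ _ φ => IsDoubleExt φ

end Axioms

section General
variable {𝒟 : Type u} [Category.{v} 𝒟]

theorem isPB_mk {P X Y Z : 𝒟} {p₁ : P ⟶ X} {p₂ : P ⟶ Y} {f : X ⟶ Z} {g : Y ⟶ Z}
    (w : p₁ ≫ f = p₂ ≫ g)
    (hl : ∀ {W : 𝒟} (x : W ⟶ X) (y : W ⟶ Y), x ≫ f = y ≫ g → ∃ l : W ⟶ P, l ≫ p₁ = x ∧ l ≫ p₂ = y)
    (hu : ∀ {W : 𝒟} (l m : W ⟶ P), l ≫ p₁ = m ≫ p₁ → l ≫ p₂ = m ≫ p₂ → l = m) :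
    IsPullback p₁ p₂ f g := by
  refine ⟨⟨w⟩, ⟨PullbackCone.IsLimit.mk w (fun s => (hl s.fst s.snd s.condition).choose)
    (fun s => (hl s.fst s.snd s.condition).choose_spec.1)
    (fun s => (hl s.fst s.snd s.condition).choose_spec.2) ?_⟩⟩
  intro s m h1 h2
  apply hu
  · rw [h1, (hl s.fst s.snd s.condition).choose_spec.1]
  · rw [h2, (hl s.fst s.snd s.condition).choose_spec.2]

theorem exLift {P X Y Z : 𝒟} {p₁ : P ⟶ X} {p₂ : P ⟶ Y} {f : X ⟶ Z} {g : Y ⟶ Z}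
    (h : IsPullback p₁ p₂ f g) {W : 𝒟} (x : W ⟶ X) (y : W ⟶ Y) (w : x ≫ f = y ≫ g) :
    ∃ l : W ⟶ P, l ≫ p₁ = x ∧ l ≫ p₂ = y :=
  ⟨h.lift x y w, h.lift_fst _ _ _, h.lift_snd _ _ _⟩

theorem exIso {P P' X Y Z : 𝒟} {p₁ : P ⟶ X} {p₂ : P ⟶ Y} {q₁ : P' ⟶ X} {q₂ : P' ⟶ Y}
    {f : X ⟶ Z} {g : Y ⟶ Z}
    (h : IsPullback p₁ p₂ f g) (h' : IsPullback q₁ q₂ f g) :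
    ∃ l : P ≅ P', l.hom ≫ q₁ = p₁ ∧ l.hom ≫ q₂ = p₂ :=
  ⟨h.isoIsPullback _ _ h', by simp, by simp⟩

theorem E_pb {E : MorphismProperty 𝒟} (h1 : AxE1 E) (h2 : AxE2 E) (h3 : AxE3 E)
    {P X Y Z : 𝒟} {p₁ : P ⟶ X} {p₂ : P ⟶ Y} {f : X ⟶ Z} {g : Y ⟶ Z}
    (h : IsPullback p₁ p₂ f g) (hg : E g) : E p₁ := by
  obtain ⟨Q, q₁, q₂, hq, hE⟩ := h2 f g hg
  obtain ⟨l, hl, -⟩ := exIso h hq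
  rw [← hl]
  exact h3 _ _ (h1 _ inferInstance) hE

/-- Elementary kernels. -/
structure IsKer [HasZeroMorphisms 𝒟] {K A B : 𝒟} (k : K ⟶ A) (f : A ⟶ B) : Prop where
  w : k ≫ f = 0
  ex : ∀ {X : 𝒟} (t : X ⟶ A), t ≫ f = 0 → ∃ l : X ⟶ K, l ≫ k = t
  un : ∀ {X : 𝒟} (l m : X ⟶ K), l ≫ k = m ≫ k → l = m

theorem isKer_of_lim [HasZeroMorphisms 𝒟] {K A B : 𝒟} {k : K ⟶ A} {f : A ⟶ B} (w : k ≫ f = 0)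
    (h : Nonempty (IsLimit (KernelFork.ofι k w))) : IsKer k f := by
  obtain ⟨h⟩ := h
  refine ⟨w, fun t ht => ?_, fun l m e => Fork.IsLimit.hom_ext h e⟩
  exact ⟨h.lift (KernelFork.ofι t ht), Fork.IsLimit.lift_ι h⟩

theorem lim_of_isKer [HasZeroMorphisms 𝒟] {K A B : 𝒟} {k : K ⟶ A} {f : A ⟶ B} (h : IsKer k f) :
    Nonempty (IsLimit (KernelFork.ofι k h.w)) :=
  ⟨KernelFork.IsLimit.ofι k h.w (fun t ht => (h.ex t ht).choose)
    (fun t ht => (h.ex t ht).choose_spec)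
    (fun t ht m hm => h.un _ _ (hm.trans (h.ex t ht).choose_spec.symm))⟩

theorem isKer_pb [HasZeroMorphisms 𝒟] {K A B Z : 𝒟} {k : K ⟶ A} {f : A ⟶ B} (h : IsKer k f)
    (hZ : IsZero Z) : IsPullback k (0 : K ⟶ Z) f (0 : Z ⟶ B) := by
  refine isPB_mk (by simp [h.w]) (fun x y e => ?_) (fun l m e _ => h.un _ _ e)
  obtain ⟨l, hl⟩ := h.ex x (by simpa using e)
  exact ⟨l, hl, hZ.eq_of_tgt _ _⟩

theorem isKer_of_pb [HasZeroMorphisms 𝒟] {K A B Z : 𝒟} {k : K ⟶ A} {f : A ⟶ B} {j : K ⟶ Z}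
    {i : Z ⟶ B} (hZ : IsZero Z) (h : IsPullback k j f i) : IsKer k f := by
  have hi : i = 0 := hZ.eq_of_src _ _
  subst hi
  refine ⟨by simpa using h.w, fun t ht => ?_, fun l m e => h.hom_ext e (hZ.eq_of_tgt _ _)⟩
  obtain ⟨l, hl, -⟩ := exLift h t 0 (by simp [ht])
  exact ⟨l, hl⟩

theorem exKer [HasZeroMorphisms 𝒟] [HasZeroObject 𝒟] {E : MorphismProperty 𝒟} (h2 : AxE2 E)
    {A B : 𝒟} (f : A ⟶ B) (hf : E f) : ∃ (K : 𝒟) (k : K ⟶ A), IsKer k f := by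
  obtain ⟨Z, hZ⟩ := HasZeroObject.zero (C := 𝒟)
  obtain ⟨P, p₁, p₂, h, -⟩ := h2 (0 : Z ⟶ B) f hf
  exact ⟨P, p₂, isKer_of_pb hZ h.flip⟩

theorem E5' [HasZeroMorphisms 𝒟] {E : MorphismProperty 𝒟} (h5 : AxE5 E)
    {K L A₁ B A₀ : 𝒟} {ka : K ⟶ A₁} {kb : L ⟶ B} {a : A₁ ⟶ A₀} {b : B ⟶ A₀}
    {f : A₁ ⟶ B} {k : K ⟶ L} (e1 : f ≫ b = a) (e2 : k ≫ kb = ka ≫ f)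
    (ha : IsKer ka a) (hb : IsKer kb b) (hE : E a) (hk : E k) : E f :=
  h5 ka kb a b f k e1 e2 ha.w hb.w (lim_of_isKer ha) (lim_of_isKer hb) hE hk

theorem E_split {E : MorphismProperty 𝒟} (h1 : AxE1 E) (h4 : AxE4 E) {A B : 𝒟} {f : A ⟶ B}
    {s : B ⟶ A} (h : s ≫ f = 𝟙 B) : E f :=
  h4 s f (h1 _ (by rw [h]; infer_instance))

end General

section Ext
variable {𝒟 : Type u} [Category.{v} 𝒟] {E : MorphismProperty 𝒟}

@[simp] theorem ext_comp_top {a b c : ExtObj E} (f : a ⟶ b) (g : b ⟶ c) :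
    (f ≫ g).top = f.top ≫ g.top := rfl
@[simp] theorem ext_comp_bot {a b c : ExtObj E} (f : a ⟶ b) (g : b ⟶ c) :
    (f ≫ g).bot = f.bot ≫ g.bot := rfl
@[simp] theorem ext_id_top (a : ExtObj E) : ExtHom.top (𝟙 a) = 𝟙 a.dom := rfl
@[simp] theorem ext_id_bot (a : ExtObj E) : ExtHom.bot (𝟙 a) = 𝟙 a.cod := rfl
@[simp] theorem ext_zero_top [HasZeroMorphisms 𝒟] (a b : ExtObj E) :
    ExtHom.top (0 : a ⟶ b) = 0 := rfl
@[simp] theorem ext_zero_bot [HasZeroMorphisms 𝒟] (a b : ExtObj E) :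
    ExtHom.bot (0 : a ⟶ b) = 0 := rfl
theorem ext_hext {a b : ExtObj E} {f g : a ⟶ b} (h : f.top = g.top) (h' : f.bot = g.bot) : f = g :=
  ExtHom.ext h h'
theorem top_congr {a b : ExtObj E} {f g : a ⟶ b} (h : f = g) : f.top = g.top := by rw [h]
theorem bot_congr {a b : ExtObj E} {f g : a ⟶ b} (h : f = g) : f.bot = g.bot := by rw [h]

theorem ext_iso_top {a b : ExtObj E} (f : a ⟶ b) [IsIso f] : IsIso f.top :=
  ⟨(inv f).top, top_congr (IsIso.hom_inv_id f), top_congr (IsIso.inv_hom_id f)⟩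
theorem ext_iso_bot {a b : ExtObj E} (f : a ⟶ b) [IsIso f] : IsIso f.bot :=
  ⟨(inv f).bot, bot_congr (IsIso.hom_inv_id f), bot_congr (IsIso.inv_hom_id f)⟩

theorem ext_isIso {a b : ExtObj E} (f : a ⟶ b) (h : IsIso f.top) (h' : IsIso f.bot) : IsIso f :=
  ⟨⟨inv f.top, inv f.bot, by rw [IsIso.inv_comp_eq, ← Category.assoc, f.w]; simp⟩,
    ext_hext (by simp) (by simp), ext_hext (by simp) (by simp)⟩

theorem ext_isPB {p a b c : ExtObj E} {p₁ : p ⟶ a} {p₂ : p ⟶ b} {f : a ⟶ c} {g : b ⟶ c}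
    (ht : IsPullback p₁.top p₂.top f.top g.top) (hb : IsPullback p₁.bot p₂.bot f.bot g.bot) :
    IsPullback p₁ p₂ f g := by
  refine isPB_mk (ext_hext ht.w hb.w) (fun {W} x y e => ?_) (fun l m e e' =>
    ext_hext (ht.hom_ext (top_congr e) (top_congr e')) (hb.hom_ext (bot_congr e) (bot_congr e')))
  obtain ⟨t, t1, t2⟩ := exLift ht x.top y.top (top_congr e)
  obtain ⟨s, s1, s2⟩ := exLift hb x.bot y.bot (bot_congr e)
  refine ⟨⟨t, s, hb.hom_ext ?_ ?_⟩, ext_hext t1 s1, ext_hext t2 s2⟩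
  · rw [Category.assoc, ← p₁.w, ← Category.assoc, t1, x.w, Category.assoc, s1]
  · rw [Category.assoc, ← p₂.w, ← Category.assoc, t2, y.w, Category.assoc, s2]

section
variable (h1 : AxE1 E) (h2 : AxE2 E) (h3 : AxE3 E)
include h1 h2 h3

/-- Pullbacks of double extensions. -/
theorem ext_pb {a b c : ExtObj E} (f : a ⟶ c) (g : b ⟶ c) (hg : IsDoubleExt g) :
    ∃ (p : ExtObj E) (p₁ : p ⟶ a) (p₂ : p ⟶ b), IsPullback p₁.top p₂.top f.top g.top ∧
      IsPullback p₁.bot p₂.bot f.bot g.bot ∧ IsDoubleExt p₁ := by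
  obtain ⟨P, t₁, t₂, ht, hEt⟩ := h2 f.top g.top hg.1
  obtain ⟨Q, s₁, s₂, hs, hEs⟩ := h2 f.bot g.bot hg.2.1
  obtain ⟨l, l1, l2⟩ := exLift hs (t₁ ≫ a.hom) (t₂ ≫ b.hom) (by
    rw [Category.assoc, Category.assoc, ← f.w, ← g.w, ← Category.assoc, ht.w, Category.assoc])
  -- comparison of g
  obtain ⟨G, g₁, g₂, hG, -⟩ := h2 g.bot c.hom c.mem
  obtain ⟨m, m1, m2⟩ := exLift hG b.hom g.top g.w.symm
  have hm : E m := hg.2.2 g₁ g₂ hG m m1 m2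
  have key : ∀ {R : 𝒟} (r₁ : R ⟶ Q) (r₂ : R ⟶ a.dom), IsPullback r₁ r₂ s₁ a.hom →
      ∀ n : P ⟶ R, n ≫ r₁ = l → n ≫ r₂ = t₁ → E n := by
    intro R r₁ r₂ hR n n1 n2
    obtain ⟨j, j1, j2⟩ := exLift hG (r₁ ≫ s₂) (r₂ ≫ f.top) (by
      rw [Category.assoc, ← hs.w, Category.assoc, f.w, ← Category.assoc, hR.w, Category.assoc])
    have hj : IsPullback r₂ j f.top g₂ := by
      have : IsPullback r₂ (j ≫ g₁) (f.top ≫ c.hom) g.bot := by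
        rw [f.w, j1]; exact hR.flip.paste_vert hs
      exact this.of_bot j2.symm hG.flip
    have : IsPullback t₁ (t₂) (f.top) (m ≫ g₂) := by rw [m2]; exact ht
    have hn : IsPullback n t₂ j m := by
      have h' : IsPullback (n ≫ r₂) t₂ f.top (m ≫ g₂) := by rw [n2]; exact this
      refine IsPullback.of_bot (v₂₁ := r₂) (v₂₂ := g₂) (h₃₁ := f.top) ?_ ?_ hj.flip |>.flip
      · exact h'.flip
      · apply hG.hom_ext
        · simp only [Category.assoc, j1, m1]; rw [← l2, ← n1, Category.assoc]
        · simp only [Category.assoc, j2, m2]; rw [← ht.w, ← n2, Category.assoc]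
    exact E_pb h1 h2 h3 hn hm
  obtain ⟨R, r₁, r₂, hR, hEr⟩ := h2 s₁ a.hom a.mem
  obtain ⟨n, n1, n2⟩ := exLift hR l t₁ l1
  have hl : E l := by rw [← n1]; exact h3 _ _ (key r₁ r₂ hR n n1 n2) hEr
  exact ⟨⟨P, Q, l, hl⟩, ⟨t₁, s₁, l1.symm⟩, ⟨t₂, s₂, l2.symm⟩, ht, hs, hEt, hEs,
    fun r₁ r₂ hR n n1 n2 => key r₁ r₂ hR n n1 n2⟩

theorem ext_levels {p a b c : ExtObj E} {p₁ : p ⟶ a} {p₂ : p ⟶ b} {f : a ⟶ c} {g : b ⟶ c}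
    (h : IsPullback p₁ p₂ f g) (hg : IsDoubleExt g) :
    IsPullback p₁.top p₂.top f.top g.top ∧ IsPullback p₁.bot p₂.bot f.bot g.bot := by
  obtain ⟨q, q₁, q₂, ht, hb, -⟩ := ext_pb h1 h2 h3 f g hg
  obtain ⟨i, i1, i2⟩ := exIso h (ext_isPB ht hb)
  have := ext_iso_top i.hom
  have := ext_iso_bot i.hom
  subst i1 i2
  exact ⟨IsPullback.of_iso ht (asIso i.hom.top).symm (Iso.refl _) (Iso.refl _) (Iso.refl _)
    (by simp) (by simp) (by simp) (by simp),
    IsPullback.of_iso hb (asIso i.hom.bot).symm (Iso.refl _) (Iso.refl _) (Iso.refl _)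
    (by simp) (by simp) (by simp) (by simp)⟩

end
end Ext

section Ext2
open ZeroObject
variable {𝒟 : Type u} [Category.{v} 𝒟] [HasZeroMorphisms 𝒟] [HasZeroObject 𝒟]
  {E : MorphismProperty 𝒟}

/-- The zero extension. -/
noncomputable def extZ (h1 : AxE1 E) : ExtObj E := ⟨0, 0, 𝟙 0, h1 _ inferInstance⟩

theorem extZ_isZero (h1 : AxE1 E) : IsZero (extZ h1) := by
  have hz : IsZero (0 : 𝒟) := isZero_zero 𝒟
  rw [IsZero.iff_id_eq_zero]
  exact ext_hext (hz.eq_of_src _ _) (hz.eq_of_src _ _)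

theorem ker_levels (h1 : AxE1 E) (h2 : AxE2 E) (h3 : AxE3 E) {k a b : ExtObj E} {i : k ⟶ a}
    {f : a ⟶ b} (h : IsKer i f) (hf : IsDoubleExt f) : IsKer i.top f.top ∧ IsKer i.bot f.bot := by
  have := ext_levels h1 h2 h3 (isKer_pb h (extZ_isZero h1)).flip hf
  have hz : IsZero (0 : 𝒟) := isZero_zero 𝒟
  exact ⟨isKer_of_pb hz this.1.flip, isKer_of_pb hz this.2.flip⟩

theorem double_of_ker (h1 : AxE1 E) (h2 : AxE2 E) (h3 : AxE3 E) (h5 : AxE5 E)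
    {a b : ExtObj E} {f : a ⟶ b} (hf : E f.bot) {K L : 𝒟} {ka : K ⟶ a.dom} {kb : L ⟶ b.dom}
    (ha : IsKer ka a.hom) (hb : IsKer kb b.hom) {k : K ⟶ L} (e : k ≫ kb = ka ≫ f.top)
    (hk : E k) : IsDoubleExt f := by
  have key : ∀ {P : 𝒟} (p₁ : P ⟶ a.cod) (p₂ : P ⟶ b.dom), IsPullback p₁ p₂ f.bot b.hom →
    ∀ (l : a.dom ⟶ P), l ≫ p₁ = a.hom → l ≫ p₂ = f.top → E l := by
    intro P p₁ p₂ hP l l1 l2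
    obtain ⟨i, i1, i2⟩ := exLift hP (0 : L ⟶ _) kb (by simp [hb.w])
    have hi : IsKer i p₁ := by
      refine ⟨i1, fun t ht => ?_, fun l m e => hb.un _ _ ?_⟩
      · obtain ⟨j, hj⟩ := hb.ex (t ≫ p₂) (by rw [Category.assoc, ← hP.w, ← Category.assoc, ht]; simp)
        refine ⟨j, hP.hom_ext ?_ ?_⟩
        · simp [i1, ht]
        · simp [i2, hj]
      · rw [← i2, ← Category.assoc, e, Category.assoc]
    refine E5' h5 l1 ?_ ha hi a.mem hk
    apply hP.hom_ext
    · simp [i1, l1, ha.w]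
    · simp [i2, l2, e]
  refine ⟨?_, hf, fun p₁ p₂ hP l l1 l2 => key p₁ p₂ hP l l1 l2⟩
  obtain ⟨P, p₁, p₂, hP, -⟩ := h2 f.bot b.hom b.mem
  obtain ⟨l, l1, l2⟩ := exLift hP a.hom f.top f.w.symm
  rw [← l2]
  exact h3 _ _ (key p₁ p₂ hP l l1 l2) (E_pb h1 h2 h3 hP.flip hf)

theorem ker_of_double (h1 : AxE1 E) (h2 : AxE2 E) (h3 : AxE3 E)
    {a b : ExtObj E} {f : a ⟶ b} (hf : IsDoubleExt f) {K L : 𝒟} {ka : K ⟶ a.dom} {kb : L ⟶ b.dom}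
    (ha : IsKer ka a.hom) (hb : IsKer kb b.hom) {k : K ⟶ L} (e : k ≫ kb = ka ≫ f.top) :
    E k := by
  obtain ⟨P, p₁, p₂, hP, -⟩ := h2 f.bot b.hom b.mem
  obtain ⟨l, l1, l2⟩ := exLift hP a.hom f.top f.w.symm
  have hl : E l := hf.2.2 p₁ p₂ hP l l1 l2
  obtain ⟨i, i1, i2⟩ := exLift hP (0 : L ⟶ _) kb (by simp [hb.w])
  have hpb : IsPullback k ka i l := by
    have e' : k ≫ i = ka ≫ l := by
      apply hP.hom_ext
      · simp [i1, l1, ha.w]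
      · simp [i2, l2, e]
    refine isPB_mk e' (fun x y w => ?_) (fun s t e e' => ha.un _ _ e')
    obtain ⟨j, hj⟩ := ha.ex y (by rw [← l1, ← Category.assoc, ← w, Category.assoc, i1, comp_zero])
    refine ⟨j, hb.un _ _ ?_, hj⟩
    rw [Category.assoc, e, ← i2, ← Category.assoc x, w, ← l2, ← hj]
    simp only [Category.assoc]
  exact E_pb h1 h2 h3 hpb hl

/-- Induced map on kernels. -/
theorem kerMap {a b : ExtObj E} (f : a ⟶ b) {K L : 𝒟} {ka : K ⟶ a.dom} {kb : L ⟶ b.dom}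
    (ha : IsKer ka a.hom) (hb : IsKer kb b.hom) : ∃ k : K ⟶ L, k ≫ kb = ka ≫ f.top :=
  hb.ex _ (by rw [Category.assoc, f.w, ← Category.assoc, ha.w, zero_comp])

theorem double_split (h1 : AxE1 E) (h2 : AxE2 E) (h3 : AxE3 E) (h4 : AxE4 E) (h5 : AxE5 E)
    {a b : ExtObj E} {f : a ⟶ b} {s : b ⟶ a} (h : s ≫ f = 𝟙 b) : IsDoubleExt f := by
  obtain ⟨K, ka, ha⟩ := exKer h2 a.hom a.mem
  obtain ⟨L, kb, hb⟩ := exKer h2 b.hom b.mem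
  obtain ⟨k, hk⟩ := kerMap f ha hb
  obtain ⟨t, ht⟩ := kerMap s hb ha
  refine double_of_ker h1 h2 h3 h5 (E_split h1 h4 (bot_congr h)) ha hb hk
    (E_split h1 h4 (s := t) (hb.un _ _ ?_))
  have := top_congr h
  simp only [ext_comp_top, ext_id_top] at this
  rw [Category.assoc, hk, ← Category.assoc, ht, Category.assoc, this]
  simp

theorem ext_protomodular (hpm : ProtomodularCat 𝒟)
    (h1 : AxE1 E) (h2 : AxE2 E) (h3 : AxE3 E) (h4 : AxE4 E) (h5 : AxE5 E) :
    ProtomodularCat (ExtObj E) := by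
  constructor
  · intro X Y Z g s hs h
    obtain ⟨p, p₁, p₂, ht, hb, -⟩ := ext_pb h1 h2 h3 h g (double_split h1 h2 h3 h4 h5 hs)
    exact ⟨p, p₂, p₁, (ext_isPB ht hb).flip⟩
  · intro K A B K' A' B' k f s k' f' s' u v w hs hs' hk hk' hK hK' e e' hu hw
    obtain ⟨kt, kb⟩ := ker_levels h1 h2 h3 (isKer_of_lim hk hK) (double_split h1 h2 h3 h4 h5 hs)
    obtain ⟨kt', kb'⟩ := ker_levels h1 h2 h3 (isKer_of_lim hk' hK')
      (double_split h1 h2 h3 h4 h5 hs')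
    apply ext_isIso
    · exact hpm.2 k.top f.top s.top k'.top f'.top s'.top u.top v.top w.top (top_congr hs)
        (top_congr hs') kt.w kt'.w (lim_of_isKer kt) (lim_of_isKer kt') (top_congr e)
        (top_congr e') (ext_iso_top u) (ext_iso_top w)
    · exact hpm.2 k.bot f.bot s.bot k'.bot f'.bot s'.bot u.bot v.bot w.bot (bot_congr hs)
        (bot_congr hs') kb.w kb'.w (lim_of_isKer kb) (lim_of_isKer kb') (bot_congr e)
        (bot_congr e') (ext_iso_bot u) (ext_iso_bot w)

theorem ext_E1 (h1 : AxE1 E) (h2 : AxE2 E) (h3 : AxE3 E) (h4 : AxE4 E) (h5 : AxE5 E) :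
    AxE1 (DoubleExtClass E) := by
  intro X Y f hf
  exact double_split h1 h2 h3 h4 h5 (IsIso.inv_hom_id f)

theorem ext_E2 (h1 : AxE1 E) (h2 : AxE2 E) (h3 : AxE3 E) : AxE2 (DoubleExtClass E) := by
  intro X Y Z f g hg
  obtain ⟨p, p₁, p₂, ht, hb, h⟩ := ext_pb h1 h2 h3 f g hg
  exact ⟨p, p₁, p₂, ext_isPB ht hb, h⟩

theorem ext_E3 (h1 : AxE1 E) (h2 : AxE2 E) (h3 : AxE3 E) (h5 : AxE5 E) :
    AxE3 (DoubleExtClass E) := by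
  intro X Y Z f g hf hg
  obtain ⟨K, ka, ha⟩ := exKer h2 X.hom X.mem
  obtain ⟨L, kb, hb⟩ := exKer h2 Y.hom Y.mem
  obtain ⟨M, kc, hc⟩ := exKer h2 Z.hom Z.mem
  obtain ⟨k, hk⟩ := kerMap f ha hb
  obtain ⟨t, ht⟩ := kerMap g hb hc
  refine double_of_ker h1 h2 h3 h5 (h3 _ _ hf.2.1 hg.2.1) ha hc (k := k ≫ t) ?_
    (h3 _ _ (ker_of_double h1 h2 h3 hf ha hb hk) (ker_of_double h1 h2 h3 hg hb hc ht))
  rw [Category.assoc, ht, ← Category.assoc, hk, Category.assoc]; rfl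

theorem ext_E4 (h1 : AxE1 E) (h2 : AxE2 E) (h3 : AxE3 E) (h4 : AxE4 E) (h5 : AxE5 E) :
    AxE4 (DoubleExtClass E) := by
  intro X Y Z f g hfg
  obtain ⟨K, ka, ha⟩ := exKer h2 X.hom X.mem
  obtain ⟨L, kb, hb⟩ := exKer h2 Y.hom Y.mem
  obtain ⟨M, kc, hc⟩ := exKer h2 Z.hom Z.mem
  obtain ⟨k, hk⟩ := kerMap f ha hb
  obtain ⟨t, ht⟩ := kerMap g hb hc
  refine double_of_ker h1 h2 h3 h5 (h4 _ _ hfg.2.1) hb hc ht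
    (h4 k t (ker_of_double h1 h2 h3 hfg ha hc ?_))
  rw [Category.assoc, ht, ← Category.assoc, hk, Category.assoc]; rfl

/-- Kernels commute with kernels. -/
theorem ker_ker {κ x z : ExtObj E} {i : κ ⟶ x} {a : x ⟶ z} (ht : IsKer i.top a.top)
    (hb : IsKer i.bot a.bot) {K X Z : 𝒟} {kk : K ⟶ κ.dom} {kx : X ⟶ x.dom} {kz : Z ⟶ z.dom}
    (hk : IsKer kk κ.hom) (hx : IsKer kx x.hom) (hz : IsKer kz z.hom) {j : K ⟶ X} {c : X ⟶ Z}
    (ej : j ≫ kx = kk ≫ i.top) (ec : c ≫ kz = kx ≫ a.top) : IsKer j c := by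
  refine ⟨hz.un _ _ ?_, fun t h => ?_, fun l m e => hk.un _ _ (ht.un _ _ ?_)⟩
  · rw [Category.assoc, ec, ← Category.assoc, ej, Category.assoc, ht.w]; simp
  · obtain ⟨p, hp⟩ := ht.ex (t ≫ kx) (by
      rw [Category.assoc, ← ec, ← Category.assoc, h, zero_comp])
    obtain ⟨q, hq⟩ := hk.ex p (hb.un _ _ (by
      rw [Category.assoc, ← i.w, ← Category.assoc, hp, Category.assoc, hx.w]; simp))
    refine ⟨q, hx.un _ _ ?_⟩
    rw [Category.assoc, ej, ← Category.assoc, hq, hp]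
  · rw [Category.assoc, Category.assoc, ← ej, ← Category.assoc, e, Category.assoc]

theorem ext_E5 (h1 : AxE1 E) (h2 : AxE2 E) (h3 : AxE3 E) (h4 : AxE4 E) (h5 : AxE5 E) :
    AxE5 (DoubleExtClass E) := by
  intro κ μ x y z ka kb a b f k e1 e2 wa wb la lb ha hk
  have hb : IsDoubleExt b := ext_E4 h1 h2 h3 h4 h5 f b (by rw [e1]; exact ha)
  obtain ⟨kat, kab⟩ := ker_levels h1 h2 h3 (isKer_of_lim wa la) ha
  obtain ⟨kbt, kbb⟩ := ker_levels h1 h2 h3 (isKer_of_lim wb lb) hb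
  have hfb : E f.bot := E5' h5 (bot_congr e1) (bot_congr e2) kab kbb ha.2.1 hk.2.1
  obtain ⟨K, iκ, hκ⟩ := exKer h2 κ.hom κ.mem
  obtain ⟨M, iμ, hμ⟩ := exKer h2 μ.hom μ.mem
  obtain ⟨X, ix, hx⟩ := exKer h2 x.hom x.mem
  obtain ⟨Y, iy, hy⟩ := exKer h2 y.hom y.mem
  obtain ⟨Z, iz, hz⟩ := exKer h2 z.hom z.mem
  obtain ⟨ka', hka'⟩ := kerMap ka hκ hx
  obtain ⟨kb', hkb'⟩ := kerMap kb hμ hy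
  obtain ⟨a', ha'⟩ := kerMap a hx hz
  obtain ⟨b', hb'⟩ := kerMap b hy hz
  obtain ⟨f', hf'⟩ := kerMap f hx hy
  obtain ⟨k', hk'⟩ := kerMap k hκ hμ
  refine double_of_ker h1 h2 h3 h5 hfb hx hy hf' ?_
  have e1' := top_congr e1
  have e2' := top_congr e2
  simp only [ext_comp_top] at e1' e2'
  refine E5' h5 (ka := ka') (kb := kb') (a := a') (b := b') (k := k') ?_ ?_
    (ker_ker kat kab hκ hx hz hka' ha') (ker_ker kbt kbb hμ hy hz hkb' hb')
    (ker_of_double h1 h2 h3 ha hx hz ha') (ker_of_double h1 h2 h3 hk hκ hμ hk')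
  · apply hz.un
    rw [Category.assoc, hb', ← Category.assoc, hf', Category.assoc, e1', ha']
  · apply hy.un
    rw [Category.assoc, Category.assoc, hkb', hf', ← Category.assoc, ← Category.assoc, hk', hka',
      Category.assoc, Category.assoc, e2']

end Ext2

section Mon
variable {𝒟 : Type u} [Category.{v} 𝒟]

/-- Members of the class are coequalizers of their kernel pairs. -/
def RegEpiC (E : MorphismProperty 𝒟) : Prop :=
  ∀ {A B : 𝒟} (f : A ⟶ B), E f → ∀ {K : 𝒟} (u v : K ⟶ A), IsPullback u v f f →
    ∀ {X : 𝒟} (t : A ⟶ X), u ≫ t = v ≫ t →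
      ∃ g : B ⟶ X, f ≫ g = t ∧ ∀ g' : B ⟶ X, f ≫ g' = t → g' = g

/-- Elementary effective descent. -/
def EffDesc (E : MorphismProperty 𝒟) : Prop :=
  ∀ {A B C T : 𝒟} (f : A ⟶ B) (c : C ⟶ A), E f → E c → ∀ (pA : T ⟶ A) (pC ξ : T ⟶ C),
    IsPullback pC pA (c ≫ f) f → ξ ≫ c = pA →
    (∀ {X : 𝒟} (e : X ⟶ T), e ≫ pA = e ≫ pC ≫ c → e ≫ ξ = e ≫ pC) →
    (∀ {X : 𝒟} (s t w : X ⟶ T), s ≫ pC = t ≫ ξ → w ≫ pC = t ≫ pC → s ≫ pA = w ≫ pA →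
      s ≫ ξ = w ≫ ξ) →
    ∃ (D : 𝒟) (d : D ⟶ B) (q : C ⟶ D), E d ∧ IsPullback q c d f ∧ ξ ≫ q = pC ≫ q

theorem desc_kp {A B C T D : 𝒟} {f : A ⟶ B} {c : C ⟶ A} {pA : T ⟶ A} {pC ξ : T ⟶ C}
    (hT : IsPullback pC pA (c ≫ f) f) (hξ : ξ ≫ c = pA) {d : D ⟶ B} {q : C ⟶ D}
    (hq : IsPullback q c d f) (e : ξ ≫ q = pC ≫ q) : IsPullback pC ξ q q := by
  have : IsPullback pC (ξ ≫ c) (q ≫ d) f := by rw [hξ, hq.w]; exact hT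
  exact this.of_bot e.symm hq

section
variable {E : MorphismProperty 𝒟}

@[simp] theorem es_comp_top {B : 𝒟} {a b c : ESliceObj E B} (f : a ⟶ b) (g : b ⟶ c) :
    (f ≫ g).top = f.top ≫ g.top := rfl
@[simp] theorem es_id_top {B : 𝒟} (a : ESliceObj E B) : ESliceHom.top (𝟙 a) = 𝟙 a.dom := rfl
theorem es_hext {B : 𝒟} {a b : ESliceObj E B} {f g : a ⟶ b} (h : f.top = g.top) : f = g :=
  ESliceHom.ext h
theorem es_congr {B : 𝒟} {a b : ESliceObj E B} {f g : a ⟶ b} (h : f = g) : f.top = g.top := by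
  rw [h]

/-- Composition with `f`. -/
abbrev compF [E.IsStableUnderComposition] {A B : 𝒟} (f : A ⟶ B) (hf : E f) : ESliceObj E A ⥤ ESliceObj E B where
  obj c := ⟨c.dom, c.hom ≫ f, E.comp_mem _ _ c.mem hf⟩
  map {c c'} φ := ⟨φ.top, by
    change φ.top ≫ c'.hom ≫ f = c.hom ≫ f
    rw [← Category.assoc, φ.w]⟩
  map_id _ := rfl
  map_comp _ _ := rfl

/-- The adjunction between composition and pullback. -/
noncomputable def compAdj [E.IsStableUnderComposition] {A B : 𝒟} (f : A ⟶ B) (hf : E f)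
    (P : PullbackFunctorAlong E f) : compF f hf ⊣ P.R :=
  Adjunction.mkOfHomEquiv
    { homEquiv := fun c d =>
        { toFun := fun t => ⟨(P.isPB d).lift t.top c.hom t.w, (P.isPB d).lift_snd _ _ _⟩
          invFun := fun s => ⟨s.top ≫ P.top d, by
            rw [Category.assoc, (P.isPB d).w, ← Category.assoc, s.w]⟩
          left_inv := fun t => es_hext ((P.isPB d).lift_fst _ _ _)
          right_inv := fun s => es_hext ((P.isPB d).hom_ext ((P.isPB d).lift_fst _ _ _)
            (((P.isPB d).lift_snd _ _ _).trans s.w.symm)) }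
      homEquiv_naturality_left_symm := fun f g => es_hext (Category.assoc _ _ _)
      homEquiv_naturality_right := fun {X Y Y'} g h => es_hext ((P.isPB _).hom_ext
        (by
          refine ((P.isPB _).lift_fst _ _ _).trans ?_
          refine Eq.trans ?_ (Category.assoc _ _ _).symm
          refine Eq.trans ?_ (congrArg _ (P.nat h).symm)
          refine Eq.trans ?_ (Category.assoc _ _ _)
          exact congrArg (· ≫ h.top) ((P.isPB _).lift_fst _ _ _).symm)
        (by
          refine ((P.isPB _).lift_snd _ _ _).trans ?_
          refine Eq.trans ?_ (Category.assoc _ _ _).symm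
          refine Eq.trans ?_ (congrArg _ (P.R.map h).w.symm)
          exact ((P.isPB _).lift_snd _ _ _).symm)) }

theorem compAdj_counit [E.IsStableUnderComposition] {A B : 𝒟} (f : A ⟶ B) (hf : E f)
    (P : PullbackFunctorAlong E f) (d : ESliceObj E B) :
    ((compAdj f hf P).counit.app d).top = P.top d := by
  simp only [compAdj, Adjunction.mkOfHomEquiv_counit_app]
  exact Category.id_comp _

theorem compAdj_unit [E.IsStableUnderComposition] {A B : 𝒟} (f : A ⟶ B) (hf : E f)
    (P : PullbackFunctorAlong E f) (c : ESliceObj E A) :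
    ((compAdj f hf P).unit.app c).top ≫ P.top ((compF f hf).obj c) = 𝟙 c.dom := by
  simp only [compAdj, Adjunction.mkOfHomEquiv_unit_app]
  exact (P.isPB _).lift_fst _ _ _

theorem kp_aux [E.IsStableUnderComposition] {A B : 𝒟} {f : A ⟶ B} (hf : E f)
    (P : PullbackFunctorAlong E f)
    (ε : ∀ d, (compF f hf).obj (P.R.obj d) ⟶ d) (hc : ∀ d, (ε d).top = P.top d)
    (d : ESliceObj E B) : IsPullback (P.top ((compF f hf).obj (P.R.obj d)))
      (P.R.map (ε d)).top (P.top d) (P.top d) := by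
  refine desc_kp (c := (P.R.obj d).hom) (P.isPB ((compF f hf).obj (P.R.obj d)))
    (P.R.map (ε d)).w (P.isPB d) ?_
  rw [P.nat, hc]

theorem faith_aux [E.IsStableUnderComposition] (h1 : AxE1 E) (h2 : AxE2 E) (h3 : AxE3 E)
    (hR : RegEpiC E) {A B : 𝒟} {f : A ⟶ B} (hf : E f) (P : PullbackFunctorAlong E f)
    (ε : ∀ d, (compF f hf).obj (P.R.obj d) ⟶ d) (hc : ∀ d, (ε d).top = P.top d)
    {d d' : ESliceObj E B} (φ ψ : d ⟶ d') (h' : P.R.map φ = P.R.map ψ) : φ = ψ := by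
  have hkp := kp_aux hf P ε hc
  have h'' : P.top d ≫ φ.top = P.top d ≫ ψ.top := by rw [← P.nat, ← P.nat, h']
  obtain ⟨g, -, hg⟩ := hR (P.top d) (E_pb h1 h2 h3 (P.isPB d) hf) _ _ (hkp d)
    (P.top d ≫ φ.top) (by rw [← Category.assoc, (hkp d).w, Category.assoc])
  exact es_hext ((hg _ rfl).trans (hg _ h''.symm).symm)

theorem full_aux [E.IsStableUnderComposition] (h1 : AxE1 E) (h2 : AxE2 E) (h3 : AxE3 E)
    (hR : RegEpiC E) {A B : 𝒟} {f : A ⟶ B} (hf : E f) (P : PullbackFunctorAlong E f)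
    (ε : ∀ d, (compF f hf).obj (P.R.obj d) ⟶ d) (hc : ∀ d, (ε d).top = P.top d)
    {d d' : ESliceObj E B} (φ : P.R.obj d ⟶ P.R.obj d')
    (hφ : P.R.map ((compF f hf).map φ) ≫ P.R.map (ε d') = P.R.map (ε d) ≫ φ) :
    ∃ g : d ⟶ d', P.R.map g = φ := by
  have hkp := kp_aux hf P ε hc
  have hE := E_pb h1 h2 h3 (P.isPB d) hf
  obtain ⟨g, hg, hg'⟩ := hR (P.top d) hE _ _ (hkp d) (φ.top ≫ P.top d') (by
    have h0 : (P.R.map ((compF f hf).map φ)).top ≫ (P.R.map (ε d')).top =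
      (P.R.map (ε d)).top ≫ φ.top := es_congr hφ
    have n1 : (P.R.map ((compF f hf).map φ)).top ≫ P.top ((compF f hf).obj (P.R.obj d')) =
      P.top ((compF f hf).obj (P.R.obj d)) ≫ φ.top := P.nat ((compF f hf).map φ)
    rw [← Category.assoc (P.R.map _).top, ← h0, ← Category.assoc, ← n1, Category.assoc,
      Category.assoc, P.nat, hc])
  obtain ⟨g₂, -, hg₂⟩ := hR (P.top d) hE _ _ (hkp d) (P.top d ≫ d.hom) (by
    rw [← Category.assoc, (hkp d).w, Category.assoc])
  refine ⟨⟨g, (hg₂ _ ?_).trans (hg₂ _ rfl).symm⟩, ?_⟩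
  · rw [← Category.assoc, hg, Category.assoc, (P.isPB d').w, ← Category.assoc, φ.w, (P.isPB d).w]
  · apply es_hext
    apply (P.isPB d').hom_ext
    · refine (P.nat _).trans hg
    · exact (ESliceHom.w _).trans φ.w.symm

theorem ess_aux [E.IsStableUnderComposition] (hD : EffDesc E)
    {A B : 𝒟} {f : A ⟶ B} (hf : E f) (P : PullbackFunctorAlong E f)
    (ε : ∀ d, (compF f hf).obj (P.R.obj d) ⟶ d) (hc : ∀ d, (ε d).top = P.top d)
    (c : ESliceObj E A) (a : P.R.obj ((compF f hf).obj c) ⟶ c)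
    (η : c ⟶ P.R.obj ((compF f hf).obj c)) (hη : η.top ≫ P.top ((compF f hf).obj c) = 𝟙 _)
    (au : η ≫ a = 𝟙 _)
    (aa : P.R.map (ε ((compF f hf).obj c)) ≫ a = P.R.map ((compF f hf).map a) ≫ a) :
    ∃ (d : ESliceObj E B) (i : P.R.obj d ≅ c),
      P.R.map ((compF f hf).map i.hom) ≫ a = P.R.map (ε d) ≫ i.hom := by
  have hT := P.isPB ((compF f hf).obj c)
  obtain ⟨D, d, q, hd, hq, e⟩ := hD f c.hom hf c.mem
    (P.R.obj ((compF f hf).obj c)).hom (P.top ((compF f hf).obj c)) a.top hT a.w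
    (by
      intro X e he
      have : e = (e ≫ P.top ((compF f hf).obj c)) ≫ η.top := by
        apply hT.hom_ext
        · rw [Category.assoc, hη, Category.comp_id]
        · rw [Category.assoc, η.w, he, Category.assoc]
      have h' := es_congr au
      simp only [es_comp_top, es_id_top] at h'
      conv_lhs => rw [this]
      rw [Category.assoc, h', Category.comp_id])
    (by
      intro X s t w hs hw hsw
      have hTT := P.isPB ((compF f hf).obj (P.R.obj ((compF f hf).obj c)))
      have htf : t ≫ (P.R.obj ((compF f hf).obj c)).hom ≫ f =
          (s ≫ (P.R.obj ((compF f hf).obj c)).hom) ≫ f := by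
        rw [Category.assoc]
        refine Eq.symm ?_
        calc s ≫ (P.R.obj ((compF f hf).obj c)).hom ≫ f
            = s ≫ P.top ((compF f hf).obj c) ≫ c.hom ≫ f := congrArg _ hT.w.symm
          _ = (s ≫ P.top ((compF f hf).obj c)) ≫ c.hom ≫ f := (Category.assoc _ _ _).symm
          _ = t ≫ (a.top ≫ c.hom) ≫ f := by rw [hs]; simp only [Category.assoc]
          _ = _ := by rw [a.w]
      obtain ⟨y, y1, y2⟩ := exLift hTT t (s ≫ (P.R.obj ((compF f hf).obj c)).hom) htf
      have hs' : s = y ≫ (P.R.map ((compF f hf).map a)).top := by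
        apply hT.hom_ext
        · rw [Category.assoc, P.nat, ← Category.assoc, y1, hs]
        · rw [Category.assoc, (P.R.map ((compF f hf).map a)).w, y2]
      have hw' : w = y ≫ (P.R.map (ε ((compF f hf).obj c))).top := by
        apply hT.hom_ext
        · rw [Category.assoc, P.nat, ← Category.assoc, y1, hw, hc]
        · rw [Category.assoc, (P.R.map (ε _)).w]
          exact hsw.symm.trans y2.symm
      have h' := es_congr aa
      simp only [es_comp_top] at h'
      rw [hs', hw', Category.assoc, Category.assoc, h'])
  let dd : ESliceObj E B := ⟨D, d, hd⟩
  obtain ⟨i, i1, i2⟩ := exIso (P.isPB dd) hq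
  refine ⟨dd,
    { hom := ⟨i.hom, i2⟩
      inv := ⟨i.inv, (Iso.inv_comp_eq i).mpr i2.symm⟩
      hom_inv_id := es_hext i.hom_inv_id
      inv_hom_id := es_hext i.inv_hom_id }, ?_⟩
  apply es_hext
  change (P.R.map ((compF f hf).map _)).top ≫ a.top = (P.R.map (ε dd)).top ≫ i.hom
  apply hq.hom_ext
  · rw [Category.assoc, Category.assoc, e, ← Category.assoc, P.nat, i1, P.nat, hc,
      Category.assoc]
    exact congrArg _ i1
  · rw [Category.assoc, Category.assoc, a.w]
    exact (ESliceHom.w _).trans ((ESliceHom.w (P.R.map (ε dd))).symm.trans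
      (congrArg _ i2.symm))

theorem axM_of (h1 : AxE1 E) (h2 : AxE2 E) (h3 : AxE3 E) (hR : RegEpiC E) (hD : EffDesc E) :
    AxM E := by
  intro A B f hf P
  have : E.IsStableUnderComposition := ⟨fun f g hf hg => h3 f g hf hg⟩
  have hc := compAdj_counit f hf P
  have hu := compAdj_unit f hf P
  generalize compAdj f hf P = adj at hc hu
  have hfaith : (Monad.comparison adj).Faithful :=
    ⟨fun {d d'} φ ψ h => faith_aux h1 h2 h3 hR hf P (fun d => adj.counit.app d) hc φ ψ
      (congrArg Monad.Algebra.Hom.f h)⟩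
  have hfull : (Monad.comparison adj).Full := by
    refine ⟨fun {d d'} φ => ?_⟩
    obtain ⟨g, hg⟩ := full_aux h1 h2 h3 hR hf P (fun d => adj.counit.app d) hc φ.f φ.h
    exact ⟨g, Monad.Algebra.Hom.ext' _ _ _ _ hg⟩
  have hess : (Monad.comparison adj).EssSurj := by
    refine ⟨fun α => ?_⟩
    obtain ⟨d, i, hi⟩ := ess_aux hD hf P (fun d => adj.counit.app d) hc α.A α.a
      (adj.unit.app α.A) (hu _) α.unit α.assoc
    exact ⟨d, ⟨Monad.Algebra.isoMk i hi⟩⟩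
  exact ⟨{ L := compF f hf, adj := adj, eqv := { } }⟩

end
end Mon

section Beck
universe w₁ w₂
variable {C : Type w₁} {D : Type w₂} [Category.{v} C] [Category.{v} D]

theorem create_aux (G : C ⥤ D) (hG : Nonempty (MonadicRightAdjoint G)) {X Y : C} (f g : X ⟶ Y)
    {Z : D} (π : G.obj Y ⟶ Z) (hs : IsSplitCoequalizer (G.map f) (G.map g) π) :
    ∃ (W : C) (q : Y ⟶ W) (i : G.obj W ≅ Z), f ≫ q = g ≫ q ∧ G.map q ≫ i.hom = π := by
  obtain ⟨hG⟩ := hG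
  have : G.IsSplitPair f g := ⟨⟨Z, π, ⟨hs⟩⟩⟩
  let _ := Monad.createsGSplitCoequalizersOfMonadic G f g
  let c : Cocone (parallelPair f g ⋙ G) :=
    (Cocone.precompose (diagramIsoParallelPair (parallelPair f g ⋙ G)).hom).obj hs.asCofork
  let hc : IsColimit c := (IsColimit.precomposeHomEquiv _ _).symm hs.isCoequalizer
  let i := liftedColimitMapsToOriginal hc
  refine ⟨(liftColimit hc).pt, (liftColimit hc).ι.app WalkingParallelPair.one,
    (Cocone.forget _).mapIso i, ?_, ?_⟩
  · exact ((liftColimit hc).w WalkingParallelPairHom.left).trans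
      ((liftColimit hc).w WalkingParallelPairHom.right).symm
  · refine (i.hom.w WalkingParallelPair.one).trans ?_
    exact Category.id_comp _

theorem reflect_aux (G : C ⥤ D) (hG : Nonempty (MonadicRightAdjoint G)) {X Y Z : C} (f g : X ⟶ Y)
    (π : Y ⟶ Z) (w : f ≫ π = g ≫ π)
    (hs : IsSplitCoequalizer (G.map f) (G.map g) (G.map π)) :
    ∀ {V : C} (t : Y ⟶ V), f ≫ t = g ≫ t → ∃ l : Z ⟶ V, π ≫ l = t ∧ ∀ l', π ≫ l' = t → l' = l := by
  obtain ⟨hG⟩ := hG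
  have : G.IsSplitPair f g := ⟨⟨_, G.map π, ⟨hs⟩⟩⟩
  let _ := Monad.createsGSplitCoequalizersOfMonadic G f g
  have h : IsColimit (Cofork.ofπ π w) := isColimitOfIsColimitCoforkMap G w hs.isCoequalizer
  intro V t ht
  refine ⟨Cofork.IsColimit.desc h t ht, Cofork.IsColimit.π_desc' h t ht, fun l' e => ?_⟩
  exact Cofork.IsColimit.hom_ext h (e.trans (Cofork.IsColimit.π_desc' h t ht).symm)

end Beck

section FromM
variable {𝒟 : Type u} [Category.{v} 𝒟] {E : MorphismProperty 𝒟}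

theorem exP (h2 : AxE2 E) {A B : 𝒟} (f : A ⟶ B) : Nonempty (PullbackFunctorAlong E f) := by
  have := fun g : ESliceObj E B => h2 f g.hom g.mem
  choose Q p₁ p₂ hp hE using this
  have hw : ∀ {g h : ESliceObj E B} (φ : g ⟶ h), p₁ g ≫ f = (p₂ g ≫ φ.top) ≫ h.hom := by
    intro g h φ
    rw [Category.assoc, φ.w, (hp g).w]
  exact ⟨{
    R :=
      { obj := fun g => ⟨Q g, p₁ g, hE g⟩
        map := fun {g h} φ => ⟨(hp h).lift (p₁ g) (p₂ g ≫ φ.top) (hw φ), (hp h).lift_fst _ _ _⟩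
        map_id := fun g => es_hext ((hp g).hom_ext
          (((hp g).lift_fst _ _ _).trans (Category.id_comp _).symm)
          (((hp g).lift_snd _ _ _).trans ((Category.comp_id _).trans (Category.id_comp _).symm)))
        map_comp := fun {g h k} φ ψ => es_hext ((hp k).hom_ext
          (((hp k).lift_fst _ _ _).trans (by simp))
          (((hp k).lift_snd _ _ _).trans (by simp))) }
    top := p₂
    isPB := fun g => (hp g).flip
    nat := fun {g h} φ => (hp h).lift_snd _ _ _ }⟩

theorem effDesc_of_M (h1 : AxE1 E) (h2 : AxE2 E) (h3 : AxE3 E) (hM : AxM E) : EffDesc E := by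
  intro A B C T f c hf hc pA pC ξ hT hξ hun has
  obtain ⟨P⟩ := exP h2 f
  have hcf : E (c ≫ f) := h3 _ _ hc hf
  have hpC : E (pC ≫ c ≫ f) := h3 _ _ (E_pb h1 h2 h3 hT hf) hcf
  let T' : ESliceObj E B := ⟨T, pC ≫ c ≫ f, hpC⟩
  let C' : ESliceObj E B := ⟨C, c ≫ f, hcf⟩
  let Z : ESliceObj E A := ⟨C, c, hc⟩
  let x : T' ⟶ C' := ⟨ξ, show ξ ≫ c ≫ f = pC ≫ c ≫ f by rw [← Category.assoc, hξ, hT.w]⟩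
  let y : T' ⟶ C' := ⟨pC, rfl⟩
  have hC : IsPullback (P.top C') (P.R.obj C').hom (c ≫ f) f := P.isPB C'
  have hTT : IsPullback (P.top T') (P.R.obj T').hom (pC ≫ c ≫ f) f := P.isPB T'
  have nx : (P.R.map x).top ≫ P.top C' = P.top T' ≫ ξ := P.nat x
  have ny : (P.R.map y).top ≫ P.top C' = P.top T' ≫ pC := P.nat y
  have wx : (P.R.map x).top ≫ (P.R.obj C').hom = (P.R.obj T').hom := (P.R.map x).w
  have wy : (P.R.map y).top ≫ (P.R.obj C').hom = (P.R.obj T').hom := (P.R.map y).w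
  obtain ⟨j, j1, j2⟩ := exLift hT (P.top C') (P.R.obj C').hom hC.w
  obtain ⟨s, s1, s2⟩ := exLift hC (𝟙 C) c (by rw [Category.id_comp])
  obtain ⟨t, t1, t2⟩ := exLift hTT j (P.R.obj C').hom (by rw [← Category.assoc, j1, hC.w])
  let π : P.R.obj C' ⟶ Z := ⟨j ≫ ξ, show (j ≫ ξ) ≫ c = _ by rw [Category.assoc, hξ, j2]⟩
  let s' : Z ⟶ P.R.obj C' := ⟨s, s2⟩
  let t' : P.R.obj C' ⟶ P.R.obj T' := ⟨t, t2⟩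
  have e1 : (P.R.map x).top ≫ j ≫ ξ = (P.R.map y).top ≫ j ≫ ξ := by
    have := has ((P.R.map x).top ≫ j) (P.top T') ((P.R.map y).top ≫ j)
      (by rw [Category.assoc, j1, nx]) (by rw [Category.assoc, j1, ny])
      (by rw [Category.assoc, Category.assoc, j2, wx, wy])
    simpa only [Category.assoc] using this
  have e2 : s ≫ j ≫ ξ = 𝟙 C := by
    have := hun (s ≫ j) (by rw [Category.assoc, j2, s2, Category.assoc, ← Category.assoc j, j1,
      ← Category.assoc, s1, Category.id_comp])
    rw [← Category.assoc, this, Category.assoc, j1, s1]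
  have e3 : t ≫ (P.R.map y).top = 𝟙 _ := by
    apply hC.hom_ext
    · rw [Category.assoc, ny, ← Category.assoc, t1, j1, Category.id_comp]
    · rw [Category.assoc, wy, t2, Category.id_comp]
  have e4 : t ≫ (P.R.map x).top = (j ≫ ξ) ≫ s := by
    apply hC.hom_ext
    · rw [Category.assoc, nx, ← Category.assoc, t1, Category.assoc _ s, s1, Category.comp_id]
    · rw [Category.assoc, wx, t2, Category.assoc, Category.assoc, s2, hξ, j2]
  have hs : IsSplitCoequalizer (P.R.map x) (P.R.map y) π :=
    { rightSection := s', leftSection := t', condition := es_hext e1, rightSection_π := es_hext e2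
      leftSection_bottom := es_hext e3, leftSection_top := es_hext e4 }
  obtain ⟨W, q, i, hq, hi⟩ := create_aux P.R (hM f hf P) x y π hs
  have hi' : (P.R.map q).top ≫ i.hom.top = j ≫ ξ := es_congr hi
  have i1 : i.inv.top ≫ i.hom.top = 𝟙 C := es_congr i.inv_hom_id
  have i2 : i.hom.top ≫ i.inv.top = 𝟙 _ := es_congr i.hom_inv_id
  have hinv : i.inv.top = s ≫ (P.R.map q).top := by
    have : i.inv.top = (s ≫ j ≫ ξ) ≫ i.inv.top := by rw [e2]; exact (Category.id_comp _).symm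
    rw [this, ← hi', Category.assoc, Category.assoc, i2, Category.comp_id]
  have hqt : i.inv.top ≫ P.top W = q.top := by
    have nq : (P.R.map q).top ≫ P.top W = P.top C' ≫ q.top := P.nat q
    rw [hinv, Category.assoc, nq, ← Category.assoc, s1]; exact Category.id_comp _
  refine ⟨W.dom, W.hom, q.top, W.mem, ?_, es_congr hq⟩
  refine IsPullback.of_iso (P.isPB W) ⟨i.hom.top, i.inv.top, i2, i1⟩ (Iso.refl _) (Iso.refl _)
    (Iso.refl _) ?_ ?_ ?_ ?_
  · simp only [Iso.refl_hom, Category.comp_id]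
    rw [← hqt, ← Category.assoc, i2, Category.id_comp]
  · simp only [Iso.refl_hom, Category.comp_id]
    exact i.hom.w.symm
  · simp
  · simp

theorem regEpi_of_M [HasZeroMorphisms 𝒟] [HasZeroObject 𝒟] (h1 : AxE1 E) (h2 : AxE2 E)
    (h3 : AxE3 E) (h4 : AxE4 E) (hM : AxM E) : RegEpiC E := by
  intro A B f hf K u v hK X τ hτ
  obtain ⟨P⟩ := exP h2 f
  have huf : E (u ≫ f) := h3 _ _ (E_pb h1 h2 h3 hK hf) hf
  let T' : ESliceObj E B := ⟨K, u ≫ f, huf⟩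
  let C' : ESliceObj E B := ⟨A, f, hf⟩
  let I : ESliceObj E B := ⟨B, 𝟙 B, h1 _ inferInstance⟩
  let x : T' ⟶ C' := ⟨v, hK.w.symm⟩
  let y : T' ⟶ C' := ⟨u, rfl⟩
  let φ : C' ⟶ I := ⟨f, Category.comp_id f⟩
  have hC : IsPullback (P.top C') (P.R.obj C').hom f f := P.isPB C'
  have hTT : IsPullback (P.top T') (P.R.obj T').hom (u ≫ f) f := P.isPB T'
  have hI : IsPullback (P.top I) (P.R.obj I).hom (𝟙 B) f := P.isPB I
  have nx : (P.R.map x).top ≫ P.top C' = P.top T' ≫ v := P.nat x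
  have ny : (P.R.map y).top ≫ P.top C' = P.top T' ≫ u := P.nat y
  have nf : (P.R.map φ).top ≫ P.top I = P.top C' ≫ f := P.nat φ
  have wx : (P.R.map x).top ≫ (P.R.obj C').hom = (P.R.obj T').hom := (P.R.map x).w
  have wy : (P.R.map y).top ≫ (P.R.obj C').hom = (P.R.obj T').hom := (P.R.map y).w
  have wf : (P.R.map φ).top ≫ (P.R.obj I).hom = (P.R.obj C').hom := (P.R.map φ).w
  have hxy : x ≫ φ = y ≫ φ := es_hext hK.w.symm
  obtain ⟨j, j1, j2⟩ := exLift hK (P.top C') (P.R.obj C').hom hC.w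
  obtain ⟨s, s1, s2⟩ := exLift hC (P.R.obj I).hom (P.R.obj I).hom rfl
  obtain ⟨t, t1, t2⟩ := exLift hTT j (P.R.obj C').hom (by rw [← Category.assoc, j1, hC.w])
  let s' : P.R.obj I ⟶ P.R.obj C' := ⟨s, s2⟩
  let t' : P.R.obj C' ⟶ P.R.obj T' := ⟨t, t2⟩
  have e2 : s ≫ (P.R.map φ).top = 𝟙 _ := by
    apply hI.hom_ext
    · rw [Category.assoc, nf, ← Category.assoc, s1, ← hI.w, Category.comp_id, Category.id_comp]
    · rw [Category.assoc, wf, s2, Category.id_comp]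
  have e3 : t ≫ (P.R.map y).top = 𝟙 _ := by
    apply hC.hom_ext
    · rw [Category.assoc, ny, ← Category.assoc, t1, j1, Category.id_comp]
    · rw [Category.assoc, wy, t2, Category.id_comp]
  have e4 : t ≫ (P.R.map x).top = (P.R.map φ).top ≫ s := by
    apply hC.hom_ext
    · rw [Category.assoc, nx, ← Category.assoc, t1, j2, Category.assoc, s1, wf]
    · rw [Category.assoc, wx, t2, Category.assoc, s2, wf]
  have hs : IsSplitCoequalizer (P.R.map x) (P.R.map y) (P.R.map φ) :=
    { rightSection := s', leftSection := t'
      condition := by rw [← P.R.map_comp, ← P.R.map_comp, hxy]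
      rightSection_π := es_hext e2
      leftSection_bottom := es_hext e3, leftSection_top := es_hext e4 }
  obtain ⟨O, hO⟩ := HasZeroObject.zero (C := 𝒟)
  have hX : E (0 : X ⟶ O) := E_split h1 h4 (s := 0) (hO.eq_of_src _ _)
  obtain ⟨Q, p₁, p₂, hQ, hE⟩ := h2 (0 : B ⟶ O) (0 : X ⟶ O) hX
  let V : ESliceObj E B := ⟨Q, p₁, hE⟩
  obtain ⟨m, m1, m2⟩ := exLift hQ f τ (by simp)
  let μ : C' ⟶ V := ⟨m, m1⟩
  obtain ⟨l, l1, l2⟩ := reflect_aux P.R (hM f hf P) x y φ hxy hs μ (es_hext (show v ≫ m = u ≫ m from hQ.hom_ext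
    (by rw [Category.assoc, Category.assoc, m1, hK.w])
    (by rw [Category.assoc, Category.assoc, m2, hτ])))
  have l1' : f ≫ l.top = m := es_congr l1
  refine ⟨l.top ≫ p₂, ?_, fun g' hg' => ?_⟩
  · rw [← Category.assoc, l1', m2]
  · obtain ⟨n, n1, n2⟩ := exLift hQ (𝟙 B) g' (by simp)
    let ν : I ⟶ V := ⟨n, n1⟩
    have : ν = l := l2 ν (es_hext (show f ≫ n = m from hQ.hom_ext
      (by rw [Category.assoc, n1, m1, Category.comp_id])
      (by rw [Category.assoc, n2, m2, hg'])))
    rw [← this, ← n2]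

end FromM

section ExtM
variable {𝒟 : Type u} [Category.{v} 𝒟] {E : MorphismProperty 𝒟}

theorem epi_of_reg (h2 : AxE2 E) (hR : RegEpiC E) {A B X : 𝒟} {f : A ⟶ B} (hf : E f)
    {g g' : B ⟶ X} (h : f ≫ g = f ≫ g') : g = g' := by
  obtain ⟨K, u, v, hK, -⟩ := h2 f f hf
  obtain ⟨l, -, hl⟩ := hR f hf u v hK (f ≫ g) (by rw [← Category.assoc, hK.w, Category.assoc])
  exact (hl _ rfl).trans (hl _ h.symm).symm

theorem ext_regEpi (h1 : AxE1 E) (h2 : AxE2 E) (h3 : AxE3 E) (hR : RegEpiC E) :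
    RegEpiC (DoubleExtClass E) := by
  intro a b f hf k u v hk x t ht
  have hf' : IsDoubleExt f := hf
  obtain ⟨kt, kb⟩ := ext_levels h1 h2 h3 hk hf'
  obtain ⟨g, g1, g2⟩ := hR f.top hf'.1 _ _ kt t.top (top_congr ht)
  obtain ⟨r, r1, r2⟩ := hR f.bot hf'.2.1 _ _ kb t.bot (bot_congr ht)
  refine ⟨⟨g, r, epi_of_reg h2 hR hf'.1 ?_⟩, ext_hext g1 r1, fun g' hg' =>
    ext_hext (g2 _ (top_congr hg')) (r2 _ (bot_congr hg'))⟩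
  rw [← Category.assoc, g1, ← Category.assoc, f.w, Category.assoc, r1, t.w]

theorem ext_effDesc [HasZeroMorphisms 𝒟] [HasZeroObject 𝒟] (h1 : AxE1 E) (h2 : AxE2 E)
    (h3 : AxE3 E) (h4 : AxE4 E) (h5 : AxE5 E) (hR : RegEpiC E) (hD : EffDesc E) :
    EffDesc (DoubleExtClass E) := by
  intro A B C T f c hf hc pA pC ξ hT hξ hun has
  have hf' : IsDoubleExt f := hf
  have hc' : IsDoubleExt c := hc
  obtain ⟨Tt, Tb⟩ := ext_levels h1 h2 h3 hT hf'
  -- universal instance of the unit law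
  obtain ⟨η, η1, η2⟩ := exLift hT (𝟙 C) c (Category.id_comp _)
  have hη : η ≫ ξ = 𝟙 C := by
    rw [hun η (by rw [η2, ← Category.assoc, η1, Category.id_comp]), η1]
  -- universal instance of the associativity law
  obtain ⟨W, wT, wA, Wt, Wb, -⟩ := ext_pb h1 h2 h3 (pA ≫ f) f hf'
  have hW := ext_isPB Wt Wb
  obtain ⟨sW, sW1, sW2⟩ := exLift hT (wT ≫ ξ) wA (by
    rw [← hW.w, Category.assoc, ← Category.assoc ξ, hξ])
  obtain ⟨uW, uW1, uW2⟩ := exLift hT (wT ≫ pC) wA (by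
    rw [← hW.w, Category.assoc, hT.w])
  have hass : sW ≫ ξ = uW ≫ ξ := has sW wT uW sW1 uW1 (sW2.trans uW2.symm)
  obtain ⟨D₁, d₁, q₁, hd₁, hq₁, e₁⟩ := hD f.top c.top hf'.1 hc'.1 pA.top pC.top ξ.top Tt
    (top_congr hξ)
    (by
      intro X e he
      have : e = (e ≫ pC.top) ≫ η.top := by
        apply Tt.hom_ext
        · have h0 : η.top ≫ pC.top = 𝟙 _ := top_congr η1
          rw [Category.assoc, h0, Category.comp_id]
        · have h0 : η.top ≫ pA.top = c.top := top_congr η2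
          rw [Category.assoc, h0, he, Category.assoc]
      have h0 : η.top ≫ ξ.top = 𝟙 _ := top_congr hη
      conv_lhs => rw [this]
      rw [Category.assoc, h0, Category.comp_id])
    (by
      intro X s t w hs hw hsw
      have hξt : ξ.top ≫ c.top = pA.top := top_congr hξ
      have hTw : pC.top ≫ c.top ≫ f.top = pA.top ≫ f.top := Tt.w
      obtain ⟨y, y1, y2⟩ := exLift Wt t (s ≫ pA.top) (by
        change t ≫ pA.top ≫ f.top = _
        rw [Category.assoc, ← hTw, ← Category.assoc s, hs, Category.assoc, ← Category.assoc ξ.top,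
          hξt, hTw])
      have a1 : sW.top ≫ pC.top = wT.top ≫ ξ.top := top_congr sW1
      have a2 : sW.top ≫ pA.top = wA.top := top_congr sW2
      have b1 : uW.top ≫ pC.top = wT.top ≫ pC.top := top_congr uW1
      have b2 : uW.top ≫ pA.top = wA.top := top_congr uW2
      have hs' : s = y ≫ sW.top := by
        apply Tt.hom_ext
        · rw [Category.assoc, a1, ← Category.assoc, y1, hs]
        · rw [Category.assoc, a2, y2]
      have hw' : w = y ≫ uW.top := by
        apply Tt.hom_ext
        · rw [Category.assoc, b1, ← Category.assoc, y1, hw]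
        · rw [Category.assoc, b2, y2, hsw]
      have h0 : sW.top ≫ ξ.top = uW.top ≫ ξ.top := top_congr hass
      rw [hs', hw', Category.assoc, Category.assoc, h0])
  obtain ⟨D₀, d₀, q₀, hd₀, hq₀, e₀⟩ := hD f.bot c.bot hf'.2.1 hc'.2.1 pA.bot pC.bot ξ.bot Tb
    (bot_congr hξ)
    (by
      intro X e he
      have : e = (e ≫ pC.bot) ≫ η.bot := by
        apply Tb.hom_ext
        · have h0 : η.bot ≫ pC.bot = 𝟙 _ := bot_congr η1
          rw [Category.assoc, h0, Category.comp_id]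
        · have h0 : η.bot ≫ pA.bot = c.bot := bot_congr η2
          rw [Category.assoc, h0, he, Category.assoc]
      have h0 : η.bot ≫ ξ.bot = 𝟙 _ := bot_congr hη
      conv_lhs => rw [this]
      rw [Category.assoc, h0, Category.comp_id])
    (by
      intro X s t w hs hw hsw
      have hξt : ξ.bot ≫ c.bot = pA.bot := bot_congr hξ
      have hTw : pC.bot ≫ c.bot ≫ f.bot = pA.bot ≫ f.bot := Tb.w
      obtain ⟨y, y1, y2⟩ := exLift Wb t (s ≫ pA.bot) (by
        change t ≫ pA.bot ≫ f.bot = _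
        rw [Category.assoc, ← hTw, ← Category.assoc s, hs, Category.assoc, ← Category.assoc ξ.bot,
          hξt, hTw])
      have a1 : sW.bot ≫ pC.bot = wT.bot ≫ ξ.bot := bot_congr sW1
      have a2 : sW.bot ≫ pA.bot = wA.bot := bot_congr sW2
      have b1 : uW.bot ≫ pC.bot = wT.bot ≫ pC.bot := bot_congr uW1
      have b2 : uW.bot ≫ pA.bot = wA.bot := bot_congr uW2
      have hs' : s = y ≫ sW.bot := by
        apply Tb.hom_ext
        · rw [Category.assoc, a1, ← Category.assoc, y1, hs]
        · rw [Category.assoc, a2, y2]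
      have hw' : w = y ≫ uW.bot := by
        apply Tb.hom_ext
        · rw [Category.assoc, b1, ← Category.assoc, y1, hw]
        · rw [Category.assoc, b2, y2, hsw]
      have h0 : sW.bot ≫ ξ.bot = uW.bot ≫ ξ.bot := bot_congr hass
      rw [hs', hw', Category.assoc, Category.assoc, h0])
  have kp₁ : IsPullback pC.top ξ.top q₁ q₁ := desc_kp Tt (top_congr hξ) hq₁ e₁
  have hEq₁ : E q₁ := E_pb h1 h2 h3 hq₁ hf'.1
  have hEq₀ : E q₀ := E_pb h1 h2 h3 hq₀ hf'.2.1
  obtain ⟨δ, δ1, -⟩ := hR q₁ hEq₁ _ _ kp₁ (C.hom ≫ q₀) (by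
    rw [← Category.assoc, ← Category.assoc, pC.w, ξ.w, Category.assoc, Category.assoc, e₀])
  have hδ : E δ := h4 q₁ δ (by rw [δ1]; exact h3 _ _ C.mem hEq₀)
  let D : ExtObj E := ⟨D₁, D₀, δ, hδ⟩
  let q : C ⟶ D := ⟨q₁, q₀, δ1⟩
  let d : D ⟶ B := ⟨d₁, d₀, show d₁ ≫ B.hom = δ ≫ d₀ from epi_of_reg h2 hR hEq₁ (by
    rw [← Category.assoc, hq₁.w, ← Category.assoc, δ1, Category.assoc, Category.assoc, f.w,
      ← Category.assoc, c.w, hq₀.w, Category.assoc])⟩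
  have hqd : IsPullback q c d f := ext_isPB hq₁ hq₀
  refine ⟨D, d, q, ?_, hqd, ext_hext e₁ e₀⟩
  refine ext_E4 h1 h2 h3 h4 h5 q d ?_
  rw [hqd.w]
  exact ext_E3 h1 h2 h3 h5 c f hc hf

end ExtM

/-- if `𝒞` is pointed protomodular and the class `ℰ` satisfies
(E1)–(E5) and (M), then the category `Ext_ℰ(𝒞)` of `ℰ`-extensions is pointed and
protomodular, and the class `ℰ¹` of double `ℰ`-extensions again satisfies (E1)–(E5)
and (M). -/
theorem extension_category_inherits_axioms
    {𝒞 : Type u} [Category.{v} 𝒞] [HasZeroMorphisms 𝒞] [HasZeroObject 𝒞]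
    (E : MorphismProperty 𝒞)
    (hpm : ProtomodularCat 𝒞)
    (h1 : AxE1 E) (h2 : AxE2 E) (h3 : AxE3 E) (h4 : AxE4 E) (h5 : AxE5 E)
    (hM : AxM E) :
    HasZeroObject (ExtObj E) ∧
    ProtomodularCat (ExtObj E) ∧
    AxE1 (DoubleExtClass E) ∧ AxE2 (DoubleExtClass E) ∧ AxE3 (DoubleExtClass E) ∧
    AxE4 (DoubleExtClass E) ∧ AxE5 (DoubleExtClass E) ∧ AxM (DoubleExtClass E) := by
  have hR : RegEpiC E := regEpi_of_M h1 h2 h3 h4 hM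
  have hD : EffDesc E := effDesc_of_M h1 h2 h3 hM
  exact ⟨⟨extZ h1, extZ_isZero h1⟩, ext_protomodular hpm h1 h2 h3 h4 h5, ext_E1 h1 h2 h3 h4 h5,
    ext_E2 h1 h2 h3, ext_E3 h1 h2 h3 h5, ext_E4 h1 h2 h3 h4 h5, ext_E5 h1 h2 h3 h4 h5,
    axM_of (ext_E1 h1 h2 h3 h4 h5) (ext_E2 h1 h2 h3) (ext_E3 h1 h2 h3 h5)
      (ext_regEpi h1 h2 h3 hR) (ext_effDesc h1 h2 h3 h4 h5 hR hD)⟩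
end

section
/- Let Γ = (𝒞, 𝒳, I, H, η, ε, ℰ, ℱ) be a closed Galois structure such that 𝒞 is pointed protomodular, (𝒞, ℰ) satisfies axioms (E4), (E5) and (M), and I preserves pullbacks of type (1). Then there is a closed Galois structure Γ₁ = (Ext_ℰ(𝒞), NExt_Γ(𝒞), I₁, H₁, η¹, ε¹, ℰ¹, ℱ¹), where H₁ is the inclusion of the category NExt_Γ(𝒞) of Γ-normal extensions into Ext_ℰ(𝒞) and I₁ its left adjoint, such that: Ext_ℰ(𝒞) is pointed protomodular; (Ext_ℰ(𝒞), ℰ¹) satisfies (E4), (E5) and (M); and I₁ preserves every pullback in Ext_ℰ(𝒞) of a morphism g ∈ ℰ¹ which is a split epimorphism along a morphism h ∈ ℰ¹. -/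
open CategoryTheory Limits

universe v u

section Axioms
variable {𝒟 : Type u} [Category.{v} 𝒟]

/-- A functor preserves pullbacks of type (1): pullbacks of a split epimorphism `g ∈ ℰ`
along a morphism `h ∈ ℰ`. -/
def PreservesType1 (E : MorphismProperty 𝒟) (T : 𝒟 ⥤ 𝒟) : Prop :=
  ∀ {A B D C : 𝒟} (k : A ⟶ B) (l : A ⟶ D) (g : B ⟶ C) (h : D ⟶ C) (s : C ⟶ B),
    s ≫ g = 𝟙 C → E g → E h → IsPullback k l g h →
    IsPullback (T.map k) (T.map l) (T.map g) (T.map h)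

/-- A functor between pointed categories is protoadditive when it preserves split short
exact sequences (equivalently: zero morphisms and kernels of split epimorphisms). -/
structure Protoadditive {𝒟' : Type*} [Category 𝒟'] [HasZeroMorphisms 𝒟]
    [HasZeroMorphisms 𝒟'] (T : 𝒟 ⥤ 𝒟') : Prop where
  map_zero : ∀ (X Y : 𝒟), T.map (0 : X ⟶ Y) = 0
  preserves : ∀ {K A B : 𝒟} (k : K ⟶ A) (f : A ⟶ B) (s : B ⟶ A),
    s ≫ f = 𝟙 B → ∀ (hk : k ≫ f = 0),
    Nonempty (IsLimit (KernelFork.ofι k hk)) →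
    Nonempty (IsLimit (KernelFork.ofι (T.map k)
      (show T.map k ≫ T.map f = 0 by rw [← T.map_comp, hk, map_zero])))

end Axioms

/-- A closed Galois structure `Γ = (𝒞, 𝒳, I, H, η, ε, ℰ, ℱ)`: the replete full reflective
subcategory `𝒳` of `𝒞` is given by the predicate `inX`, the reflector `I` (composed with
the inclusion `H`) with unit `η` and the reflection universal property; the classes of
extensions `ℰ` (in `𝒞`) and `ℱ` (in `𝒳`) satisfy (E1)–(E3), `I(ℰ) ⊆ ℱ`, `H(ℱ) ⊆ ℰ`,
unit components lie in `ℰ`, and the counit is an isomorphism. -/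
structure GaloisStructure (𝒞 : Type u) [Category.{v} 𝒞] where
  inX : 𝒞 → Prop
  inX_iso : ∀ {X Y : 𝒞}, (X ≅ Y) → inX X → inX Y
  I : 𝒞 ⥤ 𝒞
  η : 𝟭 𝒞 ⟶ I
  I_mem : ∀ C : 𝒞, inX (I.obj C)
  refl_univ : ∀ {C D : 𝒞}, inX D → ∀ f : C ⟶ D, ∃! g : I.obj C ⟶ D, η.app C ≫ g = f
  η_iso_of_mem : ∀ {C : 𝒞}, inX C → IsIso (η.app C)
  E : MorphismProperty 𝒞
  F : MorphismProperty 𝒞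
  F_sub_E : ∀ {X Y : 𝒞} (f : X ⟶ Y), F f → E f
  F_in_X : ∀ {X Y : 𝒞} (f : X ⟶ Y), F f → inX X ∧ inX Y
  E1 : AxE1 E
  E2 : AxE2 E
  E3 : AxE3 E
  F1 : ∀ {X Y : 𝒞} (f : X ⟶ Y), inX X → inX Y → IsIso f → F f
  F2 : ∀ {X Y Z : 𝒞} (f : X ⟶ Z) (g : Y ⟶ Z), inX X → F g →
    ∃ (P : 𝒞) (p₁ : P ⟶ X) (p₂ : P ⟶ Y), IsPullback p₁ p₂ f g ∧ F p₁
  F3 : ∀ {X Y Z : 𝒞} (f : X ⟶ Y) (g : Y ⟶ Z), F f → F g → F (f ≫ g)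
  I_map_mem : ∀ {X Y : 𝒞} (f : X ⟶ Y), E f → F (I.map f)
  η_mem : ∀ C : 𝒞, E (η.app C)

namespace GaloisStructure

variable {𝒞 : Type u} [Category.{v} 𝒞] (G : GaloisStructure 𝒞)

/-- An extension is `Γ`-trivial when the naturality square of the unit at it is a
pullback. -/
def Trivial {A B : 𝒞} (f : A ⟶ B) : Prop :=
  IsPullback (G.η.app A) f (G.I.map f) (G.η.app B)

/-- An extension is `Γ`-normal when it lies in `ℰ` and the first projection of its
kernel pair is `Γ`-trivial (in the presence of axiom (M) every morphism of `ℰ` is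
monadic, so this agrees with the usual definition of normal extension). -/
def Normal {A B : 𝒞} (f : A ⟶ B) : Prop :=
  G.E f ∧ ∀ {P : 𝒞} (p₁ p₂ : P ⟶ A), IsPullback p₁ p₂ f f → G.Trivial p₁

end GaloisStructure


namespace DGS

section Basic
variable {𝒟 : Type u} [Category.{v} 𝒟]

theorem mkPB {P X Y Z : 𝒟} {p₁ : P ⟶ X} {p₂ : P ⟶ Y} {f : X ⟶ Z} {g : Y ⟶ Z}
    (w : p₁ ≫ f = p₂ ≫ g)
    (ex : ∀ (T : 𝒟) (α : T ⟶ X) (β : T ⟶ Y), α ≫ f = β ≫ g →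
      ∃ l : T ⟶ P, l ≫ p₁ = α ∧ l ≫ p₂ = β)
    (un : ∀ (T : 𝒟) (l l' : T ⟶ P), l ≫ p₁ = l' ≫ p₁ → l ≫ p₂ = l' ≫ p₂ → l = l') :
    IsPullback p₁ p₂ f g := by
  refine ⟨⟨w⟩, ⟨PullbackCone.IsLimit.mk w (fun s => (ex _ s.fst s.snd s.condition).choose)
    (fun s => (ex _ s.fst s.snd s.condition).choose_spec.1)
    (fun s => (ex _ s.fst s.snd s.condition).choose_spec.2) ?_⟩⟩
  intro s m h1 h2
  have := (ex _ s.fst s.snd s.condition).choose_spec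
  exact un _ _ _ (h1.trans this.1.symm) (h2.trans this.2.symm)

theorem exLift {P X Y Z : 𝒟} {p₁ : P ⟶ X} {p₂ : P ⟶ Y} {f : X ⟶ Z} {g : Y ⟶ Z}
    (h : IsPullback p₁ p₂ f g) {T : 𝒟} (α : T ⟶ X) (β : T ⟶ Y) (w : α ≫ f = β ≫ g) :
    ∃ l : T ⟶ P, l ≫ p₁ = α ∧ l ≫ p₂ = β :=
  ⟨h.lift α β w, h.lift_fst _ _ _, h.lift_snd _ _ _⟩

/-- Comparing two pullbacks of the same cospan. -/
theorem pbIso {P P' X Y Z : 𝒟} {p₁ : P ⟶ X} {p₂ : P ⟶ Y} {f : X ⟶ Z} {g : Y ⟶ Z}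
    {p₁' : P' ⟶ X} {p₂' : P' ⟶ Y}
    (h : IsPullback p₁ p₂ f g) (h' : IsPullback p₁' p₂' f g) :
    ∃ e : P ≅ P', e.hom ≫ p₁' = p₁ ∧ e.hom ≫ p₂' = p₂ ∧ e.inv ≫ p₁ = p₁' ∧ e.inv ≫ p₂ = p₂' :=
  ⟨h.isoIsPullback _ _ h', by simp, by simp, by simp, by simp⟩

/-- Pullback from an isomorphism of the apex. -/
theorem pb_of_iso {P P' X Y Z : 𝒟} {p₁ : P ⟶ X} {p₂ : P ⟶ Y} {f : X ⟶ Z} {g : Y ⟶ Z}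
    {p₁' : P' ⟶ X} {p₂' : P' ⟶ Y}
    (h : IsPullback p₁ p₂ f g) (e : P' ⟶ P) [IsIso e] (h1 : e ≫ p₁ = p₁') (h2 : e ≫ p₂ = p₂') :
    IsPullback p₁' p₂' f g := by
  refine IsPullback.of_iso h (asIso e).symm (Iso.refl _) (Iso.refl _) (Iso.refl _) ?_ ?_ ?_ ?_ <;>
    simp [← h1, ← h2]

/-- Limits commute: if four objects `T i` are pullbacks of `M i → O i ← N i` naturally,
and the squares of `M, O, N` are pullbacks, then so is the square of the `T`'s. -/
theorem cube1 {Ta Tb Tc Td Ma Mb Mc Md Oa Ob Oc Od Na Nb Nc Nd : 𝒟}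
    {ma : Ta ⟶ Ma} {na : Ta ⟶ Na} {fa : Ma ⟶ Oa} {ga : Na ⟶ Oa}
    {mb : Tb ⟶ Mb} {nb : Tb ⟶ Nb} {fb : Mb ⟶ Ob} {gb : Nb ⟶ Ob}
    {mc : Tc ⟶ Mc} {nc : Tc ⟶ Nc} {fc : Mc ⟶ Oc} {gc : Nc ⟶ Oc}
    {md : Td ⟶ Md} {nd : Td ⟶ Nd} {fd : Md ⟶ Od} {gd : Nd ⟶ Od}
    (ha : IsPullback ma na fa ga) (hb : IsPullback mb nb fb gb)
    (hc : IsPullback mc nc fc gc) (hd : IsPullback md nd fd gd)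
    {Mk : Ma ⟶ Mb} {Ml : Ma ⟶ Md} {Mg : Mb ⟶ Mc} {Mh : Md ⟶ Mc} (hMsq : IsPullback Mk Ml Mg Mh)
    {Ok : Oa ⟶ Ob} {Ol : Oa ⟶ Od} {Og : Ob ⟶ Oc} {Oh : Od ⟶ Oc} (hO : IsPullback Ok Ol Og Oh)
    {Nk : Na ⟶ Nb} {Nl : Na ⟶ Nd} {Ng : Nb ⟶ Nc} {Nh : Nd ⟶ Nc} (hN : IsPullback Nk Nl Ng Nh)
    {Tk : Ta ⟶ Tb} {Tl : Ta ⟶ Td} {Tg : Tb ⟶ Tc} {Th : Td ⟶ Tc}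
    (mk : Tk ≫ mb = ma ≫ Mk) (ml : Tl ≫ md = ma ≫ Ml) (mg : Tg ≫ mc = mb ≫ Mg)
    (mh : Th ≫ mc = md ≫ Mh)
    (nk : Tk ≫ nb = na ≫ Nk) (nl : Tl ≫ nd = na ≫ Nl) (ng : Tg ≫ nc = nb ≫ Ng)
    (nh : Th ≫ nc = nd ≫ Nh)
    (fk : Mk ≫ fb = fa ≫ Ok) (fl : Ml ≫ fd = fa ≫ Ol)
    (gk : Nk ≫ gb = ga ≫ Ok) (gl : Nl ≫ gd = ga ≫ Ol) :
    IsPullback Tk Tl Tg Th := by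
  apply mkPB
  · apply hc.hom_ext
    · simp only [Category.assoc, mg, mh, reassoc_of% mk, reassoc_of% ml, hMsq.w]
    · simp only [Category.assoc, ng, nh, reassoc_of% nk, reassoc_of% nl, hN.w]
  · intro T α β w
    have w1 : α ≫ mb ≫ Mg = β ≫ md ≫ Mh := by rw [← mg, ← mh, reassoc_of% w]
    have w2 : α ≫ nb ≫ Ng = β ≫ nd ≫ Nh := by rw [← ng, ← nh, reassoc_of% w]
    obtain ⟨x, hx1, hx2⟩ := exLift hMsq (α ≫ mb) (β ≫ md) (by simpa using w1)
    obtain ⟨y, hy1, hy2⟩ := exLift hN (α ≫ nb) (β ≫ nd) (by simpa using w2)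
    obtain ⟨l, hl1, hl2⟩ := exLift ha x y (by
      apply hO.hom_ext
      · simp only [Category.assoc, ← fk, ← gk, reassoc_of% hx1, reassoc_of% hy1, hb.w]
      · simp only [Category.assoc, ← fl, ← gl, reassoc_of% hx2, reassoc_of% hy2, hd.w])
    refine ⟨l, ?_, ?_⟩
    · apply hb.hom_ext
      · rw [Category.assoc, mk, reassoc_of% hl1, hx1]
      · rw [Category.assoc, nk, reassoc_of% hl2, hy1]
    · apply hd.hom_ext
      · rw [Category.assoc, ml, reassoc_of% hl1, hx2]
      · rw [Category.assoc, nl, reassoc_of% hl2, hy2]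
  · intro T l l' h1 h2
    apply ha.hom_ext
    · apply hMsq.hom_ext
      · rw [Category.assoc, Category.assoc, ← mk, reassoc_of% h1]
      · rw [Category.assoc, Category.assoc, ← ml, reassoc_of% h2]
    · apply hN.hom_ext
      · rw [Category.assoc, Category.assoc, ← nk, reassoc_of% h1]
      · rw [Category.assoc, Category.assoc, ← nl, reassoc_of% h2]

/-- The other direction: if `T b, T c, T d` are pullbacks and all the squares are pullbacks,
then `T a` is a pullback. -/
theorem cube2 {Ta Tb Tc Td Ma Mb Mc Md Oa Ob Oc Od Na Nb Nc Nd : 𝒟}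
    {ma : Ta ⟶ Ma} {na : Ta ⟶ Na} {fa : Ma ⟶ Oa} {ga : Na ⟶ Oa}
    {mb : Tb ⟶ Mb} {nb : Tb ⟶ Nb} {fb : Mb ⟶ Ob} {gb : Nb ⟶ Ob}
    {mc : Tc ⟶ Mc} {nc : Tc ⟶ Nc} {fc : Mc ⟶ Oc} {gc : Nc ⟶ Oc}
    {md : Td ⟶ Md} {nd : Td ⟶ Nd} {fd : Md ⟶ Od} {gd : Nd ⟶ Od}
    (hb : IsPullback mb nb fb gb)
    (hc : IsPullback mc nc fc gc) (hd : IsPullback md nd fd gd)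
    {Mk : Ma ⟶ Mb} {Ml : Ma ⟶ Md} {Mg : Mb ⟶ Mc} {Mh : Md ⟶ Mc} (hMsq : IsPullback Mk Ml Mg Mh)
    {Ok : Oa ⟶ Ob} {Ol : Oa ⟶ Od} {Og : Ob ⟶ Oc} {Oh : Od ⟶ Oc} (hO : IsPullback Ok Ol Og Oh)
    {Nk : Na ⟶ Nb} {Nl : Na ⟶ Nd} {Ng : Nb ⟶ Nc} {Nh : Nd ⟶ Nc} (hN : IsPullback Nk Nl Ng Nh)
    {Tk : Ta ⟶ Tb} {Tl : Ta ⟶ Td} {Tg : Tb ⟶ Tc} {Th : Td ⟶ Tc} (hT : IsPullback Tk Tl Tg Th)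
    (mk : Tk ≫ mb = ma ≫ Mk) (ml : Tl ≫ md = ma ≫ Ml) (mg : Tg ≫ mc = mb ≫ Mg)
    (mh : Th ≫ mc = md ≫ Mh)
    (nk : Tk ≫ nb = na ≫ Nk) (nl : Tl ≫ nd = na ≫ Nl) (ng : Tg ≫ nc = nb ≫ Ng)
    (nh : Th ≫ nc = nd ≫ Nh)
    (fk : Mk ≫ fb = fa ≫ Ok) (fl : Ml ≫ fd = fa ≫ Ol)
    (gk : Nk ≫ gb = ga ≫ Ok) (gl : Nl ≫ gd = ga ≫ Ol) :
    IsPullback ma na fa ga := by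
  apply mkPB
  · apply hO.hom_ext
    · simp only [Category.assoc, ← fk, ← gk, ← reassoc_of% mk, ← reassoc_of% nk, hb.w]
    · simp only [Category.assoc, ← fl, ← gl, ← reassoc_of% ml, ← reassoc_of% nl, hd.w]
  · intro T α β w
    obtain ⟨x, hx1, hx2⟩ := exLift hb (α ≫ Mk) (β ≫ Nk) (by
      simp only [Category.assoc, fk, gk, reassoc_of% w])
    obtain ⟨y, hy1, hy2⟩ := exLift hd (α ≫ Ml) (β ≫ Nl) (by
      simp only [Category.assoc, fl, gl, reassoc_of% w])
    obtain ⟨l, hl1, hl2⟩ := exLift hT x y (by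
      apply hc.hom_ext
      · simp only [Category.assoc, mg, mh, reassoc_of% hx1, reassoc_of% hy1, hMsq.w]
      · simp only [Category.assoc, ng, nh, reassoc_of% hx2, reassoc_of% hy2, hN.w])
    refine ⟨l, ?_, ?_⟩
    · apply hMsq.hom_ext
      · rw [Category.assoc, ← mk, reassoc_of% hl1, hx1]
      · rw [Category.assoc, ← ml, reassoc_of% hl2, hy1]
    · apply hN.hom_ext
      · rw [Category.assoc, ← nk, reassoc_of% hl1, hx2]
      · rw [Category.assoc, ← nl, reassoc_of% hl2, hy2]
  · intro T l l' h1 h2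
    apply hT.hom_ext
    · apply hb.hom_ext
      · simp only [Category.assoc, mk, reassoc_of% h1]
      · simp only [Category.assoc, nk, reassoc_of% h2]
    · apply hd.hom_ext
      · simp only [Category.assoc, ml, reassoc_of% h1]
      · simp only [Category.assoc, nl, reassoc_of% h2]

variable {E : MorphismProperty 𝒟}

theorem pbE (e1 : AxE1 E) (e2 : AxE2 E) (e3 : AxE3 E) {P X Y Z : 𝒟} {p₁ : P ⟶ X} {p₂ : P ⟶ Y}
    {f : X ⟶ Z} {g : Y ⟶ Z} (h : IsPullback p₁ p₂ f g) (hg : E g) : E p₁ := by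
  obtain ⟨P', q₁, q₂, h', hq⟩ := e2 f g hg
  obtain ⟨e, h1, -⟩ := pbIso h h'
  rw [← h1]
  exact e3 _ _ (e1 _ inferInstance) hq

theorem pbE' (e1 : AxE1 E) (e2 : AxE2 E) (e3 : AxE3 E) {P X Y Z : 𝒟} {p₁ : P ⟶ X} {p₂ : P ⟶ Y}
    {f : X ⟶ Z} {g : Y ⟶ Z} (h : IsPullback p₁ p₂ f g) (hf : E f) : E p₂ :=
  pbE e1 e2 e3 h.flip hf

theorem splitE (e1 : AxE1 E) (e4 : AxE4 E) {X Y : 𝒟} {g : X ⟶ Y} (s : Y ⟶ X)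
    (h : s ≫ g = 𝟙 Y) : E g :=
  e4 s g (by rw [h]; exact e1 _ inferInstance)

/-- Elementary kernels. -/
def IsKer [HasZeroMorphisms 𝒟] {K A B : 𝒟} (k : K ⟶ A) (f : A ⟶ B) : Prop :=
  k ≫ f = 0 ∧ (∀ (T : 𝒟) (t : T ⟶ A), t ≫ f = 0 → ∃ l : T ⟶ K, l ≫ k = t) ∧ Mono k

variable [HasZeroMorphisms 𝒟]

theorem IsKer.lim {K A B : 𝒟} {k : K ⟶ A} {f : A ⟶ B} (h : IsKer k f) :
    Nonempty (IsLimit (KernelFork.ofι k h.1)) := by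
  have := h.2.2
  exact ⟨KernelFork.IsLimit.ofι k h.1 (fun t ht => (h.2.1 _ t ht).choose)
    (fun t ht => (h.2.1 _ t ht).choose_spec)
    (fun t ht m hm => by
      rw [← cancel_mono k, hm]; exact (h.2.1 _ t ht).choose_spec.symm)⟩

theorem IsKer.ofLim {K A B : 𝒟} {k : K ⟶ A} {f : A ⟶ B} (w : k ≫ f = 0)
    (h : Nonempty (IsLimit (KernelFork.ofι k w))) : IsKer k f := by
  obtain ⟨h⟩ := h
  refine ⟨w, fun T t ht => ?_, ?_⟩
  · obtain ⟨l, hl⟩ := KernelFork.IsLimit.lift' h t ht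
    exact ⟨l, hl⟩
  · exact ⟨fun a b hab => Fork.IsLimit.hom_ext h hab⟩

theorem isKer_iff_pb {Z K A B : 𝒟} (hZ : IsZero Z) (k : K ⟶ A) (f : A ⟶ B) :
    IsKer k f ↔ IsPullback k (0 : K ⟶ Z) f (0 : Z ⟶ B) := by
  constructor
  · rintro ⟨w, ex, hm⟩
    apply mkPB
    · simp [w]
    · intro T α β h
      obtain ⟨l, hl⟩ := ex T α (by simpa using h)
      exact ⟨l, hl, hZ.eq_of_tgt _ _⟩
    · intro T l l' h _
      exact (cancel_mono k).1 h
  · intro h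
    refine ⟨by simpa using h.w, fun T t ht => ?_, ⟨fun a b hab => ?_⟩⟩
    · obtain ⟨l, hl, -⟩ := exLift h t 0 (by simpa using ht)
      exact ⟨l, hl⟩
    · exact h.hom_ext hab (hZ.eq_of_tgt _ _)

theorem exKer [HasZeroObject 𝒟] (e2 : AxE2 E) {A B : 𝒟} (f : A ⟶ B) (hf : E f) :
    ∃ (K : 𝒟) (k : K ⟶ A), IsKer k f := by
  obtain ⟨Z, hZ⟩ := HasZeroObject.zero (C := 𝒟)
  obtain ⟨P, p₁, p₂, h, -⟩ := e2 (0 : Z ⟶ B) f hf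
  refine ⟨P, p₂, (isKer_iff_pb hZ _ _).2 ?_⟩
  have : p₁ = 0 := hZ.eq_of_tgt _ _
  subst this
  exact h.flip

theorem E5' (e5 : AxE5 E) {K L A₁ B A₀ : 𝒟} {ka : K ⟶ A₁} {kb : L ⟶ B} {a : A₁ ⟶ A₀} {b : B ⟶ A₀}
    {f : A₁ ⟶ B} {k : K ⟶ L} (h1 : f ≫ b = a) (h2 : k ≫ kb = ka ≫ f) (ha : IsKer ka a)
    (hb : IsKer kb b) (hE : E a) (hk : E k) : E f :=
  e5 ka kb a b f k h1 h2 ha.1 hb.1 ha.lim hb.lim hE hk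

end Basic
end DGS


namespace DGS
set_option linter.unusedSectionVars false

section ExtBasic
variable {𝒟 : Type u} [Category.{v} 𝒟] {E : MorphismProperty 𝒟}

@[simp] theorem ext_comp_top {a b c : ExtObj E} (φ : a ⟶ b) (ψ : b ⟶ c) :
    (φ ≫ ψ).top = φ.top ≫ ψ.top := rfl
@[simp] theorem ext_comp_bot {a b c : ExtObj E} (φ : a ⟶ b) (ψ : b ⟶ c) :
    (φ ≫ ψ).bot = φ.bot ≫ ψ.bot := rfl
@[simp] theorem ext_id_top (a : ExtObj E) : (𝟙 a : a ⟶ a).top = 𝟙 a.dom := rfl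
@[simp] theorem ext_id_bot (a : ExtObj E) : (𝟙 a : a ⟶ a).bot = 𝟙 a.cod := rfl

theorem ext_hom_ext {a b : ExtObj E} {φ ψ : a ⟶ b} (h1 : φ.top = ψ.top) (h2 : φ.bot = ψ.bot) :
    φ = ψ := ExtHom.ext h1 h2

theorem ext_w {a b : ExtObj E} (φ : a ⟶ b) : φ.top ≫ b.hom = a.hom ≫ φ.bot := ExtHom.w φ

theorem congr_top {a b : ExtObj E} {φ ψ : a ⟶ b} (h : φ = ψ) : φ.top = ψ.top := by rw [h]
theorem congr_bot {a b : ExtObj E} {φ ψ : a ⟶ b} (h : φ = ψ) : φ.bot = ψ.bot := by rw [h]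

/-- The functor taking domains. -/
def domF (E : MorphismProperty 𝒟) : ExtObj E ⥤ 𝒟 where
  obj a := a.dom
  map φ := φ.top
/-- The functor taking codomains. -/
def codF (E : MorphismProperty 𝒟) : ExtObj E ⥤ 𝒟 where
  obj a := a.cod
  map φ := φ.bot

theorem isIso_top {a b : ExtObj E} (φ : a ⟶ b) [IsIso φ] : IsIso φ.top :=
  inferInstanceAs (IsIso ((domF E).map φ))
theorem isIso_bot {a b : ExtObj E} (φ : a ⟶ b) [IsIso φ] : IsIso φ.bot :=
  inferInstanceAs (IsIso ((codF E).map φ))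

theorem ext_isIso {a b : ExtObj E} (φ : a ⟶ b) (h1 : IsIso φ.top) (h2 : IsIso φ.bot) :
    IsIso φ := by
  refine ⟨⟨⟨inv φ.top, inv φ.bot, ?_⟩, ?_, ?_⟩⟩
  · rw [IsIso.inv_comp_eq, ← Category.assoc, ext_w, Category.assoc, IsIso.hom_inv_id,
      Category.comp_id]
  · exact ext_hom_ext (IsIso.hom_inv_id φ.top) (IsIso.hom_inv_id φ.bot)
  · exact ext_hom_ext (IsIso.inv_hom_id φ.top) (IsIso.inv_hom_id φ.bot)

theorem ext_pb_of_comp {a b c d : ExtObj E} {k : a ⟶ b} {l : a ⟶ d} {g : b ⟶ c} {h : d ⟶ c}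
    (ht : IsPullback k.top l.top g.top h.top) (hb : IsPullback k.bot l.bot g.bot h.bot) :
    IsPullback k l g h := by
  apply mkPB
  · exact ext_hom_ext ht.w hb.w
  · intro T α β w
    obtain ⟨x, hx1, hx2⟩ := exLift ht α.top β.top (congr_top w)
    obtain ⟨y, hy1, hy2⟩ := exLift hb α.bot β.bot (congr_bot w)
    refine ⟨⟨x, y, ?_⟩, ext_hom_ext hx1 hy1, ext_hom_ext hx2 hy2⟩
    apply hb.hom_ext
    · rw [Category.assoc, Category.assoc, hy1, ← ext_w, ← ext_w, ← hx1, Category.assoc]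
    · rw [Category.assoc, Category.assoc, hy2, ← ext_w, ← ext_w, ← hx2, Category.assoc]
  · intro T m m' h1 h2
    exact ext_hom_ext (ht.hom_ext (congr_top h1) (congr_top h2))
      (hb.hom_ext (congr_bot h1) (congr_bot h2))

end ExtBasic

/-- The axioms (E1)-(E5). -/
structure Ax {𝒟 : Type u} [Category.{v} 𝒟] [HasZeroMorphisms 𝒟] (E : MorphismProperty 𝒟) :
    Prop where
  e1 : AxE1 E
  e2 : AxE2 E
  e3 : AxE3 E
  e4 : AxE4 E
  e5 : AxE5 E

section ExtAx
variable {𝒟 : Type u} [Category.{v} 𝒟] [HasZeroMorphisms 𝒟]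
  {E : MorphismProperty 𝒟}

theorem Ax.pb (H : Ax E) {P X Y Z : 𝒟} {p₁ : P ⟶ X} {p₂ : P ⟶ Y}
    {f : X ⟶ Z} {g : Y ⟶ Z} (h : IsPullback p₁ p₂ f g) (hg : E g) : E p₁ :=
  pbE H.e1 H.e2 H.e3 h hg
theorem Ax.pb' (H : Ax E) {P X Y Z : 𝒟} {p₁ : P ⟶ X} {p₂ : P ⟶ Y}
    {f : X ⟶ Z} {g : Y ⟶ Z} (h : IsPullback p₁ p₂ f g) (hf : E f) : E p₂ :=
  pbE' H.e1 H.e2 H.e3 h hf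
theorem Ax.split (H : Ax E) {X Y : 𝒟} {g : X ⟶ Y} (s : Y ⟶ X)
    (h : s ≫ g = 𝟙 Y) : E g := splitE H.e1 H.e4 s h
theorem Ax.ker [HasZeroObject 𝒟] (H : Ax E) {A B : 𝒟} {f : A ⟶ B} (hf : E f) :
    ∃ (K : 𝒟) (k : K ⟶ A), IsKer k f := exKer H.e2 f hf
theorem Ax.five (H : Ax E) {K L A₁ B A₀ : 𝒟} {ka : K ⟶ A₁} {kb : L ⟶ B} {a : A₁ ⟶ A₀}
    {b : B ⟶ A₀} {f : A₁ ⟶ B} {k : K ⟶ L} (h1 : f ≫ b = a) (h2 : k ≫ kb = ka ≫ f)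
    (ha : IsKer ka a) (hb : IsKer kb b) (hE : E a) (hk : E k) : E f :=
  E5' H.e5 h1 h2 ha hb hE hk

/-- Characterization of double extensions by kernels. -/
theorem double_iff (H : Ax E) {a b : ExtObj E} (φ : a ⟶ b) {K L : 𝒟} {ka : K ⟶ a.dom}
    {kb : L ⟶ b.dom} (hka : IsKer ka a.hom) (hkb : IsKer kb b.hom) (n : K ⟶ L)
    (hn : n ≫ kb = ka ≫ φ.top) : IsDoubleExt φ ↔ E φ.bot ∧ E n := by
  have key : ∀ {P : 𝒟} (p₁ : P ⟶ a.cod) (p₂ : P ⟶ b.dom), IsPullback p₁ p₂ φ.bot b.hom →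
      ∃ kp : L ⟶ P, kp ≫ p₂ = kb ∧ IsKer kp p₁ := by
    intro P p₁ p₂ h
    obtain ⟨kp, h1, h2⟩ := exLift h 0 kb (by simp [hkb.1])
    have := hkb.2.2
    have hm : Mono (kp ≫ p₂) := by rw [h2]; infer_instance
    refine ⟨kp, h2, h1, fun T t ht => ?_, mono_of_mono kp p₂⟩
    obtain ⟨l, hl⟩ := hkb.2.1 T (t ≫ p₂) (by rw [Category.assoc, ← h.w, reassoc_of% ht, zero_comp])
    refine ⟨l, h.hom_ext ?_ ?_⟩
    · rw [Category.assoc, h1, comp_zero, ht]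
    · rw [Category.assoc, h2, hl]
  constructor
  · rintro ⟨h1, h2, h3⟩
    refine ⟨h2, ?_⟩
    obtain ⟨P, p₁, p₂, hP, -⟩ := H.e2 φ.bot b.hom b.mem
    obtain ⟨kp, hk, hkp⟩ := key p₁ p₂ hP
    obtain ⟨l, hl1, hl2⟩ := exLift hP a.hom φ.top (ext_w φ).symm
    have hl := h3 p₁ p₂ hP l hl1 hl2
    have hpb : IsPullback n ka kp l := by
      apply mkPB
      · apply hP.hom_ext
        · rw [Category.assoc, Category.assoc, hkp.1, hl1, hka.1, comp_zero]
        · rw [Category.assoc, Category.assoc, hk, hl2, hn]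
      · intro T α β w
        obtain ⟨m, hm⟩ := hka.2.1 T β (by
          rw [← hl1, ← Category.assoc, ← w, Category.assoc, hkp.1, comp_zero])
        refine ⟨m, ?_, hm⟩
        have := hkb.2.2
        rw [← cancel_mono kb, Category.assoc, hn, reassoc_of% hm, ← hl2, ← Category.assoc, ← w,
          Category.assoc, hk]
      · intro T m m' _ h
        have := hka.2.2
        exact (cancel_mono ka).1 h
    exact H.pb hpb hl
  · rintro ⟨h1, h2⟩
    have h3 : ∀ {P : 𝒟} (p₁ : P ⟶ a.cod) (p₂ : P ⟶ b.dom), IsPullback p₁ p₂ φ.bot b.hom →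
        ∀ (l : a.dom ⟶ P), l ≫ p₁ = a.hom → l ≫ p₂ = φ.top → E l := by
      intro P p₁ p₂ hP l hl1 hl2
      obtain ⟨kp, hk, hkp⟩ := key p₁ p₂ hP
      refine H.five (k := n) hl1 ?_ hka hkp a.mem h2
      apply hP.hom_ext
      · rw [Category.assoc, Category.assoc, hkp.1, hl1, hka.1, comp_zero]
      · rw [Category.assoc, Category.assoc, hk, hl2, hn]
    refine ⟨?_, h1, h3⟩
    obtain ⟨P, p₁, p₂, hP, -⟩ := H.e2 φ.bot b.hom b.mem
    obtain ⟨l, hl1, hl2⟩ := exLift hP a.hom φ.top (ext_w φ).symm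
    rw [← hl2]
    exact H.e3 _ _ (h3 p₁ p₂ hP l hl1 hl2) (H.pb' hP h1)

theorem exKerMap {a b : ExtObj E} (φ : a ⟶ b) {K L : 𝒟} {ka : K ⟶ a.dom}
    {kb : L ⟶ b.dom} (hka : IsKer ka a.hom) (hkb : IsKer kb b.hom) :
    ∃ n : K ⟶ L, n ≫ kb = ka ≫ φ.top :=
  hkb.2.1 _ _ (by rw [Category.assoc, ext_w, reassoc_of% hka.1, zero_comp])

variable [HasZeroObject 𝒟]

theorem dbl_split (H : Ax E) {a b : ExtObj E} (φ : a ⟶ b) (s : b ⟶ a) (h : s ≫ φ = 𝟙 b) :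
    IsDoubleExt φ := by
  obtain ⟨K, ka, hka⟩ := H.ker a.mem
  obtain ⟨L, kb, hkb⟩ := H.ker b.mem
  obtain ⟨n, hn⟩ := exKerMap φ hka hkb
  obtain ⟨m, hm⟩ := exKerMap s hkb hka
  refine (double_iff H φ hka hkb n hn).2 ⟨H.split s.bot (congr_bot h), H.split m ?_⟩
  have := hkb.2.2
  have ht : s.top ≫ φ.top = 𝟙 _ := congr_top h
  rw [← cancel_mono kb, Category.assoc, hn, reassoc_of% hm, ht, Category.comp_id, Category.id_comp]

theorem dbl_e1 (H : Ax E) : AxE1 (DoubleExtClass E) := fun φ _ =>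
  dbl_split H φ (inv φ) (by simp)

theorem dbl_e3 (H : Ax E) : AxE3 (DoubleExtClass E) := by
  intro a b c φ ψ hφ hψ
  obtain ⟨K, ka, hka⟩ := H.ker a.mem
  obtain ⟨L, kb, hkb⟩ := H.ker b.mem
  obtain ⟨M, kc, hkc⟩ := H.ker c.mem
  obtain ⟨n, hn⟩ := exKerMap φ hka hkb
  obtain ⟨m, hm⟩ := exKerMap ψ hkb hkc
  have h1 := (double_iff H φ hka hkb n hn).1 hφ
  have h2 := (double_iff H ψ hkb hkc m hm).1 hψ
  exact (double_iff H (φ ≫ ψ) hka hkc (n ≫ m) (by simp [hm, reassoc_of% hn])).2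
    ⟨H.e3 _ _ h1.1 h2.1, H.e3 _ _ h1.2 h2.2⟩

theorem dbl_e4 (H : Ax E) : AxE4 (DoubleExtClass E) := by
  intro a b c φ ψ hψ
  obtain ⟨K, ka, hka⟩ := H.ker a.mem
  obtain ⟨L, kb, hkb⟩ := H.ker b.mem
  obtain ⟨M, kc, hkc⟩ := H.ker c.mem
  obtain ⟨n, hn⟩ := exKerMap φ hka hkb
  obtain ⟨m, hm⟩ := exKerMap ψ hkb hkc
  have h2 := (double_iff H (φ ≫ ψ) hka hkc (n ≫ m) (by simp [hm, reassoc_of% hn])).1 hψ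
  exact (double_iff H ψ hkb hkc m hm).2 ⟨H.e4 _ _ h2.1, H.e4 _ _ h2.2⟩

/-- The object induced on pullbacks of a double extension is an extension. -/
theorem pb_mem (H : Ax E) {x y c : ExtObj E} (ψ : x ⟶ c) (φ : y ⟶ c) (hφ : IsDoubleExt φ)
    {P₁ P₀ : 𝒟} {p₁ : P₁ ⟶ x.dom} {p₂ : P₁ ⟶ y.dom} {r₁ : P₀ ⟶ x.cod} {r₂ : P₀ ⟶ y.cod}
    (hP : IsPullback p₁ p₂ ψ.top φ.top) (hR : IsPullback r₁ r₂ ψ.bot φ.bot)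
    (p : P₁ ⟶ P₀) (h1 : p ≫ r₁ = p₁ ≫ x.hom) (h2 : p ≫ r₂ = p₂ ≫ y.hom) : E p := by
  -- pullback of the comparison
  obtain ⟨Q, q₁, q₂, hQ, -⟩ := H.e2 φ.bot c.hom c.mem
  obtain ⟨l, hl1, hl2⟩ := exLift hQ y.hom φ.top (ext_w φ).symm
  have hl := hφ.2.2 q₁ q₂ hQ l hl1 hl2
  have hr₁ : E r₁ := H.pb hR hφ.2.1
  obtain ⟨S, s₁, s₂, hS, hs₁⟩ := H.e2 x.hom r₁ hr₁
  -- `S = x.dom ×_{x.cod} P₀`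
  have hs₂ : E s₂ := H.pb' hS x.mem
  obtain ⟨m, hm1, hm2⟩ := exLift hS p₁ p h1.symm
  obtain ⟨t, ht1, ht2⟩ := exLift hQ (s₂ ≫ r₂) (s₁ ≫ ψ.top) (by
    rw [Category.assoc, ← hR.w, ← reassoc_of% hS.w, Category.assoc, ext_w])
  have hpb : IsPullback m p₂ t l := by
    apply mkPB
    · apply hQ.hom_ext
      · simp only [Category.assoc, ht1, hl1, reassoc_of% hm2, h2]
      · simp only [Category.assoc, ht2, hl2, reassoc_of% hm1, hP.w]
    · intro T α β w
      have w1 : α ≫ s₂ ≫ r₂ = β ≫ y.hom := by rw [← ht1, ← hl1, reassoc_of% w]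
      have w2 : α ≫ s₁ ≫ ψ.top = β ≫ φ.top := by rw [← ht2, ← hl2, reassoc_of% w]
      obtain ⟨z, hz1, hz2⟩ := exLift hP (α ≫ s₁) β (by simpa using w2)
      refine ⟨z, ?_, hz2⟩
      apply hS.hom_ext
      · rw [Category.assoc, hm1, hz1]
      · rw [Category.assoc, hm2]
        apply hR.hom_ext
        · rw [Category.assoc, h1, reassoc_of% hz1, Category.assoc, hS.w]
        · rw [Category.assoc, h2, reassoc_of% hz2, ← w1, Category.assoc]
    · intro T z z' hz hz'
      apply hP.hom_ext _ hz'
      rw [← hm1, reassoc_of% hz]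
  rw [← hm2]
  exact H.e3 _ _ (H.pb hpb hl) hs₂

theorem dbl_pb (H : Ax E) {x y c : ExtObj E} (ψ : x ⟶ c) (φ : y ⟶ c) (hφ : IsDoubleExt φ) :
    ∃ (P : ExtObj E) (p₁ : P ⟶ x) (p₂ : P ⟶ y), IsPullback p₁.top p₂.top ψ.top φ.top ∧
      IsPullback p₁.bot p₂.bot ψ.bot φ.bot := by
  obtain ⟨P₁, p₁, p₂, hP, -⟩ := H.e2 ψ.top φ.top hφ.1
  obtain ⟨P₀, r₁, r₂, hR, -⟩ := H.e2 ψ.bot φ.bot hφ.2.1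
  obtain ⟨p, h1, h2⟩ := exLift hR (p₁ ≫ x.hom) (p₂ ≫ y.hom) (by
    rw [Category.assoc, Category.assoc, ← ext_w, ← ext_w, reassoc_of% hP.w])
  exact ⟨⟨P₁, P₀, p, pb_mem H ψ φ hφ hP hR p h1 h2⟩, ⟨p₁, r₁, h1.symm⟩, ⟨p₂, r₂, h2.symm⟩, hP, hR⟩

/-- Pullbacks of double extensions are componentwise. -/
theorem comp_of_ext_pb (H : Ax E) {a x y c : ExtObj E} {p₁ : a ⟶ x} {p₂ : a ⟶ y} {ψ : x ⟶ c}
    {φ : y ⟶ c} (h : IsPullback p₁ p₂ ψ φ) (hφ : IsDoubleExt φ) :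
    IsPullback p₁.top p₂.top ψ.top φ.top ∧ IsPullback p₁.bot p₂.bot ψ.bot φ.bot := by
  obtain ⟨P, q₁, q₂, h1, h2⟩ := dbl_pb H ψ φ hφ
  obtain ⟨e, he1, he2, -⟩ := pbIso h (ext_pb_of_comp h1 h2)
  have := isIso_top e.hom
  have := isIso_bot e.hom
  exact ⟨pb_of_iso h1 e.hom.top (congr_top he1) (congr_top he2),
    pb_of_iso h2 e.hom.bot (congr_bot he1) (congr_bot he2)⟩

theorem comp_of_ext_pb' (H : Ax E) {a x y c : ExtObj E} {p₁ : a ⟶ x} {p₂ : a ⟶ y} {ψ : x ⟶ c}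
    {φ : y ⟶ c} (h : IsPullback p₁ p₂ ψ φ) (hφ : IsDoubleExt ψ) :
    IsPullback p₁.top p₂.top ψ.top φ.top ∧ IsPullback p₁.bot p₂.bot ψ.bot φ.bot := by
  obtain ⟨h1, h2⟩ := comp_of_ext_pb H h.flip hφ
  exact ⟨h1.flip, h2.flip⟩

theorem dbl_e2 (H : Ax E) : AxE2 (DoubleExtClass E) := by
  intro x y c ψ φ hφ
  obtain ⟨P, p₁, p₂, h1, h2⟩ := dbl_pb H ψ φ hφ
  refine ⟨P, p₁, p₂, ext_pb_of_comp h1 h2, ?_⟩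
  obtain ⟨K, kP, hkP⟩ := H.ker P.mem
  obtain ⟨L, kx, hkx⟩ := H.ker x.mem
  obtain ⟨M, ky, hky⟩ := H.ker y.mem
  obtain ⟨N, kc, hkc⟩ := H.ker c.mem
  obtain ⟨n₁, hn₁⟩ := exKerMap p₁ hkP hkx
  obtain ⟨n₂, hn₂⟩ := exKerMap p₂ hkP hky
  obtain ⟨m₁, hm₁⟩ := exKerMap ψ hkx hkc
  obtain ⟨m₂, hm₂⟩ := exKerMap φ hky hkc
  have hφ' := (double_iff H φ hky hkc m₂ hm₂).1 hφ
  have := hkP.2.2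
  have := hkx.2.2
  have := hky.2.2
  have := hkc.2.2
  refine (double_iff H p₁ hkP hkx n₁ hn₁).2 ⟨H.pb h2 hφ'.1, ?_⟩
  refine H.pb (p₂ := n₂) (f := m₁) (g := m₂) ?_ hφ'.2
  apply mkPB
  · rw [← cancel_mono kc]
    simp only [Category.assoc, hm₁, hm₂, reassoc_of% hn₁, reassoc_of% hn₂, h1.w]
  · intro T α β w
    obtain ⟨z, hz1, hz2⟩ := exLift h1 (α ≫ kx) (β ≫ ky) (by
      rw [Category.assoc, Category.assoc, ← hm₁, ← hm₂, reassoc_of% w])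
    obtain ⟨z', hz'⟩ := hkP.2.1 _ z (by
      apply h2.hom_ext
      · rw [Category.assoc, ← ext_w, reassoc_of% hz1, hkx.1, comp_zero, zero_comp]
      · rw [Category.assoc, ← ext_w, reassoc_of% hz2, hky.1, comp_zero, zero_comp])
    refine ⟨z', ?_, ?_⟩
    · rw [← cancel_mono kx, Category.assoc, hn₁, reassoc_of% hz', hz1]
    · rw [← cancel_mono ky, Category.assoc, hn₂, reassoc_of% hz', hz2]
  · intro T z z' hz hz'
    rw [← cancel_mono kP]
    apply h1.hom_ext
    · rw [Category.assoc, Category.assoc, ← hn₁, reassoc_of% hz]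
    · rw [Category.assoc, Category.assoc, ← hn₂, reassoc_of% hz']

theorem ext_zero_top (a b : ExtObj E) : (0 : a ⟶ b).top = 0 := rfl
theorem ext_zero_bot (a b : ExtObj E) : (0 : a ⟶ b).bot = 0 := rfl

theorem ext_isZero (H : Ax E) {Z : 𝒟} (hZ : IsZero Z) :
    IsZero (⟨Z, Z, 𝟙 Z, H.e1 _ inferInstance⟩ : ExtObj E) := by
  rw [IsZero.iff_id_eq_zero]
  exact ext_hom_ext (hZ.eq_of_src _ _) (hZ.eq_of_src _ _)

theorem ext_hasZero (H : Ax E) : HasZeroObject (ExtObj E) := by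
  obtain ⟨Z, hZ⟩ := HasZeroObject.zero (C := 𝒟)
  exact ⟨_, ext_isZero H hZ⟩

theorem comp_of_ext_ker (H : Ax E) {K A B : ExtObj E} {k : K ⟶ A} {f : A ⟶ B} (h : IsKer k f)
    (hf : IsDoubleExt f) : IsKer k.top f.top ∧ IsKer k.bot f.bot := by
  obtain ⟨Z, hZ⟩ := HasZeroObject.zero (C := 𝒟)
  have := comp_of_ext_pb' H ((isKer_iff_pb (ext_isZero H hZ) k f).1 h) hf
  exact ⟨(isKer_iff_pb hZ _ _).2 this.1, (isKer_iff_pb hZ _ _).2 this.2⟩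

theorem ker3 {K A B : ExtObj E} {k : K ⟶ A} {f : A ⟶ B} (h1 : IsKer k.top f.top)
    (h0 : IsKer k.bot f.bot) {NK NA NB : 𝒟} {iK : NK ⟶ K.dom} {iA : NA ⟶ A.dom}
    {iB : NB ⟶ B.dom} (hK : IsKer iK K.hom) (hA : IsKer iA A.hom) (hB : IsKer iB B.hom)
    {nk : NK ⟶ NA} {nf : NA ⟶ NB} (hnk : nk ≫ iA = iK ≫ k.top) (hnf : nf ≫ iB = iA ≫ f.top) :
    IsKer nk nf := by
  have := h1.2.2
  have := h0.2.2
  have := hK.2.2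
  have := hA.2.2
  have := hB.2.2
  refine ⟨?_, ?_, ?_⟩
  · rw [← cancel_mono iB, Category.assoc, hnf, reassoc_of% hnk, h1.1, comp_zero, zero_comp]
  · intro T t ht
    obtain ⟨l, hl⟩ := h1.2.1 T (t ≫ iA) (by
      rw [Category.assoc, ← hnf, reassoc_of% ht, zero_comp])
    obtain ⟨l', hl'⟩ := hK.2.1 T l (by
      rw [← cancel_mono k.bot, Category.assoc, ← ext_w, reassoc_of% hl, hA.1, comp_zero,
        zero_comp])
    refine ⟨l', ?_⟩
    rw [← cancel_mono iA, Category.assoc, hnk, reassoc_of% hl', hl]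
  · have : Mono (nk ≫ iA) := by rw [hnk]; infer_instance
    exact mono_of_mono nk iA

theorem dbl_e5 (H : Ax E) : AxE5 (DoubleExtClass E) := by
  intro K L A B C ka kb a b f k hf hk wa wb la lb ha hkE
  have hb : IsDoubleExt b := dbl_e4 H f b (by rw [hf]; exact ha)
  obtain ⟨ka1, ka0⟩ := comp_of_ext_ker H (IsKer.ofLim wa la) ha
  obtain ⟨kb1, kb0⟩ := comp_of_ext_ker H (IsKer.ofLim wb lb) hb
  obtain ⟨NK, iK, hK⟩ := H.ker K.mem
  obtain ⟨NL, iL, hL⟩ := H.ker L.mem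
  obtain ⟨NA, iA, hA⟩ := H.ker A.mem
  obtain ⟨NB, iB, hB⟩ := H.ker B.mem
  obtain ⟨NC, iC, hC⟩ := H.ker C.mem
  obtain ⟨nka, hnka⟩ := exKerMap ka hK hA
  obtain ⟨nkb, hnkb⟩ := exKerMap kb hL hB
  obtain ⟨na, hna⟩ := exKerMap a hA hC
  obtain ⟨nb, hnb⟩ := exKerMap b hB hC
  obtain ⟨nf, hnf⟩ := exKerMap f hA hB
  obtain ⟨nk, hnk⟩ := exKerMap k hK hL
  have ha' := (double_iff H a hA hC na hna).1 ha
  have hk' := (double_iff H k hK hL nk hnk).1 hkE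
  have hfb := congr_bot hf
  have hft := congr_top hf
  have hkb := congr_bot hk
  have hkt := congr_top hk
  simp only [ext_comp_bot, ext_comp_top] at hfb hft hkb hkt
  have := hB.2.2
  have := hC.2.2
  refine (double_iff H f hA hB nf hnf).2 ⟨?_, ?_⟩
  · exact H.five hfb hkb ka0 kb0 ha'.1 hk'.1
  · refine H.five (k := nk) (b := nb) (a := na) ?_ ?_ (ker3 ka1 ka0 hK hA hC hnka hna)
      (ker3 kb1 kb0 hL hB hC hnkb hnb) ha'.2 hk'.2
    · rw [← cancel_mono iC, Category.assoc, hnb, reassoc_of% hnf, hft, hna]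
    · rw [← cancel_mono iB, Category.assoc, Category.assoc, hnkb, hnf, reassoc_of% hnk,
        reassoc_of% hnka, hkt]

theorem dbl_ax (H : Ax E) : Ax (DoubleExtClass E) :=
  ⟨dbl_e1 H, dbl_e2 H, dbl_e3 H, dbl_e4 H, dbl_e5 H⟩

theorem ext_protomodular (H : Ax E) (hpm : ProtomodularCat 𝒟) : ProtomodularCat (ExtObj E) := by
  constructor
  · intro X Y Z g s hs h
    obtain ⟨P, p₁, p₂, hP, -⟩ := dbl_e2 H h g (dbl_split H g s hs)
    exact ⟨P, p₂, p₁, hP.flip⟩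
  · intro K A B K' A' B' k f s k' f' s' u v w hs hs' hk hk' lk lk' h1 h2 hu hw
    obtain ⟨k1, k0⟩ := comp_of_ext_ker H (IsKer.ofLim hk lk) (dbl_split H f s hs)
    obtain ⟨k1', k0'⟩ := comp_of_ext_ker H (IsKer.ofLim hk' lk') (dbl_split H f' s' hs')
    apply ext_isIso
    · exact hpm.2 k.top f.top s.top k'.top f'.top s'.top u.top v.top w.top (congr_top hs)
        (congr_top hs') k1.1 k1'.1 k1.lim k1'.lim (congr_top h1) (congr_top h2) (isIso_top u)
        (isIso_top w)
    · exact hpm.2 k.bot f.bot s.bot k'.bot f'.bot s'.bot u.bot v.bot w.bot (congr_bot hs)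
        (congr_bot hs') k0.1 k0'.1 k0.lim k0'.lim (congr_bot h1) (congr_bot h2) (isIso_bot u)
        (isIso_bot w)

end ExtAx
end DGS

namespace DGS
set_option linter.unusedSectionVars false

section Mon
variable {𝒳 : Type*} {𝒴 : Type*} [Category.{v} 𝒳] [Category.{v} 𝒴] (R : 𝒳 ⥤ 𝒴)

theorem mon_faithful (h : MonadicRightAdjoint R) : R.Faithful :=
  Functor.Faithful.of_iso (Monad.comparisonForget (monadicAdjunction R))

theorem mon_reflects (h : MonadicRightAdjoint R) : R.ReflectsIsomorphisms :=
  reflectsIsomorphisms_of_iso (Monad.comparisonForget (monadicAdjunction R))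

theorem mon_coeq (h : MonadicRightAdjoint R) {A B : 𝒳} (f g : A ⟶ B) {W : 𝒴} (π : R.obj B ⟶ W)
    (hs : IsSplitCoequalizer (R.map f) (R.map g) π) :
    ∃ (Z : 𝒳) (q : B ⟶ Z) (θ : R.obj Z ≅ W), f ≫ q = g ≫ q ∧
      (∀ (T : 𝒳) (r : B ⟶ T), f ≫ r = g ≫ r → ∃ m : Z ⟶ T, q ≫ m = r) ∧
      R.map q ≫ θ.hom = π := by
  haveI : R.IsSplitPair f g := ⟨⟨W, π, ⟨hs⟩⟩⟩
  letI := Monad.createsGSplitCoequalizersOfMonadic R f g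
  haveI h1 : HasColimit (parallelPair f g ⋙ R) := by
    rw [hasColimit_iff_of_iso (diagramIsoParallelPair.{v} _)]
    exact inferInstanceAs <| HasCoequalizer (R.map f) (R.map g)
  haveI : HasCoequalizer f g := hasColimit_of_created _ R
  have hc := isColimitOfHasCoequalizerOfPreservesColimit R f g
  refine ⟨coequalizer f g, coequalizer.π f g,
    IsColimit.coconePointUniqueUpToIso hc hs.isCoequalizer, coequalizer.condition f g, ?_, ?_⟩
  · intro T r hr
    exact ⟨coequalizer.desc r hr, coequalizer.π_desc _ _⟩
  · exact IsColimit.comp_coconePointUniqueUpToIso_hom hc hs.isCoequalizer WalkingParallelPair.one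

end Mon

section Desc
variable {𝒟 : Type u} [Category.{v} 𝒟]

/-- The slice projection. -/
def slF (E : MorphismProperty 𝒟) (B : 𝒟) : ESliceObj E B ⥤ 𝒟 where
  obj a := a.dom
  map φ := φ.top

structure Desc (E : MorphismProperty 𝒟) : Prop where
  esd : ∀ {A B X Y X' Y' W : 𝒟} {f : A ⟶ B} {x : X ⟶ B} {y : Y ⟶ B} {u v : X ⟶ Y}
    {xt : X' ⟶ X} {xa : X' ⟶ A} {yt : Y' ⟶ Y} {ya : Y' ⟶ A} {u' v' : X' ⟶ Y'} {w : W ⟶ A}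
    {π : Y' ⟶ W} {s : W ⟶ Y'} {t : Y' ⟶ X'},
    E f → E x → E y → E w → u ≫ y = x → v ≫ y = x → IsPullback xt xa x f → IsPullback yt ya y f →
    u' ≫ yt = xt ≫ u → u' ≫ ya = xa → v' ≫ yt = xt ≫ v → v' ≫ ya = xa →
    π ≫ w = ya → s ≫ ya = w → t ≫ xa = ya → s ≫ π = 𝟙 _ → t ≫ u' = 𝟙 _ → t ≫ v' = π ≫ s →
    u' ≫ π = v' ≫ π →
    ∃ (Z : 𝒟) (z : Z ⟶ B) (q : Y ⟶ Z) (wq : W ⟶ Z), E z ∧ E q ∧ q ≫ z = y ∧ u ≫ q = v ≫ q ∧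
      IsPullback wq w z f ∧ yt ≫ q = π ≫ wq ∧
      ∀ {T : 𝒟} (τ : T ⟶ B) (r : Y ⟶ T), E τ → r ≫ τ = y → u ≫ r = v ≫ r → ∃ m : Z ⟶ T, q ≫ m = r
  cons : ∀ {A B X Y X' : 𝒟} {f : A ⟶ B} {x : X ⟶ B} {y : Y ⟶ B} {u : X ⟶ Y}
    {xt : X' ⟶ X} {xa : X' ⟶ A}, E f → E x → E y → u ≫ y = x → IsPullback xt xa x f →
    IsPullback (xt ≫ u) xa y f → IsIso u
  epi : ∀ {A B : 𝒟} {f : A ⟶ B}, E f → Epi f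

variable {E : MorphismProperty 𝒟}

theorem sl_hom_ext {B : 𝒟} {x y : ESliceObj E B} {φ ψ : x ⟶ y} (h : φ.top = ψ.top) : φ = ψ :=
  ESliceHom.ext h
theorem sl_comp {B : 𝒟} {x y z : ESliceObj E B} (φ : x ⟶ y) (ψ : y ⟶ z) :
  (φ ≫ ψ).top = φ.top ≫ ψ.top := rfl
theorem sl_id {B : 𝒟} (x : ESliceObj E B) : (𝟙 x : x ⟶ x).top = 𝟙 x.dom := rfl
theorem sl_w {B : 𝒟} {x y : ESliceObj E B} (φ : x ⟶ y) : φ.top ≫ y.hom = x.hom := ESliceHom.w φ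
theorem sl_congr {B : 𝒟} {x y : ESliceObj E B} {φ ψ : x ⟶ y} (h : φ = ψ) : φ.top = ψ.top := by
  rw [h]
theorem sl_isIso {B : 𝒟} {x y : ESliceObj E B} (φ : x ⟶ y) [IsIso φ] : IsIso φ.top :=
  inferInstanceAs (IsIso ((slF E B).map φ))
theorem sl_isIso' {B : 𝒟} {x y : ESliceObj E B} (φ : x ⟶ y) (h : IsIso φ.top) : IsIso φ := by
  refine ⟨⟨⟨inv φ.top, ?_⟩, ?_, ?_⟩⟩
  · rw [IsIso.inv_comp_eq, sl_w]
  · exact sl_hom_ext (IsIso.hom_inv_id φ.top)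
  · exact sl_hom_ext (IsIso.inv_hom_id φ.top)

theorem exPF (e1 : AxE1 E) (e2 : AxE2 E) (e3 : AxE3 E) {A B : 𝒟} (f : A ⟶ B) :
    Nonempty (PullbackFunctorAlong E f) := by
  have : ∀ g : ESliceObj E B, ∃ (r : ESliceObj E A) (t : r.dom ⟶ g.dom),
      IsPullback t r.hom g.hom f := by
    intro g
    obtain ⟨P, p₁, p₂, h, hE⟩ := e2 f g.hom g.mem
    exact ⟨⟨P, p₁, hE⟩, p₂, h.flip⟩
  choose r t h using this
  refine ⟨⟨{ obj := r
             map := fun {x y} φ => ⟨(h y).lift (t x ≫ φ.top) (r x).hom (by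
              rw [Category.assoc, sl_w, (h x).w]), (h y).lift_snd _ _ _⟩
             map_id := fun x => sl_hom_ext ?_
             map_comp := fun {x y z} φ ψ => sl_hom_ext ?_ }, t, h, ?_⟩⟩
  · apply (h x).hom_ext
    · simp [sl_id]
    · simp [sl_id]
  · apply (h z).hom_ext
    · simp [sl_comp]
    · simp [sl_comp]
  · intro x y φ
    exact (h y).lift_fst _ _ _

theorem desc_of_M [HasZeroMorphisms 𝒟] [HasZeroObject 𝒟] (H : Ax E) (hM : AxM E) : Desc E where
  esd := by
    intro A B X Y X' Y' W f x y u v xt xa yt ya u' v' w π s t hf hx hy hw hu hv hX hY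
      hu1 hu2 hv1 hv2 hπ hs ht sπ tu tv uv
    obtain ⟨P⟩ := exPF H.e1 H.e2 H.e3 f
    obtain ⟨hm⟩ := hM f hf P
    let Xo : ESliceObj E B := ⟨X, x, hx⟩
    let Yo : ESliceObj E B := ⟨Y, y, hy⟩
    let Wo : ESliceObj E A := ⟨W, w, hw⟩
    let us : Xo ⟶ Yo := ⟨u, hu⟩
    let vs : Xo ⟶ Yo := ⟨v, hv⟩
    obtain ⟨eX, eX1, eX2, eX3, eX4⟩ := pbIso (P.isPB Xo) hX
    obtain ⟨eY, eY1, eY2, eY3, eY4⟩ := pbIso (P.isPB Yo) hY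
    have ku : (P.R.map us).top ≫ eY.hom = eX.hom ≫ u' := by
      apply hY.hom_ext
      · rw [Category.assoc, Category.assoc, eY1, hu1, reassoc_of% eX1, P.nat]
      · rw [Category.assoc, Category.assoc, eY2, hu2, eX2, sl_w]
    have kv : (P.R.map vs).top ≫ eY.hom = eX.hom ≫ v' := by
      apply hY.hom_ext
      · rw [Category.assoc, Category.assoc, eY1, hv1, reassoc_of% eX1, P.nat]
      · rw [Category.assoc, Category.assoc, eY2, hv2, eX2, sl_w]
    let πs : P.R.obj Yo ⟶ Wo := ⟨eY.hom ≫ π, by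
      show (eY.hom ≫ π) ≫ w = _
      rw [Category.assoc, hπ, eY2]⟩
    have hsc : IsSplitCoequalizer (P.R.map vs) (P.R.map us) πs :=
      { rightSection := ⟨s ≫ eY.inv, by rw [Category.assoc, eY4, hs]⟩
        leftSection := ⟨eY.hom ≫ t ≫ eX.inv, by
          rw [Category.assoc, Category.assoc, eX4, ht, eY2]⟩
        condition := sl_hom_ext (by
          show (P.R.map vs).top ≫ eY.hom ≫ π = (P.R.map us).top ≫ eY.hom ≫ π
          rw [reassoc_of% kv, reassoc_of% ku, uv])
        rightSection_π := sl_hom_ext (by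
          show (s ≫ eY.inv) ≫ eY.hom ≫ π = 𝟙 _
          simpa using sπ)
        leftSection_bottom := sl_hom_ext (by
          show (eY.hom ≫ t ≫ eX.inv) ≫ (P.R.map us).top = 𝟙 _
          rw [← cancel_mono eY.hom]
          simp [ku, tu])
        leftSection_top := sl_hom_ext (by
          show (eY.hom ≫ t ≫ eX.inv) ≫ (P.R.map vs).top = (eY.hom ≫ π) ≫ s ≫ eY.inv
          rw [← cancel_mono eY.hom]
          simp [kv, tv]) }
    obtain ⟨Z, q, θ, h1, h2, h3⟩ := mon_coeq P.R hm vs us πs hsc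
    have h3' : (P.R.map q).top ≫ θ.hom.top = eY.hom ≫ π := sl_congr h3
    have hθ := sl_isIso θ.inv
    have hθ1 : θ.hom.top ≫ θ.inv.top = 𝟙 _ := sl_congr θ.hom_inv_id
    have hq : yt ≫ q.top = π ≫ θ.inv.top ≫ P.top Z := by
      rw [← cancel_epi eY.hom, reassoc_of% eY1, ← reassoc_of% h3', reassoc_of% hθ1, P.nat]
    have hpb : IsPullback (θ.inv.top ≫ P.top Z) w Z.hom f :=
      pb_of_iso (P.isPB Z) θ.inv.top rfl (sl_w θ.inv)
    refine ⟨Z.dom, Z.hom, q.top, θ.inv.top ≫ P.top Z, Z.mem, ?_, sl_w q, (sl_congr h1).symm, hpb,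
      hq, ?_⟩
    · apply H.e4 yt
      rw [hq]
      exact H.e3 _ _ (H.split s sπ) (H.pb hpb hf)
    · intro T τ r hτ hr hur
      obtain ⟨m, hm⟩ := h2 ⟨T, τ, hτ⟩ ⟨r, hr⟩ (sl_hom_ext hur.symm)
      exact ⟨m.top, sl_congr hm⟩
  cons := by
    intro A B X Y X' f x y u xt xa hf hx hy hu hX hY
    obtain ⟨P⟩ := exPF H.e1 H.e2 H.e3 f
    obtain ⟨hm⟩ := hM f hf P
    let Xo : ESliceObj E B := ⟨X, x, hx⟩
    let Yo : ESliceObj E B := ⟨Y, y, hy⟩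
    let us : Xo ⟶ Yo := ⟨u, hu⟩
    obtain ⟨eX, eX1, eX2, eX3, eX4⟩ := pbIso (P.isPB Xo) hX
    obtain ⟨eY, eY1, eY2, eY3, eY4⟩ := pbIso (P.isPB Yo) hY
    have ku : (P.R.map us).top = eX.hom ≫ eY.inv := by
      apply (P.isPB Yo).hom_ext
      · rw [Category.assoc, eY3, reassoc_of% eX1, P.nat]
      · rw [Category.assoc, eY4, eX2, sl_w]
    have i1 : IsIso (P.R.map us) := sl_isIso' _ (by rw [ku]; infer_instance)
    have := mon_reflects _ hm
    have : IsIso us := isIso_of_reflects_iso us P.R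
    exact sl_isIso us
  epi := by
    intro A B f hf
    refine ⟨fun {C} u v huv => ?_⟩
    obtain ⟨P⟩ := exPF H.e1 H.e2 H.e3 f
    obtain ⟨hm⟩ := hM f hf P
    obtain ⟨O, hO⟩ := HasZeroObject.zero (C := 𝒟)
    obtain ⟨Q, q₁, q₂, hQ, hq⟩ := H.e2 (0 : B ⟶ O) (0 : C ⟶ O) (H.split 0 (hO.eq_of_src _ _))
    obtain ⟨su, hu1, hu2⟩ := exLift hQ (𝟙 B) u (hO.eq_of_tgt _ _)
    obtain ⟨sv, hv1, hv2⟩ := exLift hQ (𝟙 B) v (hO.eq_of_tgt _ _)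
    let Bo : ESliceObj E B := ⟨B, 𝟙 B, H.e1 _ inferInstance⟩
    let Qo : ESliceObj E B := ⟨Q, q₁, hq⟩
    let us : Bo ⟶ Qo := ⟨su, hu1⟩
    let vs : Bo ⟶ Qo := ⟨sv, hv1⟩
    have key : us = vs := by
      have := mon_faithful _ hm
      apply P.R.map_injective
      apply sl_hom_ext
      apply (P.isPB Qo).hom_ext
      · rw [P.nat, P.nat]
        have : P.top Bo = (P.R.obj Bo).hom ≫ f := by
          have := (P.isPB Bo).w
          rw [← this]; exact (Category.comp_id _).symm
        rw [this]
        apply hQ.hom_ext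
        · show (((P.R.obj Bo).hom ≫ f) ≫ su) ≫ q₁ = (((P.R.obj Bo).hom ≫ f) ≫ sv) ≫ q₁
          simp [hu1, hv1]
        · show (((P.R.obj Bo).hom ≫ f) ≫ su) ≫ q₂ = (((P.R.obj Bo).hom ≫ f) ≫ sv) ≫ q₂
          simp [hu2, hv2, huv]
      · rw [sl_w, sl_w]
    have : su = sv := sl_congr key
    rw [← hu2, ← hv2, this]

end Desc
end DGS

namespace DGS
set_option linter.unusedSectionVars false

section DescM
variable {𝒟 : Type u} [Category.{v} 𝒟] {E : MorphismProperty 𝒟}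

/-- Composition with `f`. -/
def slL (e3 : AxE3 E) {A B : 𝒟} (f : A ⟶ B) (hf : E f) : ESliceObj E A ⥤ ESliceObj E B where
  obj g := ⟨g.dom, g.hom ≫ f, e3 _ _ g.mem hf⟩
  map {g h} φ := ⟨φ.top, by rw [← Category.assoc, sl_w]⟩
  map_id g := sl_hom_ext rfl
  map_comp φ ψ := sl_hom_ext rfl

/-- Composition is left adjoint to pullback. -/
noncomputable def slAdj (e3 : AxE3 E) {A B : 𝒟} (f : A ⟶ B) (hf : E f) (P : PullbackFunctorAlong E f) :
    slL e3 f hf ⊣ P.R := Adjunction.mkOfHomEquiv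
  { homEquiv := fun g h =>
      { toFun := fun φ => ⟨(P.isPB h).lift φ.top g.hom (sl_w φ), (P.isPB h).lift_snd _ _ _⟩
        invFun := fun ψ => ⟨ψ.top ≫ P.top h, by
          show (ψ.top ≫ P.top h) ≫ h.hom = g.hom ≫ f
          rw [Category.assoc, (P.isPB h).w, ← Category.assoc, sl_w]⟩
        left_inv := fun φ => sl_hom_ext ((P.isPB h).lift_fst _ _ _)
        right_inv := fun ψ => sl_hom_ext (by
          apply (P.isPB h).hom_ext
          · exact (P.isPB h).lift_fst _ _ _
          · exact ((P.isPB h).lift_snd _ _ _).trans (sl_w ψ).symm) }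
    homEquiv_naturality_left_symm := fun {g g' h} φ ψ => sl_hom_ext (Category.assoc _ _ _)
    homEquiv_naturality_right := fun {g h h'} φ ψ => sl_hom_ext (by
      apply (P.isPB h').hom_ext
      · refine ((P.isPB h').lift_fst _ _ _).trans ?_
        rw [sl_comp, sl_comp, Category.assoc, P.nat]
        exact (((P.isPB h).lift_fst_assoc _ _ _ _)).symm
      · rw [sl_w, sl_w]) }

theorem desc_coeq [HasZeroMorphisms 𝒟] (H : Ax E) (D : Desc E) {A B : 𝒟} {f : A ⟶ B} (hf : E f)
    (P : PullbackFunctorAlong E f) {X Y : ESliceObj E B} (u v : X ⟶ Y)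
    {W : ESliceObj E A} (π : P.R.obj Y ⟶ W) (hs : IsSplitCoequalizer (P.R.map u) (P.R.map v) π) :
    ∃ (Z : ESliceObj E B) (q : Y ⟶ Z) (w : u ≫ q = v ≫ q) (θ : W ≅ P.R.obj Z),
      Nonempty (IsColimit (Cofork.ofπ q w)) ∧ P.R.map q = π ≫ θ.hom := by
  obtain ⟨Z, z, q, wq, hz, hq, h1, h2, h3, h4, h5⟩ := D.esd (u := v.top) (v := u.top)
    (u' := (P.R.map v).top) (v' := (P.R.map u).top) (w := W.hom) (π := π.top)
    (s := hs.rightSection.top) (t := hs.leftSection.top) hf X.mem Y.mem W.mem (sl_w v) (sl_w u)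
    (P.isPB X) (P.isPB Y) (P.nat v) (sl_w _) (P.nat u) (sl_w _) (sl_w π) (sl_w _) (sl_w _)
    (sl_congr hs.rightSection_π) (sl_congr hs.leftSection_bottom) (sl_congr hs.leftSection_top)
    (sl_congr hs.condition).symm
  let Zo : ESliceObj E B := ⟨Z, z, hz⟩
  obtain ⟨e, he1, he2, he3, he4⟩ := pbIso h3 (P.isPB Zo)
  let θ : W ⟶ P.R.obj Zo := ⟨e.hom, he2⟩
  have : IsIso θ := sl_isIso' θ (inferInstanceAs (IsIso e.hom))
  have hqe := D.epi hq
  let qs : Y ⟶ Zo := ⟨q, h1⟩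
  refine ⟨Zo, qs, sl_hom_ext h2.symm, asIso θ, ⟨Cofork.IsColimit.mk _
    (fun k => ⟨(h5 k.pt.hom k.π.top k.pt.mem (sl_w _) (sl_congr k.condition).symm).choose, ?_⟩)
    (fun k => sl_hom_ext
      (h5 k.pt.hom k.π.top k.pt.mem (sl_w _) (sl_congr k.condition).symm).choose_spec) ?_⟩, ?_⟩
  · have := (h5 k.pt.hom k.π.top k.pt.mem (sl_w _) (sl_congr k.condition).symm).choose_spec
    rw [← cancel_epi q, reassoc_of% this, sl_w]
    exact h1.symm
  · intro k m hm
    apply sl_hom_ext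
    have := (h5 k.pt.hom k.π.top k.pt.mem (sl_w _) (sl_congr k.condition).symm).choose_spec
    have h : q ≫ m.top = k.π.top := sl_congr hm
    rw [← cancel_epi q]
    exact h.trans this.symm
  · apply sl_hom_ext
    apply (P.isPB Zo).hom_ext
    · rw [P.nat]
      show P.top Y ≫ q = (π.top ≫ e.hom) ≫ P.top Zo
      rw [h4, Category.assoc, he1]
    · rw [sl_w, sl_w]

theorem M_of_desc [HasZeroMorphisms 𝒟] (H : Ax E) (D : Desc E) : AxM E := by
  intro A B f hf P
  have i1 : P.R.ReflectsIsomorphisms := ⟨fun {x y} φ hφ => by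
    have := sl_isIso (P.R.map φ)
    apply sl_isIso'
    exact D.cons hf x.mem y.mem (sl_w φ) (P.isPB x)
      (pb_of_iso (P.isPB y) (P.R.map φ).top (P.nat φ) (sl_w _))⟩
  have i2 : Monad.HasCoequalizerOfIsSplitPair P.R := ⟨fun {x y} u v h => by
    obtain ⟨W, π, ⟨hs⟩⟩ := h.splittable
    obtain ⟨Z, q, w, θ, ⟨hc⟩, -⟩ := desc_coeq H D hf P u v π hs
    exact ⟨⟨_, hc⟩⟩⟩
  have i3 : Monad.PreservesColimitOfIsSplitPair P.R := ⟨fun {x y} u v h => by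
    obtain ⟨W, π, ⟨hs⟩⟩ := h.splittable
    obtain ⟨Z, q, w, θ, ⟨hc⟩, hq⟩ := desc_coeq H D hf P u v π hs
    refine preservesColimit_of_preserves_colimit_cocone hc ?_
    have hw : P.R.map u ≫ P.R.map q = P.R.map v ≫ P.R.map q := by
      rw [← P.R.map_comp, w, P.R.map_comp]
    refine (isColimitMapCoconeCoforkEquiv P.R w).symm (Cofork.IsColimit.mk _
      (fun k => θ.inv ≫ hs.rightSection ≫ k.π) ?_ ?_)
    · intro k
      show P.R.map q ≫ θ.inv ≫ hs.rightSection ≫ k.π = k.π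
      rw [hq, Category.assoc, θ.hom_inv_id_assoc, ← reassoc_of% hs.leftSection_top, k.condition,
        reassoc_of% hs.leftSection_bottom]
    · intro k m hm
      have hm' : P.R.map q ≫ m = k.π := hm
      show m = θ.inv ≫ hs.rightSection ≫ k.π
      have h2 : ∀ m : P.R.obj Z ⟶ k.pt, m = θ.inv ≫ hs.rightSection ≫ P.R.map q ≫ m := by
        intro m
        rw [hq, Category.assoc, reassoc_of% hs.rightSection_π, θ.inv_hom_id_assoc]
      rw [← hm']
      exact h2 m⟩
  exact ⟨Monad.monadicOfHasPreservesGSplitCoequalizersOfReflectsIsomorphisms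
    (slAdj H.e3 f hf P)⟩

end DescM
end DGS

namespace DGS
set_option linter.unusedSectionVars false

section DescC
variable {𝒟 : Type u} [Category.{v} 𝒟] {E : MorphismProperty 𝒟}
  [HasZeroMorphisms 𝒟] [HasZeroObject 𝒟]

theorem desc_dbl (H : Ax E) (D : Desc E) : Desc (DoubleExtClass E) where
  esd := by
    intro A B X Y X' Y' W f x y u v xt xa yt ya u' v' w π s t hf hx hy hw hu hv hX hY
      hu1 hu2 hv1 hv2 hπ hs ht sπ tu tv uv
    obtain ⟨hX1, hX0⟩ := comp_of_ext_pb H hX hf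
    obtain ⟨hY1, hY0⟩ := comp_of_ext_pb H hY hf
    obtain ⟨Z0, z0, q0, wq0, hz0, hq0, a0, b0, c0, d0, e0⟩ := D.esd hf.2.1 hx.2.1 hy.2.1 hw.2.1
      (congr_bot hu) (congr_bot hv) hX0 hY0 (congr_bot hu1) (congr_bot hu2) (congr_bot hv1)
      (congr_bot hv2) (congr_bot hπ) (congr_bot hs) (congr_bot ht) (congr_bot sπ) (congr_bot tu)
      (congr_bot tv) (congr_bot uv)
    obtain ⟨Z1, z1, q1, wq1, hz1, hq1, a1, b1, c1, d1, e1⟩ := D.esd hf.1 hx.1 hy.1 hw.1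
      (congr_top hu) (congr_top hv) hX1 hY1 (congr_top hu1) (congr_top hu2) (congr_top hv1)
      (congr_top hv2) (congr_top hπ) (congr_top hs) (congr_top ht) (congr_top sπ) (congr_top tu)
      (congr_top tv) (congr_top uv)
    have ep1 := D.epi hq1
    have ep0 := D.epi hq0
    have epπ := D.epi (H.split s.top (congr_top sπ))
    obtain ⟨T, t1, t2, hT, hTE⟩ := H.e2 B.hom z0 hz0
    obtain ⟨r, hr1, hr2⟩ := exLift hT y.top (Y.hom ≫ q0) (by rw [Category.assoc, a0, ext_w])
    obtain ⟨m, hm⟩ := e1 t1 r hTE hr1 (by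
      apply hT.hom_ext
      · rw [Category.assoc, Category.assoc, hr1]
        exact (congr_top hu).trans (congr_top hv).symm
      · rw [Category.assoc, Category.assoc, hr2, ← Category.assoc, ext_w, ← Category.assoc, ext_w,
          Category.assoc, b0, Category.assoc])
    have hζ : q1 ≫ m ≫ t2 = Y.hom ≫ q0 := by rw [reassoc_of% hm, hr2]
    let Z : ExtObj E := ⟨Z1, Z0, m ≫ t2, H.e4 q1 _ (by rw [hζ]; exact H.e3 _ _ Y.mem hq0)⟩
    let q : Y ⟶ Z := ⟨q1, q0, hζ⟩
    let z : Z ⟶ B := ⟨z1, z0, by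
      show z1 ≫ B.hom = (m ≫ t2) ≫ z0
      rw [← cancel_epi q1, reassoc_of% a1, Category.assoc, reassoc_of% hζ, a0, ext_w]⟩
    let wq : W ⟶ Z := ⟨wq1, wq0, by
      show wq1 ≫ m ≫ t2 = W.hom ≫ wq0
      rw [← cancel_epi π.top, ← reassoc_of% d1, hζ, ← Category.assoc, ext_w, Category.assoc, d0,
        ← Category.assoc, ← Category.assoc, ext_w]⟩
    have hqz : q ≫ z = y := ext_hom_ext a1 a0
    have hz : DoubleExtClass E z := dbl_e4 H q z (by rw [hqz]; exact hy)
    have hpb : IsPullback wq w z f := ext_pb_of_comp c1 c0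
    have hd : yt ≫ q = π ≫ wq := ext_hom_ext d1 d0
    refine ⟨Z, z, q, wq, hz, ?_, hqz, ext_hom_ext b1 b0, hpb, hd, ?_⟩
    · apply dbl_e4 H yt
      rw [hd]
      exact dbl_e3 H _ _ (dbl_split H π s sπ) ((dbl_ax H).pb hpb hf)
    · intro T τ r hτ hr hur
      obtain ⟨m1, hm1⟩ := e1 τ.top r.top hτ.1 (congr_top hr) (congr_top hur)
      obtain ⟨m0, hm0⟩ := e0 τ.bot r.bot hτ.2.1 (congr_bot hr) (congr_bot hur)
      refine ⟨⟨m1, m0, ?_⟩, ext_hom_ext hm1 hm0⟩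
      show m1 ≫ T.hom = (m ≫ t2) ≫ m0
      rw [← cancel_epi q1, reassoc_of% hm1, Category.assoc, reassoc_of% hζ, hm0, ext_w]
  cons := by
    intro A B X Y X' f x y u xt xa hf hx hy hu hX hY
    obtain ⟨hX1, hX0⟩ := comp_of_ext_pb H hX hf
    obtain ⟨hY1, hY0⟩ := comp_of_ext_pb H hY hf
    exact ext_isIso u (D.cons hf.1 hx.1 hy.1 (congr_top hu) hX1 hY1)
      (D.cons hf.2.1 hx.2.1 hy.2.1 (congr_bot hu) hX0 hY0)
  epi := by
    intro A B f hf
    have e1 := D.epi hf.1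
    have e0 := D.epi hf.2.1
    refine ⟨fun {C} u v h => ext_hom_ext ?_ ?_⟩
    · rw [← cancel_epi f.top]; exact congr_top h
    · rw [← cancel_epi f.bot]; exact congr_bot h

theorem dbl_M (H : Ax E) (hM : AxM E) : AxM (DoubleExtClass E) :=
  M_of_desc (dbl_ax H) (desc_dbl H (desc_of_M H hM))

end DescC
end DGS

namespace DGS
set_option linter.unusedSectionVars false

section Norm
variable {𝒞 : Type u} [Category.{v} 𝒞] [HasZeroMorphisms 𝒞] [HasZeroObject 𝒞]
  (G : GaloisStructure 𝒞)

theorem η_nat {A B : 𝒞} (f : A ⟶ B) : G.η.app A ≫ G.I.map f = f ≫ G.η.app B :=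
  (G.η.naturality f).symm

theorem splitDouble (H : Ax G.E) {A B T : 𝒞} {p : A ⟶ B} {s : B ⟶ A} (hs : s ≫ p = 𝟙 B)
    {j : T ⟶ G.I.obj A} {τ : T ⟶ B} (hT : IsPullback j τ (G.I.map p) (G.η.app B))
    {c : A ⟶ T} (c1 : c ≫ τ = p) (c2 : c ≫ j = G.η.app A) : G.E c := by
  obtain ⟨K, ka, hka⟩ := H.ker (G.η_mem A)
  obtain ⟨L, kb, hkb⟩ := H.ker (H.pb hT (G.η_mem B))
  obtain ⟨k, hk⟩ := hkb.2.1 _ (ka ≫ c) (by rw [Category.assoc, c2, hka.1])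
  have z1 : kb ≫ τ ≫ s ≫ G.η.app A = 0 := by
    rw [← η_nat, ← reassoc_of% hT.w, reassoc_of% hkb.1, zero_comp]
  obtain ⟨σ, hσ⟩ := hka.2.1 _ (kb ≫ τ ≫ s) (by simpa using z1)
  have mb := hkb.2.2
  refine H.five c2 hk hka hkb (G.η_mem A) (H.split σ ?_)
  rw [← cancel_mono kb, Category.assoc, hk, reassoc_of% hσ, Category.id_comp]
  apply hT.hom_ext
  · simp only [Category.assoc, c2, z1, hkb.1]
  · simp only [Category.assoc, c1, hs, Category.comp_id]

structure NormData {A B : 𝒞} (a : A ⟶ B) where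
  P : 𝒞
  p1 : P ⟶ A
  p2 : P ⟶ A
  hP : IsPullback p1 p2 a a
  T : 𝒞
  τ : T ⟶ A
  j : T ⟶ G.I.obj P
  hT : IsPullback j τ (G.I.map p1) (G.η.app A)
  c : P ⟶ T
  c1 : c ≫ τ = p1
  c2 : c ≫ j = G.η.app P
  Z : 𝒞
  z : Z ⟶ B
  q : A ⟶ Z
  w : T ⟶ Z
  hw : IsPullback w τ z a
  cw : c ≫ w = p2 ≫ q
  qz : q ≫ z = a
  cE : G.E c
  qE : G.E q
  zE : G.E z
  univ : ∀ {X : 𝒞} (x : X ⟶ B) (r : T ⟶ X) (r0 : A ⟶ X), G.E x → r ≫ x = τ ≫ a →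
    c ≫ r = p2 ≫ r0 → ∃ m : Z ⟶ X, w ≫ m = r

theorem exNorm (H : Ax G.E) (D : Desc G.E) (t1 : PreservesType1 G.E G.I) {A B : 𝒞} (a : A ⟶ B)
    (ha : G.E a) : Nonempty (NormData G a) := by
  obtain ⟨P, p1, p2, hP, p1E⟩ := H.e2 a a ha
  obtain ⟨δ, δ1, δ2⟩ := exLift hP (𝟙 A) (𝟙 A) rfl
  have p2E : G.E p2 := H.split δ δ2
  obtain ⟨T, j, τ, hT, jE⟩ := H.e2 (G.I.map p1) (G.η.app A) (G.η_mem A)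
  have τE : G.E τ := H.pb' hT (H.split (G.I.map δ) (by rw [← G.I.map_comp, δ1, G.I.map_id]))
  obtain ⟨c, c2, c1⟩ := exLift hT (G.η.app P) p1 (η_nat G p1)
  have cE := splitDouble G H δ1 hT c1 c2
  have ce := D.epi cE
  obtain ⟨Dd, dT, dA, hD, dTE⟩ := H.e2 (τ ≫ a) a ha
  have dw : dT ≫ τ ≫ a = dA ≫ a := hD.w
  obtain ⟨Q, qb, qa, hQ, -⟩ := H.e2 p1 p2 p2E
  obtain ⟨qc, qc1, qc2⟩ := exLift hP (qa ≫ p1) (qb ≫ p2) (by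
    rw [Category.assoc, Category.assoc, hP.w, ← reassoc_of% hQ.w, hP.w])
  have hIQ := t1 qb qa p1 p2 δ δ1 p1E p2E hQ
  obtain ⟨e, e1, e2⟩ := exLift hP dA (dT ≫ τ) (by rw [Category.assoc, dw])
  obtain ⟨i, i1, i2⟩ := exLift hIQ (dT ≫ j) (e ≫ G.η.app P) (by
    rw [Category.assoc, hT.w, Category.assoc, η_nat, reassoc_of% e2])
  obtain ⟨θ, θ1, θ2⟩ := exLift hT (i ≫ G.I.map qc) dA (by
    rw [Category.assoc, ← G.I.map_comp, qc1, G.I.map_comp, reassoc_of% i2, η_nat, reassoc_of% e1])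
  have key : ∀ {Y : 𝒞} (y1 g : Y ⟶ P) (d : Y ⟶ Dd), d ≫ dT = y1 ≫ c → g ≫ p1 = d ≫ dA →
      g ≫ p2 = y1 ≫ p2 → d ≫ θ = g ≫ c := by
    intro Y y1 g d h1 h2 h3
    obtain ⟨κ, κ1, κ2⟩ := exLift hQ y1 (d ≫ e) (by
      rw [Category.assoc, e2, reassoc_of% h1, c1])
    have κ3 : κ ≫ qc = g := by
      apply hP.hom_ext
      · rw [Category.assoc, qc1, reassoc_of% κ2, e1, h2]
      · rw [Category.assoc, qc2, reassoc_of% κ1, h3]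
    have hi : d ≫ i = κ ≫ G.η.app Q := by
      apply hIQ.hom_ext
      · rw [Category.assoc, i1, Category.assoc, η_nat, reassoc_of% κ1, reassoc_of% h1, c2]
      · rw [Category.assoc, i2, Category.assoc, η_nat, reassoc_of% κ2]
    apply hT.hom_ext
    · rw [Category.assoc, θ1, reassoc_of% hi, η_nat, reassoc_of% κ3, Category.assoc, c2]
    · rw [Category.assoc, θ2, Category.assoc, c1, h2]
  obtain ⟨R, xt, xa, hR, -⟩ := H.e2 (dT ≫ τ ≫ a) a ha
  have hRw := hR.w
  obtain ⟨u', u1, u2⟩ := exLift hD (xt ≫ dT) xa (by simpa using hRw)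
  obtain ⟨v', v1, v2⟩ := exLift hD (xt ≫ θ) xa (by
    rw [Category.assoc, reassoc_of% θ2, ← dw]; exact hRw)
  obtain ⟨s, s1, s2⟩ := exLift hD (𝟙 T) τ (by simp)
  obtain ⟨t, tt1, tt2⟩ := exLift hR (𝟙 Dd) dA (by simpa using dw)
  have sθ : s ≫ θ = 𝟙 T := by
    rw [← cancel_epi c, ← Category.assoc, key (𝟙 P) (𝟙 P) (c ≫ s)] <;> simp [s1, s2, c1]
  have assoc : u' ≫ θ = v' ≫ θ := by
    obtain ⟨R', r1, r2, hR', -⟩ := H.e2 (xt ≫ dT) c cE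
    have r1e := D.epi (H.pb hR' cE)
    have hw := hR'.w
    rw [← cancel_epi r1]
    have k1 : r1 ≫ xt ≫ dA ≫ a = r2 ≫ p2 ≫ a := by
      rw [← dw, ← hP.w, ← c1, Category.assoc, ← reassoc_of% hw]
    have k2 : r1 ≫ xa ≫ a = r2 ≫ p2 ≫ a := by rw [← k1, ← hRw, dw]
    obtain ⟨g, g1, g2⟩ := exLift hP (r1 ≫ xa) (r2 ≫ p2) (by simpa using k2)
    obtain ⟨g', g1', g2'⟩ := exLift hP (r1 ≫ xt ≫ dA) (r2 ≫ p2) (by simpa using k1)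
    have h1 := key r2 g (r1 ≫ u') (by rw [Category.assoc, u1, hw]) (by
      rw [Category.assoc, u2, g1]) g2
    have h2 := key r2 g' (r1 ≫ xt) (by rw [Category.assoc, hw]) (by
      rw [Category.assoc, g1']) g2'
    have h3 := key g' g (r1 ≫ v') (by rw [Category.assoc, v1, ← h2, Category.assoc]) (by
      rw [Category.assoc, v2, g1]) (by rw [g2, g2'])
    rw [← Category.assoc, h1, ← Category.assoc, h3]
  obtain ⟨Z, z, q', wq, zE, q'E, a1, a2, a3, a4, a5⟩ := D.esd (f := a) (x := dT ≫ τ ≫ a)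
    (y := τ ≫ a) (u := dT) (v := θ) (u' := u') (v' := v') (w := τ) (π := θ) (s := s) (t := t)
    ha (H.e3 _ _ dTE (H.e3 _ _ τE ha)) (H.e3 _ _ τE ha) τE rfl (by
      rw [reassoc_of% θ2, dw]) hR hD u1 u2 v1 v2 θ2 s2 tt2 sθ
      (by
        apply hD.hom_ext
        · rw [Category.assoc, u1, reassoc_of% tt1, Category.id_comp]
        · rw [Category.assoc, u2, tt2, Category.id_comp])
      (by
        apply hD.hom_ext
        · rw [Category.assoc, v1, reassoc_of% tt1, Category.assoc, s1, Category.comp_id]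
        · rw [Category.assoc, v2, tt2, Category.assoc, s2, θ2]) assoc
  have hqw : q' = wq := by
    have := congrArg (fun m => s ≫ m) a4
    simpa [reassoc_of% s1, reassoc_of% sθ] using this
  subst hqw
  have cw : c ≫ q' = p2 ≫ δ ≫ c ≫ q' := by
    obtain ⟨d, d1, d2⟩ := exLift hD c p2 (by rw [reassoc_of% c1, hP.w])
    have := key (𝟙 P) (p2 ≫ δ) d (by rw [d1, Category.id_comp]) (by
      rw [Category.assoc, δ1, d2, Category.comp_id]) (by simp [δ2])
    calc c ≫ q' = d ≫ dT ≫ q' := by rw [reassoc_of% d1]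
      _ = d ≫ θ ≫ q' := by rw [a2]
      _ = _ := by rw [reassoc_of% this]
  refine ⟨⟨P, p1, p2, hP, T, τ, j, hT, c, c1, c2, Z, z, δ ≫ c ≫ q', q', a3, cw, ?_, cE, ?_, zE, ?_⟩⟩
  · rw [Category.assoc, Category.assoc, a1, reassoc_of% c1, reassoc_of% δ1]
  · apply H.e4 p2
    rw [← cw]
    exact H.e3 _ _ cE q'E
  · intro X x r r0 xE hr1 hr2
    refine a5 x r xE hr1 ?_
    obtain ⟨D', d1, d2, hD', -⟩ := H.e2 dT c cE
    have d1e := D.epi (H.pb hD' cE)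
    have hw := hD'.w
    rw [← cancel_epi d1]
    obtain ⟨g, g1, g2⟩ := exLift hP (d1 ≫ dA) (d2 ≫ p2) (by
      rw [Category.assoc, ← dw, reassoc_of% hw, reassoc_of% c1, hP.w, Category.assoc])
    have h := key d2 g d1 hw g1 g2
    rw [reassoc_of% hw, hr2, reassoc_of% h, hr2, reassoc_of% g2]

end Norm
end DGS

namespace DGS
set_option linter.unusedSectionVars false

section Norm2
variable {𝒞 : Type u} [Category.{v} 𝒞] [HasZeroMorphisms 𝒞] [HasZeroObject 𝒞]
  (G : GaloisStructure 𝒞)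

theorem I_η (A : 𝒞) : G.I.map (G.η.app A) = G.η.app (G.I.obj A) := by
  obtain ⟨g, -, hg⟩ := G.refl_univ (G.I_mem (G.I.obj A)) (G.η.app A ≫ G.η.app (G.I.obj A))
  rw [hg _ (η_nat G (G.η.app A)), hg _ rfl]

theorem isIso_ηI (A : 𝒞) : IsIso (G.η.app (G.I.obj A)) := G.η_iso_of_mem (G.I_mem A)

theorem trivial_τ (H : Ax G.E) (t1 : PreservesType1 G.E G.I) {P A T : 𝒞} {p1 : P ⟶ A}
    {δ : A ⟶ P} (δ1 : δ ≫ p1 = 𝟙 A) {j : T ⟶ G.I.obj P} {τ : T ⟶ A}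
    (hT : IsPullback j τ (G.I.map p1) (G.η.app A)) : G.Trivial τ := by
  have s : G.I.map δ ≫ G.I.map p1 = 𝟙 _ := by rw [← G.I.map_comp, δ1, G.I.map_id]
  have h1 := t1 j τ _ _ (G.I.map δ) s (H.split _ s) (G.η_mem A) hT
  have := isIso_ηI G A
  have := isIso_ηI G P
  have h2 : IsPullback (G.η.app (G.I.obj P)) (G.I.map p1) (G.I.map (G.I.map p1))
    (G.η.app (G.I.obj A)) := IsPullback.of_horiz_isIso ⟨η_nat G _⟩
  have h3 := hT.paste_horiz h2
  refine IsPullback.of_right ?_ (η_nat G τ) h1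
  rw [η_nat, I_η]
  exact h3

theorem trivDesc (H : Ax G.E) (D : Desc G.E) (t1 : PreservesType1 G.E G.I) {P' Z A T : 𝒞}
    {r1 : P' ⟶ Z} {σ : Z ⟶ P'} (hσ : σ ≫ r1 = 𝟙 Z) {q : A ⟶ Z} (qE : G.E q) {k : T ⟶ P'}
    {τ : T ⟶ A} (hk : IsPullback k τ r1 q) (hτ : G.Trivial τ) : G.Trivial r1 := by
  obtain ⟨T', j', τ', hT', -⟩ := H.e2 (G.I.map r1) (G.η.app Z) (G.η_mem Z)
  obtain ⟨c', c1, c2⟩ := exLift hT' (G.η.app P') r1 (η_nat G r1)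
  have s : G.I.map σ ≫ G.I.map r1 = 𝟙 _ := by rw [← G.I.map_comp, hσ, G.I.map_id]
  have h1 := t1 k τ r1 q σ hσ (H.split σ hσ) qE hk
  have h2 := IsPullback.paste_horiz hτ h1
  have h3 : IsPullback (k ≫ c') τ τ' q := by
    refine IsPullback.of_right ?_ ?_ hT'
    · rw [Category.assoc, c1, ← η_nat]
      rw [η_nat G q] at h2
      exact h2
    · rw [Category.assoc, c2, hk.w]
  have i : IsIso c' := D.cons qE (H.split σ hσ) (H.pb' hT' (H.split _ s)) c2 hk h3
  exact pb_of_iso hT' c' c1 c2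

variable {G}

theorem NormData.normal (H : Ax G.E) (D : Desc G.E) (t1 : PreservesType1 G.E G.I) {A B : 𝒞}
    {a : A ⟶ B} (N : NormData G a) : G.Normal N.z := by
  refine ⟨N.zE, ?_⟩
  intro P' r1 r2 h
  obtain ⟨k, k1, k2⟩ := exLift h (N.τ ≫ N.q) N.w (by rw [Category.assoc, N.qz, N.hw.w])
  obtain ⟨σ, σ1, -⟩ := exLift h (𝟙 _) (𝟙 _) rfl
  obtain ⟨δ, δ1, -⟩ := exLift N.hP (𝟙 _) (𝟙 _) rfl
  refine trivDesc G H D t1 σ1 N.qE (k := k) (τ := N.τ) ?_ (trivial_τ G H t1 δ1 N.hT)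
  refine IsPullback.of_right (h₁₂ := r2) (v₁₃ := N.z) (h₂₂ := N.z) ?_ k1 h.flip
  rw [k2, N.qz]
  exact N.hw

theorem NormData.refl (H : Ax G.E) (D : Desc G.E) {A B : 𝒞}
    {a : A ⟶ B} (N : NormData G a) {C C0 : 𝒞} {g : C ⟶ C0} (hg : G.Normal g) {f1 : A ⟶ C}
    {f0 : B ⟶ C0} (hf : f1 ≫ g = a ≫ f0) : ∃ m : N.Z ⟶ C, N.q ≫ m = f1 ∧ m ≫ g = N.z ≫ f0 := by
  have aE : G.E a := by rw [← N.qz]; exact H.e3 _ _ N.qE N.zE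
  have qe := D.epi N.qE
  have ce := D.epi N.cE
  have p2e := D.epi (H.pb' N.hP aE)
  obtain ⟨Pg, q1, q2, hPg, -⟩ := H.e2 g g hg.1
  have htr := hg.2 q1 q2 hPg
  obtain ⟨e, e1, e2⟩ := exLift hPg (N.p1 ≫ f1) (N.p2 ≫ f1) (by
    rw [Category.assoc, Category.assoc, hf, reassoc_of% N.hP.w])
  obtain ⟨r', r1, r2⟩ := exLift htr (N.j ≫ G.I.map e) (N.τ ≫ f1) (by
    rw [Category.assoc, ← G.I.map_comp, e1, G.I.map_comp, reassoc_of% N.hT.w, η_nat,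
      Category.assoc])
  have cr : N.c ≫ r' = e := by
    apply htr.hom_ext
    · rw [Category.assoc, r1, reassoc_of% N.c2, η_nat]
    · rw [Category.assoc, r2, reassoc_of% N.c1, e1]
  obtain ⟨X, x, xc, hX, xE⟩ := H.e2 f0 g hg.1
  obtain ⟨r, rx, rc⟩ := exLift hX (N.τ ≫ a) (r' ≫ q2) (by
    rw [Category.assoc, Category.assoc, ← hPg.w, reassoc_of% r2, hf])
  obtain ⟨r0, r0x, r0c⟩ := exLift hX a f1 hf.symm
  obtain ⟨m', hm'⟩ := N.univ x r r0 xE rx (by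
    apply hX.hom_ext
    · rw [Category.assoc, Category.assoc, rx, r0x, reassoc_of% N.c1, N.hP.w]
    · rw [Category.assoc, Category.assoc, rc, r0c, reassoc_of% cr, e2])
  have hm : N.q ≫ m' ≫ xc = f1 := by
    rw [← cancel_epi N.p2, ← reassoc_of% N.cw, reassoc_of% hm', rc, reassoc_of% cr, e2]
  refine ⟨m' ≫ xc, hm, ?_⟩
  rw [← cancel_epi N.q, ← Category.assoc, hm, reassoc_of% N.qz, hf]

theorem trivial_iso {A B : 𝒞} (i : A ⟶ B) [IsIso i] : G.Trivial i :=
  IsPullback.of_vert_isIso ⟨η_nat G i⟩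

theorem normal_iso {a b : ExtObj G.E} (φ : a ≅ b) (h : G.Normal a.hom) : G.Normal b.hom := by
  refine ⟨b.mem, ?_⟩
  intro P r1 r2 hP
  have h1 : φ.hom.top ≫ φ.inv.top = 𝟙 _ := congr_top φ.hom_inv_id
  have h2 : φ.inv.top ≫ φ.hom.top = 𝟙 _ := congr_top φ.inv_hom_id
  have h3 : φ.inv.bot ≫ φ.hom.bot = 𝟙 _ := congr_bot φ.inv_hom_id
  have h4 : φ.hom.bot ≫ φ.inv.bot = 𝟙 _ := congr_bot φ.hom_inv_id
  have hq : IsPullback (r1 ≫ φ.inv.top) (r2 ≫ φ.inv.top) a.hom a.hom := by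
    apply mkPB
    · rw [Category.assoc, Category.assoc, ext_w, reassoc_of% hP.w]
    · intro T α β w
      obtain ⟨l, l1, l2⟩ := exLift hP (α ≫ φ.hom.top) (β ≫ φ.hom.top) (by
        rw [Category.assoc, Category.assoc, ext_w, reassoc_of% w])
      refine ⟨l, ?_, ?_⟩
      · rw [reassoc_of% l1, h1, Category.comp_id]
      · rw [reassoc_of% l2, h1, Category.comp_id]
    · intro T l l' e1 e2
      have := isIso_top φ.inv
      apply hP.hom_ext
      · rw [← cancel_mono φ.inv.top]; simpa using e1
      · rw [← cancel_mono φ.inv.top]; simpa using e2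
  have ht := h.2 _ _ hq
  have := isIso_top φ.hom
  have ht2 := IsPullback.paste_vert ht (trivial_iso (G := G) φ.hom.top)
  rw [← G.I.map_comp, Category.assoc, h2, Category.comp_id] at ht2
  exact ht2

end Norm2
end DGS

namespace DGS
set_option linter.unusedSectionVars false

section Asm
variable {𝒞 : Type u} [Category.{v} 𝒞] [HasZeroMorphisms 𝒞] [HasZeroObject 𝒞]
  {G : GaloisStructure 𝒞}

theorem exMap (H : Ax G.E) (D : Desc G.E) (t1 : PreservesType1 G.E G.I)
    (N : ∀ a : ExtObj G.E, NormData G a.hom) {a b : ExtObj G.E} (φ : a ⟶ b) : ∃ m : (N a).Z ⟶ (N b).Z,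
    (N a).q ≫ m = φ.top ≫ (N b).q ∧ m ≫ (N b).z = (N a).z ≫ φ.bot :=
  (N a).refl H D ((N b).normal H D t1) (by rw [Category.assoc, (N b).qz, ext_w])

/-- The map induced on reflections. -/
noncomputable def m1 (H : Ax G.E) (D : Desc G.E) (t1 : PreservesType1 G.E G.I)
    (N : ∀ a : ExtObj G.E, NormData G a.hom) {a b : ExtObj G.E} (φ : a ⟶ b) :
    (N a).Z ⟶ (N b).Z := (exMap H D t1 N φ).choose

/-- The reflector. -/
noncomputable def I1 (H : Ax G.E) (D : Desc G.E) (t1 : PreservesType1 G.E G.I)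
    (N : ∀ a : ExtObj G.E, NormData G a.hom) : ExtObj G.E ⥤ ExtObj G.E where
  obj a := ⟨(N a).Z, a.cod, (N a).z, (N a).zE⟩
  map φ := ⟨(exMap H D t1 N φ).choose, φ.bot, (exMap H D t1 N φ).choose_spec.2⟩
  map_id a := by
    have := D.epi (N a).qE
    apply ext_hom_ext
    · show (exMap H D t1 N (𝟙 a)).choose = 𝟙 _
      rw [← cancel_epi (N a).q, (exMap H D t1 N (𝟙 a)).choose_spec.1]
      simp
    · rfl
  map_comp {a b c} φ ψ := by
    have := D.epi (N a).qE
    apply ext_hom_ext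
    · show (exMap H D t1 N (φ ≫ ψ)).choose =
        (exMap H D t1 N φ).choose ≫ (exMap H D t1 N ψ).choose
      rw [← cancel_epi (N a).q, (exMap H D t1 N (φ ≫ ψ)).choose_spec.1,
        reassoc_of% (exMap H D t1 N φ).choose_spec.1, (exMap H D t1 N ψ).choose_spec.1]
      simp
    · rfl

theorem I1_q (H : Ax G.E) (D : Desc G.E) (t1 : PreservesType1 G.E G.I)
    (N : ∀ a : ExtObj G.E, NormData G a.hom) {a b : ExtObj G.E} (φ : a ⟶ b) :
    (N a).q ≫ m1 H D t1 N φ = φ.top ≫ (N b).q := (exMap H D t1 N φ).choose_spec.1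
theorem I1_z (H : Ax G.E) (D : Desc G.E) (t1 : PreservesType1 G.E G.I)
    (N : ∀ a : ExtObj G.E, NormData G a.hom) {a b : ExtObj G.E} (φ : a ⟶ b) :
    m1 H D t1 N φ ≫ (N b).z = (N a).z ≫ φ.bot := (exMap H D t1 N φ).choose_spec.2

/-- The unit. -/
noncomputable def η1 (H : Ax G.E) (D : Desc G.E) (t1 : PreservesType1 G.E G.I)
    (N : ∀ a : ExtObj G.E, NormData G a.hom) : 𝟭 (ExtObj G.E) ⟶ I1 H D t1 N where
  app a := ⟨(N a).q, 𝟙 a.cod, (N a).qz.trans (Category.comp_id _).symm⟩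
  naturality a b φ := by
    apply ext_hom_ext
    · exact (I1_q H D t1 N φ).symm
    · exact (Category.comp_id _).trans (Category.id_comp _).symm

theorem aux_id {A B C P : 𝒞} {z : B ⟶ C} {q : A ⟶ B} (H : Ax G.E) (hq : G.E q)
    {p₁ : P ⟶ C} {p₂ : P ⟶ B} (hP : IsPullback p₁ p₂ (𝟙 C) z) {l : A ⟶ P} (h2 : l ≫ p₂ = q) :
    G.E l := by
  have : IsIso p₂ := hP.isIso_snd_of_isIso
  have : l = q ≫ inv p₂ := by rw [← h2]; simp
  rw [this]
  exact H.e3 _ _ hq (H.e1 _ inferInstance)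

theorem η1_mem (H : Ax G.E) (D : Desc G.E) (t1 : PreservesType1 G.E G.I)
    (N : ∀ a : ExtObj G.E, NormData G a.hom) (a : ExtObj G.E) : IsDoubleExt ((η1 H D t1 N).app a) := by
  refine ⟨(N a).qE, H.e1 _ (inferInstanceAs (IsIso (𝟙 a.cod))), ?_⟩
  intro P p₁ p₂ hP l h1 h2
  exact aux_id H (N a).qE hP h2

theorem η1_epi (H : Ax G.E) (D : Desc G.E) (t1 : PreservesType1 G.E G.I)
    (N : ∀ a : ExtObj G.E, NormData G a.hom) (a : ExtObj G.E) : Epi ((η1 H D t1 N).app a) :=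
  (desc_dbl H D).epi (η1_mem H D t1 N a)

theorem I1_dbl (H : Ax G.E) (D : Desc G.E) (t1 : PreservesType1 G.E G.I)
    (N : ∀ a : ExtObj G.E, NormData G a.hom) {a b : ExtObj G.E} (φ : a ⟶ b) (h : IsDoubleExt φ) :
    IsDoubleExt ((I1 H D t1 N).map φ) := by
  apply dbl_e4 H ((η1 H D t1 N).app a)
  rw [← (η1 H D t1 N).naturality φ]
  exact dbl_e3 H _ _ h (η1_mem H D t1 N b)

theorem refl1 (H : Ax G.E) (D : Desc G.E) (t1 : PreservesType1 G.E G.I)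
    (N : ∀ a : ExtObj G.E, NormData G a.hom) {a b : ExtObj G.E} (hb : G.Normal b.hom) (f : a ⟶ b) :
    ∃! g : (I1 H D t1 N).obj a ⟶ b, (η1 H D t1 N).app a ≫ g = f := by
  have := η1_epi H D t1 N a
  obtain ⟨m, m1, m2⟩ := (N a).refl H D hb (ext_w f)
  have h : (η1 H D t1 N).app a ≫ (⟨m, f.bot, m2⟩ : (I1 H D t1 N).obj a ⟶ b) = f :=
    ext_hom_ext m1 (Category.id_comp _)
  refine ⟨⟨m, f.bot, m2⟩, h, fun g hg => ?_⟩
  rw [← cancel_epi ((η1 H D t1 N).app a), h]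
  exact hg

theorem η1_iso (H : Ax G.E) (D : Desc G.E) (t1 : PreservesType1 G.E G.I)
    (N : ∀ a : ExtObj G.E, NormData G a.hom) {a : ExtObj G.E} (r : (I1 H D t1 N).obj a ⟶ a)
    (h : (η1 H D t1 N).app a ≫ r = 𝟙 a) : IsIso ((η1 H D t1 N).app a) := by
  have := η1_epi H D t1 N a
  refine ⟨⟨r, h, ?_⟩⟩
  rw [← cancel_epi ((η1 H D t1 N).app a), ← Category.assoc, h]
  exact (Category.id_comp _).trans (Category.comp_id _).symm

theorem pb_normal (H : Ax G.E) (D : Desc G.E) (t1 : PreservesType1 G.E G.I)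
    (N : ∀ a : ExtObj G.E, NormData G a.hom) {p x y c : ExtObj G.E} {p₁ : p ⟶ x} {p₂ : p ⟶ y} {f : x ⟶ c} {g : y ⟶ c}
    (h : IsPullback p₁ p₂ f g) (hx : G.Normal x.hom) (hy : G.Normal y.hom) :
    G.Normal p.hom := by
  have := η1_epi H D t1 N p
  obtain ⟨g1, e1, -⟩ := refl1 H D t1 N hx p₁
  obtain ⟨g2, e2, -⟩ := refl1 H D t1 N hy p₂
  obtain ⟨r, r1, r2⟩ := exLift h g1 g2 (by
    rw [← cancel_epi ((η1 H D t1 N).app p), ← Category.assoc, e1, ← Category.assoc, e2, h.w])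
  have := η1_iso H D t1 N r (by
    apply h.hom_ext
    · rw [Category.assoc, r1, e1]; exact (Category.id_comp _).symm
    · rw [Category.assoc, r2, e2]; exact (Category.id_comp _).symm)
  exact normal_iso (asIso ((η1 H D t1 N).app p)).symm ((N p).normal H D t1)

/-- The derived Galois structure. -/
noncomputable def G1 (H : Ax G.E) (D : Desc G.E) (t1 : PreservesType1 G.E G.I)
    (N : ∀ a : ExtObj G.E, NormData G a.hom) : GaloisStructure (ExtObj G.E) where
  inX a := G.Normal a.hom
  inX_iso i h := normal_iso i h
  I := I1 H D t1 N
  η := η1 H D t1 N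
  I_mem a := (N a).normal H D t1
  refl_univ h f := refl1 H D t1 N h f
  η_iso_of_mem {a} h := by
    obtain ⟨r, hr, -⟩ := refl1 H D t1 N h (𝟙 a)
    exact η1_iso H D t1 N r hr
  E := DoubleExtClass G.E
  F := fun a b φ => G.Normal a.hom ∧ G.Normal b.hom ∧ IsDoubleExt φ
  F_sub_E _ h := h.2.2
  F_in_X _ h := ⟨h.1, h.2.1⟩
  E1 := dbl_e1 H
  E2 := dbl_e2 H
  E3 := dbl_e3 H
  F1 f hx hy hf := ⟨hx, hy, dbl_e1 H f hf⟩
  F2 f g hx hg := by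
    obtain ⟨P, p₁, p₂, hP, hE⟩ := dbl_e2 H f g hg.2.2
    exact ⟨P, p₁, p₂, hP, pb_normal H D t1 N hP hx hg.1, hx, hE⟩
  F3 f g hf hg := ⟨hf.1, hg.2.1, dbl_e3 H f g hf.2.2 hg.2.2⟩
  I_map_mem f hf := ⟨(N _).normal H D t1, (N _).normal H D t1, I1_dbl H D t1 N f hf⟩
  η_mem a := η1_mem H D t1 N a

theorem exT (H : Ax G.E) (D : Desc G.E) (t1 : PreservesType1 G.E G.I)
    (N : ∀ a : ExtObj G.E, NormData G a.hom) {a b : ExtObj G.E} (φ : a ⟶ b) : ∃ (e : (N a).P ⟶ (N b).P) (t : (N a).T ⟶ (N b).T),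
    e ≫ (N b).p1 = (N a).p1 ≫ φ.top ∧ e ≫ (N b).p2 = (N a).p2 ≫ φ.top ∧
    t ≫ (N b).τ = (N a).τ ≫ φ.top ∧ t ≫ (N b).j = (N a).j ≫ G.I.map e ∧
    t ≫ (N b).w = (N a).w ≫ (m1 H D t1 N φ) := by
  have := D.epi (N a).cE
  obtain ⟨e, e1, e2⟩ := exLift (N b).hP ((N a).p1 ≫ φ.top) ((N a).p2 ≫ φ.top) (by
    rw [Category.assoc, Category.assoc, ext_w, reassoc_of% (N a).hP.w])
  obtain ⟨t, h1, h2⟩ := exLift (N b).hT ((N a).j ≫ G.I.map e) ((N a).τ ≫ φ.top) (by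
    rw [Category.assoc, ← G.I.map_comp, e1, G.I.map_comp, reassoc_of% (N a).hT.w, η_nat,
      Category.assoc])
  have hc : (N a).c ≫ t = e ≫ (N b).c := by
    apply (N b).hT.hom_ext
    · rw [Category.assoc, h1, reassoc_of% (N a).c2, η_nat, Category.assoc, (N b).c2]
    · rw [Category.assoc, h2, reassoc_of% (N a).c1, Category.assoc, (N b).c1, e1]
  refine ⟨e, t, e1, e2, h2, h1, ?_⟩
  rw [← cancel_epi (N a).c, reassoc_of% hc, (N b).cw, reassoc_of% (N a).cw, I1_q,
    reassoc_of% e2]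

theorem pres1 (H : Ax G.E) (D : Desc G.E) (t1 : PreservesType1 G.E G.I)
    (N : ∀ a : ExtObj G.E, NormData G a.hom) : PreservesType1 (DoubleExtClass G.E) (I1 H D t1 N) := by
  intro a b d c k l g h s hs hg hh hpb
  obtain ⟨K1, K0⟩ := comp_of_ext_pb H hpb hh
  obtain ⟨ek, tk, ek1, ek2, tk1, tk2, tk3⟩ := exT H D t1 N k
  obtain ⟨el, tl, el1, el2, tl1, tl2, tl3⟩ := exT H D t1 N l
  obtain ⟨eg, tg, eg1, eg2, tg1, tg2, tg3⟩ := exT H D t1 N g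
  obtain ⟨eh, th, eh1, eh2, th1, th2, th3⟩ := exT H D t1 N h
  obtain ⟨es, ts, es1, es2, ts1, ts2, ts3⟩ := exT H D t1 N s
  have hs1 : s.top ≫ g.top = 𝟙 _ := congr_top hs
  have hPsq : IsPullback ek el eg eh :=
    cube1 (N a).hP (N b).hP (N c).hP (N d).hP K1 K0 K1 ek1 el1 eg1 eh1 ek2 el2 eg2 eh2
      (ext_w k) (ext_w l) (ext_w k) (ext_w l)
  have hes : es ≫ eg = 𝟙 _ := by
    apply (N c).hP.hom_ext
    · rw [Category.assoc, eg1, reassoc_of% es1, hs1, Category.comp_id, Category.id_comp]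
    · rw [Category.assoc, eg2, reassoc_of% es2, hs1, Category.comp_id, Category.id_comp]
  have ehE : G.E eh := by
    let x : ExtObj G.E := ⟨d.dom, c.dom, h.top, hh.1⟩
    let y : ExtObj G.E := ⟨d.cod, c.cod, h.bot, hh.2.1⟩
    let ψ : x ⟶ y := ⟨d.hom, c.hom, (ext_w h).symm⟩
    have hψ : IsDoubleExt ψ := ⟨d.mem, c.mem, fun p₁ p₂ hP l h1 h2 =>
      hh.2.2 p₂ p₁ hP.flip l h2 h1⟩
    exact pb_mem H ψ ψ hψ (N d).hP (N c).hP eh eh1 eh2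
  have hIP := t1 ek el eg eh es hes (H.split es hes) ehE hPsq
  have hIA := t1 k.top l.top g.top h.top s.top hs1 hg.1 hh.1 K1
  have hTsq : IsPullback tk tl tg th :=
    cube1 (N a).hT (N b).hT (N c).hT (N d).hT hIP hIA K1 tk2 tl2 tg2 th2 tk1 tl1 tg1 th1
      (by rw [← G.I.map_comp, ← G.I.map_comp, ek1])
      (by rw [← G.I.map_comp, ← G.I.map_comp, el1]) (η_nat G _).symm (η_nat G _).symm
  have hI := I1_dbl H D t1 N h hh
  have hI1 : G.E (m1 H D t1 N h) := hI.1
  obtain ⟨V, v1, v2, hV, -⟩ := H.e2 (m1 H D t1 N g) (m1 H D t1 N h) hI1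
  have wV := hV.w
  obtain ⟨ν, ν1, ν2⟩ := exLift K0 (v1 ≫ (N b).z) (v2 ≫ (N d).z) (by
    rw [Category.assoc, Category.assoc, ← I1_z H D t1 N g, ← I1_z H D t1 N h, reassoc_of% wV])
  have νE : G.E ν := pb_mem H ((I1 H D t1 N).map g) ((I1 H D t1 N).map h) hI hV K0 ν ν1 ν2
  have hcm : (I1 H D t1 N).map k ≫ (I1 H D t1 N).map g =
      (I1 H D t1 N).map l ≫ (I1 H D t1 N).map h := by
    rw [← Functor.map_comp, ← Functor.map_comp, hpb.w]
  have hcm1 : m1 H D t1 N k ≫ m1 H D t1 N g = m1 H D t1 N l ≫ m1 H D t1 N h := congr_top hcm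
  obtain ⟨u, u1, u2⟩ := exLift hV (m1 H D t1 N k) (m1 H D t1 N l)
    hcm1
  have hν : u ≫ ν = (N a).z := by
    apply K0.hom_ext
    · rw [Category.assoc, ν1, reassoc_of% u1, I1_z]
    · rw [Category.assoc, ν2, reassoc_of% u2, I1_z]
  have hpb2 : IsPullback ((N a).w ≫ u) (N a).τ ν a.hom :=
    cube2 (N b).hw (N c).hw (N d).hw hV K0 K1 hTsq (by rw [tk3, Category.assoc, u1])
      (by rw [tl3, Category.assoc, u2]) tg3 th3 tk1 tl1 tg1 th1 ν1.symm ν2.symm (ext_w k) (ext_w l)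
  have iu : IsIso u := D.cons a.mem (N a).zE νE hν (N a).hw hpb2
  have hK : IsPullback (m1 H D t1 N k) (m1 H D t1 N l) (m1 H D t1 N g) (m1 H D t1 N h) :=
    pb_of_iso hV u u1 u2
  exact ext_pb_of_comp hK K0

end Asm
end DGS


/-- from a closed Galois structure `Γ` on a pointed protomodular category
`𝒞` satisfying (E4), (E5), (M) and such that `I` preserves pullbacks of type (1), one
obtains a derived closed Galois structure
`Γ₁ = (Ext_ℰ(𝒞), NExt_Γ(𝒞), I₁, H₁, η¹, ε¹, ℰ¹, ℱ¹)` whose subcategory is that of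
`Γ`-normal extensions and whose class of extensions is the class of double
`ℰ`-extensions, such that `Ext_ℰ(𝒞)` is pointed protomodular, `(Ext_ℰ(𝒞), ℰ¹)`
satisfies (E4), (E5), (M), and `I₁` preserves pullbacks of split epimorphisms of `ℰ¹`
along morphisms of `ℰ¹`. -/
theorem derived_galois_structure
    {𝒞 : Type u} [Category.{v} 𝒞] [HasZeroMorphisms 𝒞] [HasZeroObject 𝒞]
    (G : GaloisStructure 𝒞) (hpm : ProtomodularCat 𝒞)
    (h4 : AxE4 G.E) (h5 : AxE5 G.E) (hM : AxM G.E)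
    (htype1 : PreservesType1 G.E G.I) :
    ∃ G₁ : GaloisStructure (ExtObj G.E),
      (∀ a : ExtObj G.E, G₁.inX a ↔ G.Normal a.hom) ∧
      (G₁.E = DoubleExtClass G.E) ∧
      (∀ {a b : ExtObj G.E} (φ : a ⟶ b), G₁.F φ ↔
        (G.Normal a.hom ∧ G.Normal b.hom ∧ IsDoubleExt φ)) ∧
      HasZeroObject (ExtObj G.E) ∧ ProtomodularCat (ExtObj G.E) ∧
      AxE4 G₁.E ∧ AxE5 G₁.E ∧ AxM G₁.E ∧
      PreservesType1 G₁.E G₁.I := by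
  have H : DGS.Ax G.E := ⟨G.E1, G.E2, G.E3, h4, h5⟩
  have D := DGS.desc_of_M H hM
  have N : ∀ a : ExtObj G.E, DGS.NormData G a.hom := fun a =>
    (DGS.exNorm G H D htype1 a.hom a.mem).some
  exact ⟨DGS.G1 H D htype1 N, fun _ => Iff.rfl, rfl, fun _ => Iff.rfl, DGS.ext_hasZero H,
    DGS.ext_protomodular H hpm, DGS.dbl_e4 H, DGS.dbl_e5 H, DGS.dbl_M H hM,
    DGS.pres1 H D htype1 N⟩
end
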